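/- Let n ≥ 3 and let G be a nontrivial finite subgroup of Aut(F_n) whose order is not a power of 2. Then the normal closure N(G) of G in Aut(F_n) equals SAut(F_n) if G ⊆ SAut(F_n), and equals Aut(F_n) otherwise. -/

import Mathlib

open Matrix

namespace NormalClosurePaper

/-- The automorphism group of the free group on `n` generators. -/
abbrev FrAut (n : ℕ) := MulAut (FreeGroup (Fin n))

/-- Exponent sum of the generator `x_i` in a word of the free group. -/
def expSum {n : ℕ} (i : Fin n) : FreeGroup (Fin n) →* Multiplicative ℤ :=
  FreeGroup.lift fun j => Multiplicative.ofAdd (if j = i then (1 : ℤ) else 0)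

/-- The abelianized matrix of an automorphism of the free group:
the `(i, j)` entry is the exponent sum of `x_i` in `f x_j`. -/
def mat {n : ℕ} (f : FrAut n) : Matrix (Fin n) (Fin n) ℤ :=
  Matrix.of fun i j => (expSum i (f (FreeGroup.of j))).toAdd

lemma expSum_apply {n : ℕ} (f : FrAut n) (i : Fin n) (w : FreeGroup (Fin n)) :
    (expSum i (f w)).toAdd = ∑ k, mat f i k * (expSum k w).toAdd := by
  induction w using FreeGroup.induction_on with
  | C1 => simp
  | of j =>
      have h : (expSum i (f (FreeGroup.of j))).toAdd = mat f i j := rfl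
      rw [h]
      simp [expSum, mul_ite, Finset.sum_ite_eq]
  | inv_of j ih =>
      simp only [_root_.map_inv, toAdd_inv, mul_neg, Finset.sum_neg_distrib, ih]
  | mul x y ihx ihy =>
      simp only [_root_.map_mul, toAdd_mul, mul_add, Finset.sum_add_distrib, ihx, ihy]

lemma mat_one {n : ℕ} : mat (1 : FrAut n) = 1 := by
  ext i j
  simp [mat, expSum, Matrix.one_apply, eq_comm]

lemma mat_mul {n : ℕ} (f g : FrAut n) : mat (f * g) = mat f * mat g := by
  ext i j
  rw [Matrix.mul_apply]
  show (expSum i ((f * g) (FreeGroup.of j))).toAdd = _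
  rw [show (f * g) (FreeGroup.of j) = f (g (FreeGroup.of j)) from rfl, expSum_apply]
  rfl

/-- The matrix of the induced map on the abelianization, as a monoid homomorphism. -/
def matHom (n : ℕ) : FrAut n →* Matrix (Fin n) (Fin n) ℤ where
  toFun := mat
  map_one' := mat_one
  map_mul' := mat_mul

/-- The homomorphism `Aut(F_n) → GL_n(ℤ)` induced by abelianization. -/
def ρ (n : ℕ) : FrAut n →* GL (Fin n) ℤ := (matHom n).toHomUnits

/-- The composition of `ρ` with the determinant. -/
def detρ (n : ℕ) : FrAut n →* ℤˣ := (Matrix.GeneralLinearGroup.det).comp (ρ n)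

/-- The special automorphism group `SAut(F_n)`: automorphisms whose induced matrix
has determinant `1`. -/
def SAut (n : ℕ) : Subgroup (FrAut n) := (detρ n).ker

/-- The Torelli subgroup `IA_n`, the kernel of `ρ`. -/
def IA (n : ℕ) : Subgroup (FrAut n) := (ρ n).ker

/-- The group of inner automorphisms of the free group. -/
def Inn (n : ℕ) : Subgroup (FrAut n) := (MulAut.conj (G := FreeGroup (Fin n))).range

instance Inn_normal (n : ℕ) : (Inn n).Normal := by
  constructor
  rintro - ⟨a, rfl⟩ g
  refine ⟨g a, ?_⟩
  ext y
  simp [MulAut.conj_apply, MulAut.mul_apply, _root_.map_mul, _root_.map_inv]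

/-- The outer automorphism group `Out(F_n)`. -/
abbrev OutF (n : ℕ) := FrAut n ⧸ Inn n

/-- The projection `Aut(F_n) → Out(F_n)`. -/
def toOut (n : ℕ) : FrAut n →* OutF n := QuotientGroup.mk' (Inn n)

lemma mat_conj {n : ℕ} (g : FreeGroup (Fin n)) : mat (MulAut.conj g) = 1 := by
  rw [← mat_one (n := n)]
  ext i j
  simp only [mat, Matrix.of_apply, MulAut.conj_apply, MulAut.one_apply, _root_.map_mul,
    _root_.map_inv, toAdd_mul, toAdd_inv]
  omega

lemma ρ_conj {n : ℕ} (g : FreeGroup (Fin n)) : ρ n (MulAut.conj g) = 1 :=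
  Units.ext (mat_conj g)

/-- The homomorphism `Out(F_n) → GL_n(ℤ)` induced by abelianization. -/
def ρOut (n : ℕ) : OutF n →* GL (Fin n) ℤ :=
  QuotientGroup.lift (Inn n) (ρ n) (by rintro - ⟨g, rfl⟩; exact ρ_conj g)

/-- The composition of `ρOut` with the determinant. -/
def detρOut (n : ℕ) : OutF n →* ℤˣ := (Matrix.GeneralLinearGroup.det).comp (ρOut n)

/-- The special outer automorphism group `SOut(F_n)`. -/
def SOut (n : ℕ) : Subgroup (OutF n) := (detρOut n).ker

/-- Entrywise reduction `GL_n(ℤ) → GL_n(ℤ/ℓℤ)`. -/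
def redGL (n ℓ : ℕ) : GL (Fin n) ℤ →* GL (Fin n) (ZMod ℓ) :=
  Units.map (RingHom.mapMatrix (Int.castRingHom (ZMod ℓ))).toMonoidHom

/-- The subgroup `GΓ_n(ℓ)` of `GL_n(ℤ)` of matrices congruent to the identity mod `ℓ`. -/
def GGamma (n ℓ : ℕ) : Subgroup (GL (Fin n) ℤ) := (redGL n ℓ).ker

/-- The level `ℓ` congruence subgroup `Γ_n(ℓ)` (viewed inside `GL_n(ℤ)`): matrices with
determinant `1` that are congruent to the identity mod `ℓ`. -/
def GammaGL (n ℓ : ℕ) : Subgroup (GL (Fin n) ℤ) :=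
  GGamma n ℓ ⊓ (Matrix.GeneralLinearGroup.det).ker

/-- Reduction `SL_n(ℤ) → SL_n(ℤ/ℓℤ)`. -/
def redSL (n ℓ : ℕ) : Matrix.SpecialLinearGroup (Fin n) ℤ →*
    Matrix.SpecialLinearGroup (Fin n) (ZMod ℓ) :=
  Matrix.SpecialLinearGroup.map (Int.castRingHom (ZMod ℓ))

/-- Projection `SL_n(ℤ/ℓℤ) → PSL_n(ℤ/ℓℤ)`. -/
def projPSL (n ℓ : ℕ) : Matrix.SpecialLinearGroup (Fin n) (ZMod ℓ) →*
    Matrix.ProjectiveSpecialLinearGroup (Fin n) (ZMod ℓ) :=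
  QuotientGroup.mk' _

/-!
A finite subgroup of `Aut(F_n)` whose order is not a power of two contains some `f ≠ 1` of odd
order. As `IA_n` is torsion-free, `f` acts nontrivially on `H¹(F_n)`, so it moves the class of some
almost invariant subset of `F_n`. Minimal cuts of a Cayley graph on which `f` acts then provide an
almost invariant set, with class moved by `f`, which is nested with all its translates and
`f`-images. A ping-pong argument on the tree of these cuts gives a basis of `F_n` in which `f` maps
one basis element `x_a` to a word `x_b g` with `g` in the other basis elements and `b ≠ a`. Hence
`N(f)` contains a transvection, so all of them, and Nielsen's theorem gives `SAut(F_n) ≤ N(f)`.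
-/

section Cuts

variable {V : Type*} {G : SimpleGraph V} {A B C D : Set V}

/-- The oriented edges of `G` leaving `A`: the coboundary of `A`. -/
def cutEdges (G : SimpleGraph V) (A : Set V) : Set (V × V) :=
  {e | G.Adj e.1 e.2 ∧ e.1 ∈ A ∧ e.2 ∉ A}

lemma mem_cutEdges {x y : V} : (x, y) ∈ cutEdges G A ↔ G.Adj x y ∧ x ∈ A ∧ y ∉ A :=
  Iff.rfl

lemma cutEdges_compl (G : SimpleGraph V) (A : Set V) :
    cutEdges G Aᶜ = Prod.swap '' cutEdges G A := by
  ext ⟨x, y⟩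
  simp only [Set.mem_image, Prod.exists, Prod.swap_prod_mk, Prod.mk.injEq, mem_cutEdges,
    Set.mem_compl_iff, not_not]
  constructor
  · rintro ⟨h, hx, hy⟩
    exact ⟨y, x, ⟨h.symm, hy, hx⟩, rfl, rfl⟩
  · rintro ⟨a, b, ⟨h, ha, hb⟩, rfl, rfl⟩
    exact ⟨h.symm, hb, ha⟩

lemma ncard_cutEdges_compl (G : SimpleGraph V) (A : Set V) :
    (cutEdges G Aᶜ).ncard = (cutEdges G A).ncard := by
  rw [cutEdges_compl, Set.ncard_image_of_injective _ Prod.swap_injective]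

lemma cutEdges_image (σ : G ≃g G) (A : Set V) :
    cutEdges G (σ '' A) = Prod.map σ σ '' cutEdges G A := by
  ext ⟨x, y⟩
  obtain ⟨a, rfl⟩ := σ.surjective x
  obtain ⟨b, rfl⟩ := σ.surjective y
  rw [← Prod.map_apply, (σ.injective.prodMap σ.injective).mem_set_image, Prod.map_apply]
  simp only [mem_cutEdges, σ.map_adj_iff, σ.injective.mem_set_image]

lemma ncard_cutEdges_image (σ : G ≃g G) (A : Set V) :
    (cutEdges G (σ '' A)).ncard = (cutEdges G A).ncard := by
  rw [cutEdges_image, Set.ncard_image_of_injective _ (σ.injective.prodMap σ.injective)]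

lemma ncard_cutEdges_inter_add_ncard_cutEdges_union_le (hA : (cutEdges G A).Finite)
    (hB : (cutEdges G B).Finite) :
    (cutEdges G (A ∩ B)).ncard + (cutEdges G (A ∪ B)).ncard ≤
      (cutEdges G A).ncard + (cutEdges G B).ncard := by
  have union_sub : cutEdges G (A ∩ B) ∪ cutEdges G (A ∪ B) ⊆ cutEdges G A ∪ cutEdges G B := by
    rintro ⟨x, y⟩
    simp only [Set.mem_union, mem_cutEdges, Set.mem_inter_iff]
    tauto
  have inter_sub : cutEdges G (A ∩ B) ∩ cutEdges G (A ∪ B) ⊆ cutEdges G A ∩ cutEdges G B := by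
    rintro ⟨x, y⟩
    simp only [Set.mem_inter_iff, mem_cutEdges, Set.mem_union]
    tauto
  have fin := hA.union hB
  rw [← Set.ncard_union_add_ncard_inter _ _
      (fin.subset (Set.subset_union_left.trans union_sub))
      (fin.subset (Set.subset_union_right.trans union_sub)),
    ← Set.ncard_union_add_ncard_inter _ _ hA hB]
  exact add_le_add (Set.ncard_le_ncard union_sub fin)
    (Set.ncard_le_ncard inter_sub (hA.inter_of_left _))

lemma finite_cutEdges_compl (hA : (cutEdges G A).Finite) : (cutEdges G Aᶜ).Finite := by
  rw [cutEdges_compl]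
  exact hA.image _

lemma finite_cutEdges_inter (hA : (cutEdges G A).Finite) (hB : (cutEdges G B).Finite) :
    (cutEdges G (A ∩ B)).Finite := by
  refine (hA.union hB).subset ?_
  rintro ⟨x, y⟩
  simp only [Set.mem_union, mem_cutEdges, Set.mem_inter_iff]
  tauto

lemma finite_cutEdges_union (hA : (cutEdges G A).Finite) (hB : (cutEdges G B).Finite) :
    (cutEdges G (A ∪ B)).Finite := by
  rw [← compl_compl (A ∪ B), Set.compl_union]
  exact finite_cutEdges_compl
    (finite_cutEdges_inter (finite_cutEdges_compl hA) (finite_cutEdges_compl hB))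

lemma cutEdges_sdiff_subset (h : cutEdges G B ⊆ cutEdges G A) :
    cutEdges G (A \ B) ⊆ cutEdges G A := by
  rintro ⟨x, y⟩ ⟨hxy, ⟨hxA, hxB⟩, hy⟩
  refine ⟨hxy, hxA, fun hyA => ?_⟩
  exact (h (mem_cutEdges.2 ⟨hxy.symm, by_contra fun hyB => hy ⟨hyA, hyB⟩, hxB⟩)).2.2 hxA

/-- A set `B ⊆ A` is a union of components of `A` exactly when every edge leaving `B` leaves `A`. -/
lemma preconnected_induce_iff : (G.induce A).Preconnected ↔
    ∀ B ⊆ A, cutEdges G B ⊆ cutEdges G A → B = ∅ ∨ B = A := by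
  constructor
  · intro h B hBA hcut
    refine (Set.eq_empty_or_nonempty B).imp_right fun ⟨x, hx⟩ => hBA.antisymm fun y hy => ?_
    have mem_of_walk {u v : A} (p : (G.induce A).Walk u v) (hu : (u : V) ∈ B) : (v : V) ∈ B := by
      induction p with
      | nil => exact hu
      | @cons _ v _ huv _ ih =>
        exact ih (by_contra fun hv => (hcut (mem_cutEdges.2 ⟨huv, hu, hv⟩)).2.2 v.2)
    exact (h ⟨x, hBA hx⟩ ⟨y, hy⟩).elim fun p => mem_of_walk p hx
  · intro h x y
    obtain hB | hB := h (Subtype.val '' {z | (G.induce A).Reachable x z})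
      (Subtype.coe_image_subset _ _) (by
        rintro ⟨_, v⟩ ⟨huv, ⟨u, hu, rfl⟩, hv⟩
        exact ⟨huv, u.2, fun hvA => hv ⟨⟨v, hvA⟩, hu.trans (SimpleGraph.Adj.reachable huv), rfl⟩⟩)
    · exact absurd (Set.image_eq_empty.1 hB)
        (Set.Nonempty.ne_empty ⟨x, SimpleGraph.Reachable.refl x⟩)
    · exact Subtype.val_injective.mem_set_image.1 (hB.symm.subset y.2)

lemma preconnected_iff_cutEdges :
    G.Preconnected ↔ ∀ B, cutEdges G B = ∅ → B = ∅ ∨ B = Set.univ := by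
  rw [← (SimpleGraph.induceUnivIso G).preconnected_iff, preconnected_induce_iff]
  simp [cutEdges, Set.subset_empty_iff]

/-- A bond of a graph: a finite cut both of whose sides are connected. -/
structure IsBond (G : SimpleGraph V) (A : Set V) : Prop where
  preconnected : (G.induce A).Preconnected
  preconnected_compl : (G.induce Aᶜ).Preconnected
  finite : (cutEdges G A).Finite

/-- The bonds of size `m` separating `x` from `y`. -/
def bonds (G : SimpleGraph V) (m : ℕ) (x y : V) : Set (Set V) :=
  {A | x ∈ A ∧ y ∉ A ∧ IsBond G A ∧ (cutEdges G A).ncard = m}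

lemma bonds_self (m : ℕ) (x : V) : bonds G m x x = ∅ :=
  Set.eq_empty_of_forall_notMem fun _ h => h.2.1 h.1

lemma bonds_zero (hG : G.Preconnected) (x y : V) : bonds G 0 x y = ∅ := by
  refine Set.eq_empty_of_forall_notMem fun A ⟨hx, hy, hA, hcard⟩ => ?_
  rcases preconnected_iff_cutEdges.1 hG A ((Set.ncard_eq_zero hA.finite).1 hcard) with rfl | rfl
  · exact hx
  · exact hy trivial

lemma induce_deleteEdges_of_notMem {a b : V} (h : a ∉ A ∨ b ∉ A) :
    (G.deleteEdges {s(a, b)}).induce A = G.induce A := by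
  ext ⟨u, hu⟩ ⟨v, hv⟩
  simp only [SimpleGraph.comap_adj, SimpleGraph.deleteEdges_adj, Function.Embedding.subtype_apply,
    Set.mem_singleton_iff, Sym2.eq_iff, and_iff_left_iff_imp]
  rintro - (⟨rfl, rfl⟩ | ⟨rfl, rfl⟩) <;> tauto

lemma cutEdges_deleteEdges {a b : V} (hb : b ∉ A) :
    cutEdges (G.deleteEdges {s(a, b)}) A = cutEdges G A \ {(a, b)} := by
  ext ⟨u, v⟩
  simp only [Set.mem_sdiff, mem_cutEdges, SimpleGraph.deleteEdges_adj, Set.mem_singleton_iff,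
    Sym2.eq_iff, Prod.mk.injEq]
  constructor
  · tauto
  · rintro ⟨⟨h, hu, hv⟩, hne⟩
    refine ⟨⟨h, not_or.2 ⟨hne, ?_⟩⟩, hu, hv⟩
    rintro ⟨rfl, rfl⟩
    exact hb hu

lemma bonds_succ_subset_bonds_deleteEdges {m : ℕ} {a b : V} (hab : G.Adj a b) :
    bonds G (m + 1) a b ⊆ bonds (G.deleteEdges {s(a, b)}) m a b := by
  rintro A ⟨ha, hb, hA, hcard⟩
  refine ⟨ha, hb, ⟨?_, ?_, ?_⟩, ?_⟩
  · rw [induce_deleteEdges_of_notMem (Or.inr hb)]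
    exact hA.preconnected
  · rw [induce_deleteEdges_of_notMem (Or.inl (not_not.2 ha))]
    exact hA.preconnected_compl
  · rw [cutEdges_deleteEdges hb]
    exact hA.finite.sdiff
  · rw [cutEdges_deleteEdges hb, Set.ncard_sdiff_singleton_of_mem (mem_cutEdges.2 ⟨hab, ha, hb⟩),
      hcard, Nat.add_sub_cancel]

/-- In a disconnected graph, both sides of a bond are unions of components, so there are at most
two bonds. -/
lemma finite_bonds_of_not_preconnected {m : ℕ} {a b : V} (hG : ¬ G.Preconnected) :
    (bonds G m a b).Finite := by
  rw [preconnected_iff_cutEdges] at hG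
  push Not at hG
  obtain ⟨B, hcut, hne, huniv⟩ := hG
  refine (Set.toFinite {B, Bᶜ}).subset ?_
  rintro A ⟨-, -, hA, -⟩
  have inter_trivial (C : Set V) (hC : (G.induce C).Preconnected) :
      B ∩ C = ∅ ∨ B ∩ C = C := by
    refine preconnected_induce_iff.1 hC _ Set.inter_subset_right ?_
    rintro ⟨x, y⟩ ⟨hxy, ⟨hxB, hxC⟩, hy⟩
    refine ⟨hxy, hxC, fun hyC => ?_⟩
    exact Set.eq_empty_iff_forall_notMem.1 hcut (x, y) ⟨hxy, hxB, fun hyB => hy ⟨hyB, hyC⟩⟩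
  have hB : B = (B ∩ A) ∪ (B ∩ Aᶜ) := (Set.inter_union_compl B A).symm
  rcases inter_trivial A hA.preconnected with hBA | hBA <;>
    rcases inter_trivial Aᶜ hA.preconnected_compl with hBA' | hBA' <;> rw [hBA, hBA'] at hB
  · simp only [Set.union_empty] at hB
    exact absurd hB hne.ne_empty
  · simp [hB]
  · simp [hB]
  · exact absurd (by simpa using hB) huniv

theorem finite_bonds (hG : G.Preconnected) (m : ℕ) (x y : V) : (bonds G m x y).Finite := by
  induction m generalizing G x y with
  | zero => simp [bonds_zero hG]
  | succ m ih =>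
    have finite_of_adj (a b : V) (hab : G.Adj a b) : (bonds G (m + 1) a b).Finite := by
      refine Set.Finite.subset ?_ (bonds_succ_subset_bonds_deleteEdges hab)
      by_cases hG' : (G.deleteEdges {s(a, b)}).Preconnected
      · exact ih hG' a b
      · exact finite_bonds_of_not_preconnected hG'
    obtain ⟨p⟩ := hG x y
    induction p with
    | nil => simp [bonds_self]
    | @cons u v w huv _ ih =>
      refine ((finite_of_adj u v huv).union ih).subset ?_
      rintro A ⟨hu, hw, hA⟩
      by_cases hv : v ∈ A
      · exact Or.inr ⟨hv, hw, hA⟩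
      · exact Or.inl ⟨hu, hv, hA⟩

/-- Two sets are nested if one of the four corners they determine is empty. -/
def Nested (A B : Set V) : Prop :=
  A ∩ B = ∅ ∨ A ∩ Bᶜ = ∅ ∨ Aᶜ ∩ B = ∅ ∨ Aᶜ ∩ Bᶜ = ∅

lemma Nested.symm (h : Nested A B) : Nested B A := by
  unfold Nested at *
  rw [Set.inter_comm B A, Set.inter_comm B, Set.inter_comm Bᶜ, Set.inter_comm Bᶜ]
  tauto

lemma nested_compl_right : Nested A Bᶜ ↔ Nested A B := by
  unfold Nested
  rw [compl_compl]
  tauto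

lemma nested_compl_left : Nested Aᶜ B ↔ Nested A B := by
  unfold Nested
  rw [compl_compl]
  tauto

lemma Nested.image {W : Type*} (σ : V ≃ W) (h : Nested A B) : Nested (σ '' A) (σ '' B) := by
  unfold Nested at *
  simpa only [← Set.image_compl_eq σ.bijective, ← Set.image_inter σ.injective,
    Set.image_eq_empty] using h

lemma nested_inter_left_self : Nested (A ∩ B) A := by
  refine Or.inr (Or.inl ?_)
  rw [Set.inter_right_comm, Set.inter_compl_self, Set.empty_inter]

lemma nested_union_left_self : Nested (A ∪ B) A := by
  rw [← nested_compl_left, ← nested_compl_right, Set.compl_union]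
  exact nested_inter_left_self

lemma Nested.inter_left (hA : Nested A D) (hB : Nested B D) (h : (Aᶜ ∩ Bᶜ).Nonempty) :
    Nested (A ∩ B) D := by
  obtain ⟨x, hx⟩ := h
  simp only [Nested, Set.eq_empty_iff_forall_notMem, Set.mem_inter_iff, Set.mem_compl_iff] at *
  by_cases hxD : x ∈ D <;> grind

lemma Nested.union_left (hA : Nested A D) (hB : Nested B D) (h : (A ∩ B).Nonempty) :
    Nested (A ∪ B) D := by
  rw [← nested_compl_left, Set.compl_union]
  exact (nested_compl_left.2 hA).inter_left (nested_compl_left.2 hB) (by simpa only [compl_compl])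

lemma Nested.inter_or_union (h : Nested A D) (B : Set V) :
    Nested (A ∩ B) D ∨ Nested (A ∪ B) D := by
  simp only [Nested, Set.eq_empty_iff_forall_notMem, Set.mem_inter_iff, Set.mem_compl_iff,
    Set.mem_union] at *
  rcases h with h | h | h | h <;> grind

lemma nested_of_preconnected_of_disjoint (hB : (G.induce B).Preconnected)
    (h : ∀ e ∈ cutEdges G A, e.1 ∉ B) : Nested A B := by
  rcases preconnected_induce_iff.1 hB (B ∩ A) Set.inter_subset_left (by
    rintro ⟨x, y⟩ ⟨hxy, ⟨hxB, hxA⟩, hy⟩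
    exact ⟨hxy, hxB, fun hyB => h (x, y) ⟨hxy, hxA, fun hyA => hy ⟨hyB, hyA⟩⟩ hxB⟩) with h | h
  · exact Or.inl (Set.inter_comm A B ▸ h)
  · refine Or.inr (Or.inr (Or.inl ?_))
    rw [Set.inter_comm, ← Set.sdiff_eq, Set.sdiff_eq_empty]
    exact Set.inter_eq_left.1 h

theorem finite_not_nested_bonds (hG : G.Preconnected) (m : ℕ) (hA : (cutEdges G A).Finite) :
    {B : Set V | ¬ Nested A B ∧ IsBond G B ∧ (cutEdges G B).ncard = m}.Finite := by
  set P : Set V := Prod.fst '' cutEdges G A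
  have hP : P.Finite := hA.image _
  refine ((hP.prod hP).biUnion fun e _ => finite_bonds hG m e.1 e.2).subset ?_
  rintro B ⟨hn, hB, hcard⟩
  have meets (C : Set V) (hC : (G.induce C).Preconnected) (hAC : ¬ Nested A C) :
      ∃ x ∈ P, x ∈ C := by
    by_contra! hPC
    exact hAC (nested_of_preconnected_of_disjoint hC fun e he =>
      hPC e.1 (Set.mem_image_of_mem _ he))
  obtain ⟨x, hxP, hx⟩ := meets B hB.preconnected hn
  obtain ⟨y, hyP, hy⟩ := meets Bᶜ hB.preconnected_compl (hn ∘ nested_compl_right.1)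
  exact Set.mem_biUnion (Set.mk_mem_prod hxP hyP) ⟨hx, hy, hB, hcard⟩

/-- A class of finite cuts of a graph to which Dunwoody's argument on minimal cuts applies. In
`split`, the set `B` is a union of components of `A`. -/
structure CutClass (G : SimpleGraph V) (W : Set (Set V)) : Prop where
  finite : ∀ A ∈ W, (cutEdges G A).Finite
  compl_mem : ∀ A ∈ W, Aᶜ ∈ W
  empty_notMem : ∅ ∉ W
  split : ∀ A ∈ W, ∀ B ⊆ A, cutEdges G B ⊆ cutEdges G A → B ∈ W ∨ A \ B ∈ W
  corner : ∀ A ∈ W, ∀ B ∈ W, (A ∩ B ∈ W ∧ A ∪ B ∈ W) ∨ (A ∩ Bᶜ ∈ W ∧ A ∪ Bᶜ ∈ W)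

lemma opposite_ne_zero_of_add_eq_zero {M : Type*} [AddCommGroup M] {p q r s : M}
    (hrow : p + q ≠ 0) (hcol : p + r ≠ 0) (h : p + q + (r + s) = 0) :
    (p ≠ 0 ∧ s ≠ 0) ∨ (q ≠ 0 ∧ r ≠ 0) := by
  by_contra! hcon
  by_cases hp : p = 0
  · subst hp
    rw [zero_add] at hrow hcol
    exact hcol (hcon.2 hrow)
  · obtain rfl := hcon.1 hp
    by_cases hq : q = 0
    · subst hq
      exact hcol (by simpa using h)
    · obtain rfl := hcon.2 hq
      exact hrow (by simpa using h)

lemma cutClass_of_additive {M : Type*} [AddCommGroup M] {κ : Set V → M} (huniv : κ Set.univ = 0)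
    (hadd : ∀ A B, (cutEdges G A).Finite → (cutEdges G B).Finite →
      κ (A ∩ B) + κ (A ∩ Bᶜ) = κ A) :
    CutClass G {A | (cutEdges G A).Finite ∧ κ A ≠ 0} := by
  have compl (A : Set V) (hA : (cutEdges G A).Finite) : κ Aᶜ = - κ A := by
    have h := hadd Set.univ A (by simp [cutEdges]) hA
    simp only [Set.univ_inter, huniv] at h
    exact (neg_eq_of_add_eq_zero_right h).symm
  refine ⟨fun A hA => hA.1, fun A hA => ⟨finite_cutEdges_compl hA.1, ?_⟩, fun h => h.2 ?_,
    fun A hA B hBA hcut => ?_, fun A ⟨hA, hκA⟩ B ⟨hB, hκB⟩ => ?_⟩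
  · rw [compl A hA.1]
    exact neg_ne_zero.2 hA.2
  · simpa [huniv] using compl Set.univ (by simp [cutEdges])
  · have hBfin := hA.1.subset hcut
    have h := hadd A B hA.1 hBfin
    rw [Set.inter_eq_right.2 hBA, ← Set.sdiff_eq] at h
    by_cases hκB : κ B = 0
    · rw [hκB, zero_add] at h
      exact Or.inr ⟨hA.1.subset (cutEdges_sdiff_subset hcut), h ▸ hA.2⟩
    · exact Or.inl ⟨hBfin, hκB⟩
  · have hA' := finite_cutEdges_compl hA
    have hB' := finite_cutEdges_compl hB
    have union : κ (A ∪ B) = - κ (Aᶜ ∩ Bᶜ) := by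
      rw [← Set.compl_union, compl _ (finite_cutEdges_union hA hB), neg_neg]
    have union' : κ (A ∪ Bᶜ) = - κ (Aᶜ ∩ B) := by
      rw [← compl _ (finite_cutEdges_inter hA' hB), Set.compl_inter, compl_compl]
    have total : κ (A ∩ B) + κ (A ∩ Bᶜ) + (κ (Aᶜ ∩ B) + κ (Aᶜ ∩ Bᶜ)) = 0 := by
      rw [hadd A B hA hB, hadd Aᶜ B hA' hB, compl A hA, add_neg_cancel]
    have row := hadd A B hA hB
    have col := hadd B A hB hA
    rw [Set.inter_comm B A, Set.inter_comm B Aᶜ] at col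
    rw [← row] at hκA
    rw [← col] at hκB
    refine (opposite_ne_zero_of_add_eq_zero hκA hκB total).imp ?_ ?_ <;> rintro ⟨hi, hu⟩
    · exact ⟨⟨finite_cutEdges_inter hA hB, hi⟩, finite_cutEdges_union hA hB,
        union ▸ neg_ne_zero.2 hu⟩
    · exact ⟨⟨finite_cutEdges_inter hA hB', hi⟩, finite_cutEdges_union hA hB',
        union' ▸ neg_ne_zero.2 hu⟩

/-- The members of `W` with the fewest edges leaving them. -/
def minCuts (G : SimpleGraph V) (W : Set (Set V)) : Set (Set V) :=
  {A | A ∈ W ∧ ∀ B ∈ W, (cutEdges G A).ncard ≤ (cutEdges G B).ncard}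

/-- The minimal members of `W` which are not nested with `A`. -/
def crossing (G : SimpleGraph V) (W : Set (Set V)) (A : Set V) : Set (Set V) :=
  {B | B ∈ minCuts G W ∧ ¬ Nested A B}

variable {W : Set (Set V)}

lemma exists_forall_ncard_le {α β : Type*} {S : Set α} (hS : S.Nonempty) (F : α → Set β) :
    ∃ a ∈ S, ∀ b ∈ S, (F a).ncard ≤ (F b).ncard := by
  obtain ⟨a, ha, hmin⟩ := exists_minimalFor_of_wellFoundedLT (· ∈ S) (fun a => (F a).ncard) hS
  exact ⟨a, ha, fun b hb => (le_total _ _).elim id (hmin hb)⟩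

lemma ncard_cutEdges_eq_of_mem_minCuts (hA : A ∈ minCuts G W) (hB : B ∈ minCuts G W) :
    (cutEdges G B).ncard = (cutEdges G A).ncard :=
  (hB.2 A hA.1).antisymm (hA.2 B hB.1)

lemma image_mem_minCuts_iff (σ : G ≃g G) (hσ : ∀ B, σ '' B ∈ W ↔ B ∈ W) :
    σ '' A ∈ minCuts G W ↔ A ∈ minCuts G W := by
  simp only [minCuts, Set.mem_ofPred_eq, hσ, ncard_cutEdges_image]

lemma crossing_compl : crossing G W Aᶜ = crossing G W A := by
  simp only [crossing, nested_compl_left]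

lemma crossing_image_subset (σ : G ≃g G) (hσ : ∀ B, σ '' B ∈ W ↔ B ∈ W) :
    crossing G W (σ '' A) ⊆ (σ '' ·) '' crossing G W A := by
  rintro B ⟨hB, hn⟩
  obtain ⟨B, rfl⟩ : ∃ C, σ '' C = B := ⟨σ ⁻¹' B, Set.image_preimage_eq B σ.surjective⟩
  exact ⟨B, ⟨(image_mem_minCuts_iff σ hσ).1 hB, fun h => hn (h.image σ.toEquiv)⟩, rfl⟩

namespace CutClass

lemma compl_mem_minCuts (hW : CutClass G W) (hA : A ∈ minCuts G W) : Aᶜ ∈ minCuts G W :=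
  ⟨hW.compl_mem A hA.1, fun B hB => (ncard_cutEdges_compl G A).trans_le (hA.2 B hB)⟩

lemma eq_of_mem_minCuts (hW : CutClass G W) (hG : G.Preconnected) (hA : A ∈ minCuts G W)
    (hB : B ∈ W) (hBA : B ⊆ A) (hcut : cutEdges G B ⊆ cutEdges G A) : B = A := by
  have cut_eq : cutEdges G B = cutEdges G A :=
    Set.eq_of_subset_of_ncard_le hcut (hA.2 B hB) (hW.finite A hA.1)
  have cut_sdiff : cutEdges G (A \ B) = ∅ :=
    Set.eq_empty_of_forall_notMem fun e he =>
      he.2.1.2 (cut_eq ▸ cutEdges_sdiff_subset hcut he : e ∈ cutEdges G B).2.1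
  rcases preconnected_iff_cutEdges.1 hG _ cut_sdiff with h | h
  · exact hBA.antisymm (Set.sdiff_eq_empty.1 h)
  · have hAu : A = Set.univ := Set.univ_subset_iff.1 (h ▸ Set.sdiff_subset)
    exact absurd (by simpa [hAu] using hW.compl_mem A hA.1) hW.empty_notMem

lemma preconnected_of_mem_minCuts (hW : CutClass G W) (hG : G.Preconnected)
    (hA : A ∈ minCuts G W) : (G.induce A).Preconnected := by
  refine preconnected_induce_iff.2 fun B hBA hcut => ?_
  rcases hW.split A hA.1 B hBA hcut with hB | hB
  · exact Or.inr (hW.eq_of_mem_minCuts hG hA hB hBA hcut)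
  · have h := hW.eq_of_mem_minCuts hG hA hB Set.sdiff_subset (cutEdges_sdiff_subset hcut)
    exact Or.inl ((Set.disjoint_of_subset_left hBA (sdiff_eq_left.1 h)).eq_bot_of_self)

lemma isBond_of_mem_minCuts (hW : CutClass G W) (hG : G.Preconnected)
    (hA : A ∈ minCuts G W) : IsBond G A :=
  ⟨hW.preconnected_of_mem_minCuts hG hA,
    hW.preconnected_of_mem_minCuts hG (hW.compl_mem_minCuts hA), hW.finite A hA.1⟩

lemma finite_crossing (hW : CutClass G W) (hG : G.Preconnected) (hA : A ∈ minCuts G W) :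
    (crossing G W A).Finite :=
  (finite_not_nested_bonds hG (cutEdges G A).ncard (hW.finite A hA.1)).subset fun _ hB =>
    ⟨hB.2, hW.isBond_of_mem_minCuts hG hB.1, ncard_cutEdges_eq_of_mem_minCuts hA hB.1⟩

lemma inter_union_mem_minCuts (hW : CutClass G W) (hA : A ∈ minCuts G W) (hB : B ∈ minCuts G W)
    (hi : A ∩ B ∈ W) (hu : A ∪ B ∈ W) : A ∩ B ∈ minCuts G W ∧ A ∪ B ∈ minCuts G W := by
  have hsub := ncard_cutEdges_inter_add_ncard_cutEdges_union_le (hW.finite A hA.1)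
    (hW.finite B hB.1)
  have hBA := ncard_cutEdges_eq_of_mem_minCuts hA hB
  have hAi := hA.2 _ hi
  have hAu := hA.2 _ hu
  exact ⟨⟨hi, fun C hC => by have := hA.2 C hC; omega⟩,
    ⟨hu, fun C hC => by have := hA.2 C hC; omega⟩⟩

lemma ncard_crossing_inter_add_ncard_crossing_union_lt (hW : CutClass G W) (hG : G.Preconnected)
    (hA : A ∈ minCuts G W) (hB : B ∈ minCuts G W) (hAB : ¬ Nested A B)
    (hi : A ∩ B ∈ minCuts G W) (hu : A ∪ B ∈ minCuts G W) :
    (crossing G W (A ∩ B)).ncard + (crossing G W (A ∪ B)).ncard <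
      (crossing G W A).ncard + (crossing G W B).ncard := by
  have inter_ne : (A ∩ B).Nonempty := Set.nonempty_iff_ne_empty.2 fun h => hAB (Or.inl h)
  have compl_ne : (Aᶜ ∩ Bᶜ).Nonempty :=
    Set.nonempty_iff_ne_empty.2 fun h => hAB (Or.inr (Or.inr (Or.inr h)))
  have union_sub : crossing G W (A ∩ B) ∪ crossing G W (A ∪ B) ⊂
      crossing G W A ∪ crossing G W B := by
    refine (Set.ssubset_iff_of_subset ?_).2 ⟨A, Or.inr ⟨hA, fun h => hAB h.symm⟩, ?_⟩
    · rintro C (hC | hC) <;>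
        refine or_iff_not_and_not.2 fun ⟨hCA, hCB⟩ => hC.2 ?_ <;>
        simp only [crossing, Set.mem_ofPred_eq, hC.1, true_and, not_not] at hCA hCB
      · exact hCA.inter_left hCB compl_ne
      · exact hCA.union_left hCB inter_ne
    · rintro (h | h)
      · exact h.2 nested_inter_left_self
      · exact h.2 nested_union_left_self
  have inter_sub : crossing G W (A ∩ B) ∩ crossing G W (A ∪ B) ⊆
      crossing G W A ∩ crossing G W B := by
    rintro C ⟨hCi, hCu⟩
    refine ⟨⟨hCi.1, fun h => (h.inter_or_union B).elim hCi.2 hCu.2⟩, hCi.1, fun h => ?_⟩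
    rw [Set.inter_comm] at hCi
    rw [Set.union_comm] at hCu
    exact (h.inter_or_union A).elim hCi.2 hCu.2
  have fA := hW.finite_crossing hG hA
  have fB := hW.finite_crossing hG hB
  rw [← Set.ncard_union_add_ncard_inter _ _ (hW.finite_crossing hG hi)
      (hW.finite_crossing hG hu), ← Set.ncard_union_add_ncard_inter _ _ fA fB]
  exact add_lt_add_of_lt_of_le (Set.ncard_lt_ncard union_sub (fA.union fB))
    (Set.ncard_le_ncard inter_sub (fA.inter_of_left _))

/-- Dunwoody: among the minimal cuts, one crossing the fewest minimal cuts is nested with all its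
images. -/
theorem exists_nested_image (hW : CutClass G W) (hG : G.Preconnected) (hne : W.Nonempty) :
    ∃ A ∈ W, ∀ σ : G ≃g G, (∀ B, σ '' B ∈ W ↔ B ∈ W) → Nested A (σ '' A) := by
  obtain ⟨A, hA, hmin⟩ := exists_forall_ncard_le
    (exists_forall_ncard_le hne (cutEdges G)) (crossing G W)
  have no_corners (B : Set V) (hB : B ∈ minCuts G W)
      (hle : (crossing G W B).ncard ≤ (crossing G W A).ncard) (hAB : ¬ Nested A B) :
      ¬ (A ∩ B ∈ W ∧ A ∪ B ∈ W) := by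
    rintro ⟨hi, hu⟩
    obtain ⟨hi, hu⟩ := hW.inter_union_mem_minCuts hA hB hi hu
    have hlt := hW.ncard_crossing_inter_add_ncard_crossing_union_lt hG hA hB hAB hi hu
    have := hmin _ hi
    have := hmin _ hu
    omega
  refine ⟨A, hA.1, fun σ hσ => ?_⟩
  have hσA : σ '' A ∈ minCuts G W := (image_mem_minCuts_iff σ hσ).2 hA
  have fA := hW.finite_crossing hG hA
  have hle : (crossing G W (σ '' A)).ncard ≤ (crossing G W A).ncard :=
    (Set.ncard_le_ncard (crossing_image_subset σ hσ) (fA.image _)).trans (Set.ncard_image_le fA)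
  by_contra hn
  rcases hW.corner A hA.1 _ hσA.1 with h | h
  · exact no_corners _ hσA hle hn h
  · exact no_corners _ (hW.compl_mem_minCuts hσA) (crossing_compl.symm ▸ hle)
      (hn ∘ nested_compl_right.1) h

end CutClass

end Cuts

section AlmostInvariant

open scoped Pointwise

variable {F : Type*} [Group F] {A B : Set F}

/-- The difference of the indicator functions of `A g⁻¹` and `A`. -/
noncomputable def shiftDiff (A : Set F) (g a : F) : ℤ :=
  A.indicator 1 (a * g) - A.indicator 1 a

/-- A subset of a group is almost invariant if it differs from each of its right translates by a
finite set. -/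
def AlmostInv (A : Set F) : Prop := ∀ g, (Function.support (shiftDiff A g)).Finite

/-- The homomorphism to `ℤ` counting the points by which a right translate exceeds an almost
invariant set. It is the class of `A` in `H¹(F; ℤ)`. -/
noncomputable def flux (A : Set F) (g : F) : ℤ := ∑ᶠ a, shiftDiff A g a

lemma mem_support_shiftDiff {g a : F} :
    a ∈ Function.support (shiftDiff A g) ↔ ¬ (a * g ∈ A ↔ a ∈ A) := by
  classical
  simp only [Function.mem_support, shiftDiff, Set.indicator_apply, Pi.one_apply]
  split_ifs <;> simp_all

lemma support_shiftDiff_mul_subset (g h : F) :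
    Function.support (shiftDiff A (g * h)) ⊆
      (· * g) ⁻¹' Function.support (shiftDiff A h) ∪ Function.support (shiftDiff A g) := by
  intro a
  simp only [Set.mem_union, Set.mem_preimage, mem_support_shiftDiff, mul_assoc]
  tauto

lemma almostInv_of_closure {S : Set F} (hS : Subgroup.closure S = ⊤)
    (h : ∀ s ∈ S, (Function.support (shiftDiff A s)).Finite) : AlmostInv A := by
  intro g
  have hg : g ∈ Subgroup.closure S := hS ▸ Subgroup.mem_top g
  induction hg using Subgroup.closure_induction with
  | mem x hx => exact h x hx
  | one =>
    convert Set.finite_empty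
    ext a
    simp [shiftDiff]
  | mul x y _ _ hx hy =>
    exact ((hy.preimage (mul_left_injective x).injOn).union hx).subset
      (support_shiftDiff_mul_subset x y)
  | inv x _ hx =>
    refine (hx.preimage (mul_left_injective x⁻¹).injOn).subset fun a => ?_
    simp only [Set.mem_preimage, mem_support_shiftDiff, inv_mul_cancel_right]
    tauto

lemma AlmostInv.compl (hA : AlmostInv A) : AlmostInv Aᶜ := fun g =>
  (hA g).subset fun a => by
    simp only [mem_support_shiftDiff, Set.mem_compl_iff]
    tauto

lemma AlmostInv.inter (hA : AlmostInv A) (hB : AlmostInv B) : AlmostInv (A ∩ B) :=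
  fun g => ((hA g).union (hB g)).subset fun a => by
    simp only [mem_support_shiftDiff, Set.mem_inter_iff, Set.mem_union]
    tauto

lemma shiftDiff_smul (A : Set F) (w g : F) :
    shiftDiff (w • A) g = shiftDiff A g ∘ Equiv.mulLeft w⁻¹ := by
  classical
  ext a
  simp [shiftDiff, Set.indicator_apply, Set.mem_smul_set_iff_inv_smul_mem, mul_assoc]

lemma shiftDiff_image (A : Set F) (e : MulAut F) (g : F) :
    shiftDiff (e '' A) g = shiftDiff A (e⁻¹ g) ∘ (e⁻¹).toEquiv := by
  classical
  have mem_image (x : F) : x ∈ e '' A ↔ e⁻¹ x ∈ A := Set.mem_image_equiv (f := e.toEquiv)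
  ext a
  simp only [shiftDiff, Set.indicator_apply, mem_image, _root_.map_mul, Pi.one_apply,
    Function.comp_apply, MulEquiv.toEquiv_eq_coe, EquivLike.coe_coe]

lemma AlmostInv.smul (hA : AlmostInv A) (w : F) : AlmostInv (w • A) := fun g => by
  rw [shiftDiff_smul, Function.support_comp_eq_preimage]
  exact (hA g).preimage (Equiv.injective _).injOn

lemma AlmostInv.image (hA : AlmostInv A) (e : MulAut F) : AlmostInv (e '' A) := fun g => by
  rw [shiftDiff_image, Function.support_comp_eq_preimage]
  exact (hA _).preimage (Equiv.injective _).injOn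

lemma almostInv_smul_iff (w : F) : AlmostInv (w • A) ↔ AlmostInv A :=
  ⟨fun h => by simpa using h.smul w⁻¹, fun h => h.smul w⟩

lemma almostInv_image_iff (e : MulAut F) : AlmostInv (e '' A) ↔ AlmostInv A :=
  ⟨fun h => by simpa [Set.image_image] using h.image e⁻¹, fun h => h.image e⟩

lemma flux_smul (A : Set F) (w : F) : flux (w • A) = flux A := by
  ext g
  simp only [flux, shiftDiff_smul]
  exact finsum_comp_equiv (Equiv.mulLeft w⁻¹)

lemma flux_image (A : Set F) (e : MulAut F) : flux (e '' A) = flux A ∘ (e⁻¹ : MulAut F) := by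
  ext g
  simp only [flux, shiftDiff_image]
  exact finsum_comp_equiv (e⁻¹ : MulAut F).toEquiv

lemma flux_univ : flux (Set.univ : Set F) = 0 := by
  ext g
  simp [flux, shiftDiff]

lemma flux_mul (hA : AlmostInv A) (g h : F) : flux A (g * h) = flux A g + flux A h := by
  have shift : flux A h = ∑ᶠ a, shiftDiff A h (a * g) :=
    (finsum_comp_equiv (Equiv.mulRight g)).symm
  rw [shift, flux, flux,
    ← finsum_add_distrib (hA g) ((hA h).preimage (mul_left_injective g).injOn)]
  refine finsum_congr fun a => ?_
  simp only [shiftDiff, mul_assoc]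
  ring

lemma flux_inter_add_flux_inter_compl (hA : AlmostInv A) (hB : AlmostInv B) :
    flux (A ∩ B) + flux (A ∩ Bᶜ) = flux A := by
  classical
  ext g
  rw [Pi.add_apply, flux, flux, flux,
    ← finsum_add_distrib (hA.inter hB g) (hA.inter hB.compl g)]
  refine finsum_congr fun a => ?_
  simp only [shiftDiff, Set.indicator_apply, Set.mem_inter_iff, Set.mem_compl_iff, Pi.one_apply]
  split_ifs <;> simp_all

lemma flux_compl (A : Set F) : flux Aᶜ = - flux A := by
  classical
  ext g
  rw [Pi.neg_apply, flux, flux, ← finsum_neg_distrib]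
  refine finsum_congr fun a => ?_
  simp only [shiftDiff, Set.indicator_apply, Set.mem_compl_iff, Pi.one_apply]
  split_ifs <;> simp_all

/-- The stabilizer of `A` acts freely on the finite nonempty set counted by the flux. -/
lemma AlmostInv.eq_one_of_smul_eq [IsMulTorsionFree F] (hA : AlmostInv A) (hne : flux A ≠ 0)
    {w : F} (hw : w • A = A) : w = 1 := by
  by_contra hw1
  have mem_iff (x : F) : w * x ∈ A ↔ x ∈ A := by
    conv_lhs => rw [← hw]
    exact Set.smul_mem_smul_set_iff
  obtain ⟨g, hg⟩ := Function.ne_iff.1 hne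
  obtain ⟨a, ha⟩ : (Function.support (shiftDiff A g)).Nonempty := by
    refine Function.support_nonempty_iff.2 fun h => hg ?_
    simp [flux, h]
  have pow_mem (k : ℕ) : w ^ k * a ∈ Function.support (shiftDiff A g) := by
    induction k with
    | zero => simpa using ha
    | succ k ih =>
      rw [mem_support_shiftDiff] at ih ⊢
      rwa [pow_succ', mul_assoc w, mul_assoc w, mem_iff, mem_iff]
  refine Set.infinite_of_injective_forall_mem (f := fun k : ℕ => w ^ k * a) ?_ pow_mem (hA g)
  exact (mul_left_injective a).comp
    (injective_pow_iff_not_isOfFinOrder.2 (not_isOfFinOrder_of_isMulTorsionFree hw1))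

lemma almostInv_iff_finite_cutEdges {X : Set F} (hX : X.Finite)
    (hgen : Subgroup.closure X = ⊤) :
    AlmostInv A ↔ (cutEdges (SimpleGraph.mulCayley X) A).Finite := by
  constructor
  · intro hA
    refine (hX.biUnion fun x _ => ((hA x).image fun a => (a, a * x)).union
      ((hA x).image fun a => (a * x, a))).subset ?_
    rintro ⟨a, b⟩ he
    obtain ⟨hab, ha, hb⟩ := mem_cutEdges.1 he
    obtain ⟨-, x, hx, rfl | rfl⟩ := (SimpleGraph.mulCayley_adj' _ _ _).1 hab
    · exact Set.mem_biUnion hx (Or.inl ⟨a, mem_support_shiftDiff.2 (by tauto), rfl⟩)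
    · exact Set.mem_biUnion hx (Or.inr ⟨b, mem_support_shiftDiff.2 (by tauto), rfl⟩)
  · intro h
    refine almostInv_of_closure hgen fun x hx =>
      ((h.image Prod.fst).union (h.image Prod.snd)).subset fun a ha => ?_
    rw [mem_support_shiftDiff] at ha
    have adj : (SimpleGraph.mulCayley X).Adj a (a * x) :=
      (SimpleGraph.mulCayley_adj' _ _ _).2
        ⟨fun h => ha (by rw [← h]), x, hx, Or.inl rfl⟩
    by_cases haA : a ∈ A
    · exact Or.inl ⟨(a, a * x), ⟨adj, haA, by tauto⟩, rfl⟩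
    · exact Or.inr ⟨(a * x, a), ⟨adj.symm, by tauto, haA⟩, rfl⟩

lemma preconnected_mulCayley {X : Set F} (hgen : Subgroup.closure X = ⊤) :
    (SimpleGraph.mulCayley X).Preconnected := by
  have reachable_mul {x : F} (hx : x ∈ X) (c : F) :
      (SimpleGraph.mulCayley X).Reachable c (c * x) := by
    by_cases h : c = c * x
    · rw [← h]
    · exact ((SimpleGraph.mulCayley_adj' _ _ _).2 ⟨h, x, hx, Or.inl rfl⟩).reachable
  intro a b
  suffices ∀ g ∈ Subgroup.closure X, (SimpleGraph.mulCayley X).Reachable a (a * g) by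
    simpa using this (a⁻¹ * b) (hgen ▸ Subgroup.mem_top _)
  intro g hg
  induction hg using Subgroup.closure_induction_right with
  | one => rw [mul_one]
  | mul_right x _ y hy ih => exact ih.trans (mul_assoc a x y ▸ reachable_mul hy _)
  | mul_inv_cancel x _ y hy ih =>
    refine ih.trans (SimpleGraph.Reachable.symm ?_)
    simpa [mul_assoc] using reachable_mul hy (a * (x * y⁻¹))

lemma exists_finite_invariant_closure_eq_top [Group.FG F] {f : MulAut F} (hf : IsOfFinOrder f) :
    ∃ X : Set F, X.Finite ∧ Subgroup.closure X = ⊤ ∧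
      ∀ e ∈ Subgroup.zpowers f, ∀ x, e x ∈ X ↔ x ∈ X := by
  obtain ⟨S, hS, hfin⟩ := Group.fg_iff.1 ‹Group.FG F›
  have fin_zpowers : (Subgroup.zpowers f : Set (MulAut F)).Finite := finite_zpowers.2 hf
  refine ⟨{x | ∃ e ∈ Subgroup.zpowers f, ∃ s ∈ S, e s = x}, ?_, ?_, ?_⟩
  · refine ((fin_zpowers.prod hfin).image fun p => p.1 p.2).subset ?_
    rintro x ⟨e, he, s, hs, rfl⟩
    exact ⟨(e, s), ⟨he, hs⟩, rfl⟩
  · rw [eq_top_iff, ← hS]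
    exact Subgroup.closure_mono fun s hs => ⟨1, one_mem _, s, hs, rfl⟩
  · intro e he x
    constructor
    · rintro ⟨e', he', s, hs, h⟩
      exact ⟨e⁻¹ * e', mul_mem (inv_mem he) he', s, hs, by simp [h]⟩
    · rintro ⟨e', he', s, hs, rfl⟩
      exact ⟨e * e', mul_mem he he', s, hs, rfl⟩

/-- The automorphism `x ↦ w * e x` of the Cayley graph on a generating set invariant under `e`. -/
def mulCayleyIso {X : Set F} (w : F) (e : MulAut F) (he : ∀ x, e x ∈ X ↔ x ∈ X) :
    SimpleGraph.mulCayley X ≃g SimpleGraph.mulCayley X where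
  toEquiv := e.toEquiv.trans (Equiv.mulLeft w)
  map_rel_iff' {x y} := by
    change (SimpleGraph.mulCayley X).Adj (w * e x) (w * e y) ↔ _
    rw [SimpleGraph.mulCayley_adj_mul_iff_right, SimpleGraph.mulCayley_adj,
      SimpleGraph.mulCayley_adj, ← _root_.map_inv, ← _root_.map_inv, ← _root_.map_mul,
      ← _root_.map_mul, he, he, e.injective.ne_iff]

lemma mulCayleyIso_image {X : Set F} (w : F) (e : MulAut F) (he : ∀ x, e x ∈ X ↔ x ∈ X)
    (B : Set F) : mulCayleyIso w e he '' B = w • (e '' B) := by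
  rw [← Set.image_smul, Set.image_image]
  rfl

lemma flux_image_comp_ne_iff {f e : MulAut F} (h : Commute e f) :
    flux (e '' A) ∘ f ≠ flux (e '' A) ↔ flux A ∘ f ≠ flux A := by
  have comm : (e⁻¹ : MulAut F) ∘ f = f ∘ (e⁻¹ : MulAut F) :=
    congrArg DFunLike.coe h.inv_left.eq
  rw [flux_image, Function.comp_assoc, comm, ← Function.comp_assoc, Ne,
    (e⁻¹).surjective.injective_comp_right.eq_iff]

/-- The sets with flux moved by `f` form a `CutClass` in any Cayley graph, because flux is
additive. -/
theorem exists_nested_almostInv [Group.FG F] {f : MulAut F} (hf : IsOfFinOrder f)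
    (hA : AlmostInv A) (hne : flux A ∘ f ≠ flux A) :
    ∃ B : Set F, AlmostInv B ∧ flux B ∘ f ≠ flux B ∧
      ∀ w : F, ∀ e ∈ Subgroup.zpowers f, Nested B (w • (e '' B)) := by
  obtain ⟨X, hX, hgen, hinv⟩ := exists_finite_invariant_closure_eq_top hf
  have almost_iff (A : Set F) := almostInv_iff_finite_cutEdges (A := A) hX hgen
  have hW := cutClass_of_additive (G := SimpleGraph.mulCayley X)
    (κ := fun A => flux A ∘ f - flux A) (by simp [flux_univ, Pi.zero_comp]) fun A B hA hB => by
      have h := flux_inter_add_flux_inter_compl ((almost_iff A).2 hA) ((almost_iff B).2 hB)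
      rw [← h, Pi.add_comp]
      abel
  simp only [← almost_iff, sub_ne_zero] at hW
  obtain ⟨B, hB, hnest⟩ := hW.exists_nested_image (preconnected_mulCayley hgen) ⟨A, hA, hne⟩
  refine ⟨B, hB.1, hB.2, fun w e he => ?_⟩
  rw [← mulCayleyIso_image w e (hinv e he)]
  refine hnest _ fun C => ?_
  have comm : Commute e f := by
    obtain ⟨k, rfl⟩ := he
    exact (Commute.refl f).zpow_left k
  simp only [Set.mem_ofPred_eq, mulCayleyIso_image, almostInv_smul_iff, almostInv_image_iff,
    flux_smul, flux_image_comp_ne_iff comm]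

end AlmostInvariant


section CutSystem

open scoped Pointwise

variable {F ι : Type*} [Group F] {E : ι → Set F} {C D : Set F} {g x y z : F}

/-- The subgroup of elements which no translate of `A` separates from `1`. -/
def sideStab (A : Set F) : Subgroup F where
  carrier := {g | ∀ w : F, g ∈ w • A ↔ (1 : F) ∈ w • A}
  one_mem' := fun _ => Iff.rfl
  mul_mem' := by
    intro g h hg hh w
    rw [← hg w]
    simpa [Set.mem_smul_set_iff_inv_smul_mem, mul_assoc] using hh (g⁻¹ * w)
  inv_mem' := by
    intro g hg w
    simpa [Set.mem_smul_set_iff_inv_smul_mem, mul_assoc] using (hg (g * w)).symm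

/-- The subgroup of elements which no translate of a member of `E` separates from `1`: the
stabilizer of the vertex of `1` in the tree of cuts. -/
def baseStab (E : ι → Set F) : Subgroup F := ⨅ i, sideStab (E i)

/-- The translates of the members of a family of sets, and their complements. -/
def IsCut (E : ι → Set F) (C : Set F) : Prop := ∃ (w : F) (i : ι), C = w • E i ∨ C = (w • E i)ᶜ

/-- The cuts which contain `y` but not `x`. -/
def sep (E : ι → Set F) (x y : F) : Set (Set F) := {C | IsCut E C ∧ x ∉ C ∧ y ∈ C}

/-- The cut `C` is maximal among the cuts which do not contain `x`. In the tree of cuts, `C` is an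
edge at the vertex of `x`. -/
structure Adj (E : ι → Set F) (C : Set F) (x : F) : Prop where
  isCut : IsCut E C
  notMem : x ∉ C
  eq_of_subset : ∀ D, IsCut E D → x ∉ D → C ⊆ D → D = C

/-- A family of representatives of a nested family of almost invariant sets, all of which are
adjacent to the base point `1`. -/
structure CutSystem (E : ι → Set F) : Prop where
  almostInv : ∀ i, AlmostInv (E i)
  nested : ∀ i j (w : F), Nested (E i) (w • E j)
  adj_one : ∀ i, Adj E (E i) 1
  smul_inj : ∀ {v w : F} {i j : ι}, v • E i = w • E j → v = w ∧ i = j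
  smul_ne_compl : ∀ (v w : F) (i j : ι), v • E i ≠ (w • E j)ᶜ

lemma isCut_smul_self (w : F) (i : ι) : IsCut E (w • E i) := ⟨w, i, Or.inl rfl⟩

lemma IsCut.compl (h : IsCut E C) : IsCut E Cᶜ := by
  obtain ⟨w, i, rfl | rfl⟩ := h
  · exact ⟨w, i, Or.inr rfl⟩
  · exact ⟨w, i, Or.inl (compl_compl _)⟩

lemma IsCut.smul (h : IsCut E C) (v : F) : IsCut E (v • C) := by
  obtain ⟨w, i, rfl | rfl⟩ := h
  · exact ⟨v * w, i, Or.inl (mul_smul v w _).symm⟩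
  · exact ⟨v * w, i, Or.inr (by rw [Set.smul_set_compl, mul_smul])⟩

lemma Adj.smul (h : Adj E C x) (v : F) : Adj E (v • C) (v * x) := by
  refine ⟨h.isCut.smul v, fun hx => h.notMem (Set.smul_mem_smul_set_iff.1 hx),
    fun D hD hx hCD => ?_⟩
  rw [← h.eq_of_subset (v⁻¹ • D) (hD.smul _) ?_ ?_, smul_inv_smul]
  · rwa [Set.mem_smul_set_iff_inv_smul_mem, inv_inv]
  · rwa [Set.subset_smul_set_iff, inv_inv]

lemma Adj.eq_of_subset_of_mem_sep (hadj : Adj E Cᶜ y) (hD : D ∈ sep E x y) (h : D ⊆ C) : D = C :=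
  compl_injective
    (hadj.eq_of_subset Dᶜ hD.1.compl (fun h => h hD.2.2) (Set.compl_subset_compl.2 h))

lemma smul_mem_sep (v : F) (h : C ∈ sep E x y) : v • C ∈ sep E (v * x) (v * y) :=
  ⟨h.1.smul v, fun hx => h.2.1 (Set.smul_mem_smul_set_iff.1 hx), Set.smul_mem_smul_set h.2.2⟩

lemma sep_smul (v x y : F) : sep E (v * x) (v * y) = (fun C => v • C) '' sep E x y := by
  ext C
  constructor
  · intro h
    refine ⟨v⁻¹ • C, ?_, smul_inv_smul v C⟩
    simpa using smul_mem_sep v⁻¹ h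
  · rintro ⟨D, hD, rfl⟩
    exact smul_mem_sep v hD

lemma sep_one_inv_mul (x y : F) : sep E 1 (x⁻¹ * y) = (fun C => x⁻¹ • C) '' sep E x y := by
  rw [← sep_smul, inv_mul_cancel]

lemma compl_mem_sep (h : C ∈ sep E x y) : Cᶜ ∈ sep E y x :=
  ⟨h.1.compl, fun hy => hy h.2.2, h.2.1⟩

lemma sep_swap (x y : F) : sep E y x = (fun C => Cᶜ) '' sep E x y := by
  ext C
  constructor
  · exact fun h => ⟨Cᶜ, compl_mem_sep h, compl_compl C⟩
  · rintro ⟨D, hD, rfl⟩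
    exact compl_mem_sep hD

lemma mem_sideStab_iff_notMem_sep {k : ι} :
    g ∈ sideStab (E k) ↔ ∀ w : F, w • E k ∉ sep E 1 g ∧ (w • E k)ᶜ ∉ sep E 1 g := by
  refine forall_congr' fun w => ?_
  have hcut := isCut_smul_self (E := E) w k
  simp only [sep, Set.mem_ofPred_eq, hcut, hcut.compl, true_and, Set.mem_compl_iff]
  tauto

lemma sep_one_eq_empty : sep E 1 g = ∅ ↔ g ∈ baseStab E := by
  simp only [baseStab, Subgroup.mem_iInf, mem_sideStab_iff_notMem_sep]
  refine ⟨fun h => by simp [h], fun h => Set.eq_empty_of_forall_notMem ?_⟩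
  rintro C hC
  obtain ⟨w, i, rfl | rfl⟩ := hC.1
  · exact (h i w).1 hC
  · exact (h i w).2 hC

lemma mem_iff_of_mem_baseStab (hg : g ∈ baseStab E) (hC : IsCut E C) :
    g ∈ C ↔ (1 : F) ∈ C := by
  obtain ⟨w, i, rfl | rfl⟩ := hC
  · exact Subgroup.mem_iInf.1 hg i w
  · exact not_congr (Subgroup.mem_iInf.1 hg i w)

lemma adj_iff_adj_one (hg : g ∈ baseStab E) : Adj E C g ↔ Adj E C 1 := by
  have notMem_iff {D : Set F} (hD : IsCut E D) : g ∉ D ↔ (1 : F) ∉ D :=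
    not_congr (mem_iff_of_mem_baseStab hg hD)
  constructor <;> rintro ⟨hC, hgC, hmax⟩
  · exact ⟨hC, (notMem_iff hC).1 hgC, fun D hD h => hmax D hD ((notMem_iff hD).2 h)⟩
  · exact ⟨hC, (notMem_iff hC).2 hgC, fun D hD h => hmax D hD ((notMem_iff hD).1 h)⟩

lemma sep_mul_left (hx : x ∈ baseStab E) (g : F) :
    sep E 1 (x * g) = (fun C => x • C) '' sep E 1 g := by
  rw [← sep_smul, mul_one]
  ext C
  refine and_congr_right fun hC => ?_
  rw [mem_iff_of_mem_baseStab hx hC]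

lemma compl_adj_of_sep (h : sep E x y = {C}) : Adj E Cᶜ y := by
  have hC : C ∈ sep E x y := h ▸ Set.mem_singleton C
  refine ⟨hC.1.compl, fun hy => hy hC.2.2, fun D hD hy hCD => ?_⟩
  have hDmem : Dᶜ ∈ sep E x y := ⟨hD.compl, fun hx => hx (hCD hC.2.1), hy⟩
  rw [h, Set.mem_singleton_iff] at hDmem
  rw [← hDmem, compl_compl]

lemma sep_subset_sdiff (h : sep E x y ⊆ sep E x z) : sep E y z ⊆ sep E x z \ sep E x y := by
  intro D hD
  by_cases hx : x ∈ D
  · exact absurd hD.2.2 (h ⟨hD.1.compl, fun h => h hx, hD.2.1⟩).2.2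
  · exact ⟨⟨hD.1, hx, hD.2.2⟩, fun hDy => hD.2.1 hDy.2.2⟩

lemma sep_one_inv {i : ι} (h : sep E 1 x = {(x • E i)ᶜ}) : sep E 1 x⁻¹ = {E i} := by
  rw [← mul_one x⁻¹, sep_one_inv_mul, sep_swap, h]
  simp only [Set.image_singleton, compl_compl, inv_smul_smul]

lemma inv_mul_mem_baseStab (hx : sep E 1 x = {C}) (hy : sep E 1 y = {C}) :
    x⁻¹ * y ∈ baseStab E := by
  have hxy := sep_subset_sdiff (hx.trans hy.symm).subset
  rw [hx, hy, Set.sdiff_self, Set.subset_empty_iff] at hxy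
  rw [← sep_one_eq_empty, sep_one_inv_mul, hxy, Set.image_empty]

lemma sep_eq_singleton_of_sep_pair {A : Set F} (hne : A ≠ C) (hxy : sep E x y = {A, C})
    (hyz : sep E y z = {Cᶜ}) : sep E x z = {A} := by
  have hA : A ∈ sep E x y := hxy ▸ Set.mem_insert A {C}
  have hC : C ∈ sep E x y := hxy ▸ Set.mem_insert_of_mem A (Set.mem_singleton C)
  have hC' : Cᶜ ∈ sep E y z := hyz ▸ Set.mem_singleton Cᶜ
  refine Set.eq_singleton_iff_unique_mem.2 ⟨⟨hA.1, hA.2.1, ?_⟩, fun D hD => ?_⟩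
  · by_contra hz
    have hA' : Aᶜ ∈ sep E y z := ⟨hA.1.compl, fun h => h hA.2.2, hz⟩
    rw [hyz] at hA'
    exact hne (compl_injective hA')
  · by_cases hy : y ∈ D
    · have hDxy : D ∈ sep E x y := ⟨hD.1, hD.2.1, hy⟩
      rw [hxy] at hDxy
      exact hDxy.resolve_right fun h => hC'.2.2 (h ▸ hD.2.2)
    · have hDyz : D ∈ sep E y z := ⟨hD.1, hy, hD.2.2⟩
      rw [hyz] at hDyz
      exact absurd (hDyz ▸ hC.2.1 : x ∈ D) hD.2.1

lemma finite_setOf_smul_separating {A : Set F} (hA : AlmostInv A) (x y : F) :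
    {w : F | ¬ (y ∈ w • A ↔ x ∈ w • A)}.Finite := by
  refine ((hA (x⁻¹ * y)).image fun a => x * a⁻¹).subset fun w hw => ?_
  refine ⟨w⁻¹ * x, ?_, by simp⟩
  rw [mem_support_shiftDiff]
  simpa [Set.mem_smul_set_iff_inv_smul_mem, mul_assoc] using hw

lemma finite_sep [Finite ι] (hE : ∀ i, AlmostInv (E i)) (x y : F) : (sep E x y).Finite := by
  have fin := Set.finite_iUnion fun i =>
    (finite_setOf_smul_separating (hE i) x y).image fun w => w • E i
  refine (fin.union (fin.image fun C => Cᶜ)).subset ?_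
  rintro C ⟨⟨w, i, rfl | rfl⟩, hx, hy⟩
  · exact Or.inl (Set.mem_iUnion.2 ⟨i, w, fun h => hx (h.1 hy), rfl⟩)
  · exact Or.inr ⟨_, Set.mem_iUnion.2 ⟨i, w, fun h => hy (h.2 (not_not.1 hx)), rfl⟩, rfl⟩

lemma exists_adj [Finite ι] (hE : ∀ i, AlmostInv (E i)) (hne : (sep E x y).Nonempty) :
    ∃ C ∈ sep E x y, Adj E C x := by
  obtain ⟨C, hC, hmax⟩ := (finite_sep hE x y).exists_maximal hne
  exact ⟨C, hC, hC.1, hC.2.1, fun D hD hx hCD =>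
    (hmax ⟨hD, hx, hCD hC.2.2⟩ hCD).antisymm hCD⟩

lemma flux_eq_finsum_smul (A : Set F) (g : F) :
    flux A g = ∑ᶠ w : F, ((w • A).indicator 1 g - (w • A).indicator 1 1 : ℤ) := by
  classical
  rw [flux]
  refine (finsum_comp_equiv (Equiv.inv F)).symm.trans (finsum_congr fun w => ?_)
  simp [shiftDiff, Set.indicator_apply, Set.mem_smul_set_iff_inv_smul_mem]

lemma flux_eq_ncard_sub_ncard {k : ι} (hA : AlmostInv (E k)) (g : F) :
    flux (E k) g =
      {w : F | w • E k ∈ sep E 1 g}.ncard - {w : F | (w • E k)ᶜ ∈ sep E 1 g}.ncard := by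
  classical
  have fin := finite_setOf_smul_separating hA 1 g
  have fin_pos : {w : F | w • E k ∈ sep E 1 g}.Finite :=
    fin.subset fun w hw h => hw.2.1 (h.1 hw.2.2)
  have fin_neg : {w : F | (w • E k)ᶜ ∈ sep E 1 g}.Finite :=
    fin.subset fun w hw h => hw.2.2 (h.2 (not_not.1 hw.2.1))
  have cast_ncard {s : Set F} (hs : s.Finite) : (s.ncard : ℤ) = ∑ᶠ w, s.indicator 1 w := by
    rw [← finsum_one]
    exact ((Nat.castAddMonoidHom ℤ).map_finsum_mem _ hs).trans
      (by simp [finsum_mem_def, Pi.one_def])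
  rw [flux_eq_finsum_smul, cast_ncard fin_pos, cast_ncard fin_neg, ← finsum_sub_distrib]
  · refine finsum_congr fun w => ?_
    have hcut := isCut_smul_self (E := E) w k
    simp only [sep, Set.indicator_apply, Set.mem_ofPred_eq, Set.mem_compl_iff, hcut, hcut.compl,
      true_and, not_not, Pi.one_apply]
    split_ifs <;> simp_all
  · exact fin_pos.subset Set.support_indicator_subset
  · exact fin_neg.subset Set.support_indicator_subset

lemma flux_eq_zero_of_mem_sideStab {A : Set F} (h : g ∈ sideStab A) : flux A g = 0 := by
  classical
  rw [flux_eq_finsum_smul]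
  refine finsum_eq_zero_of_forall_eq_zero fun w => ?_
  simp [Set.indicator_apply, h w]

namespace CutSystem

lemma nested_of_isCut (S : CutSystem E) (hC : IsCut E C) (hD : IsCut E D) : Nested C D := by
  have nested_smul (v w : F) (i j : ι) : Nested (v • E i) (w • E j) := by
    rw [← mul_inv_cancel_left v w, ← smul_smul]
    exact (S.nested i j (v⁻¹ * w)).image (Equiv.mulLeft v)
  obtain ⟨v, i, rfl | rfl⟩ := hC <;> obtain ⟨w, j, rfl | rfl⟩ := hD <;>
    simp only [nested_compl_left, nested_compl_right, nested_smul]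

lemma subset_cases (S : CutSystem E) (hC : IsCut E C) (hD : IsCut E D) :
    C ⊆ Dᶜ ∨ C ⊆ D ∨ D ⊆ C ∨ Cᶜ ⊆ D := by
  simpa only [Nested, ← Set.disjoint_iff_inter_eq_empty, Set.disjoint_compl_right_iff_subset,
    ← Set.subset_compl_iff_disjoint_right, compl_compl, Set.compl_subset_compl]
    using S.nested_of_isCut hC hD

lemma subset_or_subset (S : CutSystem E) (hC : C ∈ sep E x y) (hD : D ∈ sep E x y) :
    C ⊆ D ∨ D ⊆ C := by
  rcases S.subset_cases hC.1 hD.1 with h | h | h | h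
  · exact absurd hD.2.2 (h hC.2.2)
  · exact Or.inl h
  · exact Or.inr h
  · exact absurd (h hC.2.1) hD.2.1

lemma disjoint_of_adj (S : CutSystem E) (hC : Adj E C x) (hD : Adj E D x) (h : C ≠ D) :
    Disjoint C D := by
  rcases S.subset_cases hC.isCut hD.isCut with hCD | hCD | hCD | hCD
  · exact Set.subset_compl_iff_disjoint_right.1 hCD
  · exact absurd (hC.eq_of_subset D hD.isCut hD.notMem hCD).symm h
  · exact absurd (hD.eq_of_subset C hC.isCut hC.notMem hCD) h
  · exact absurd (hCD hC.notMem) hD.notMem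

lemma sep_eq_empty_of_adj (S : CutSystem E) (hx : Adj E C x) (hy : Adj E C y) :
    sep E x y = ∅ := by
  refine Set.eq_empty_of_forall_notMem fun D hD => ?_
  rcases S.subset_cases hx.isCut hD.1 with h | h | h | h
  · exact hx.notMem (hy.eq_of_subset Dᶜ hD.1.compl (fun h => h hD.2.2) h ▸ hD.2.1)
  · exact hy.notMem (hx.eq_of_subset D hD.1 hD.2.1 h ▸ hD.2.2)
  · exact hy.notMem (h hD.2.2)
  · exact hD.2.1 (h hx.notMem)

lemma adj_smul_self (S : CutSystem E) (w : F) (i : ι) : Adj E (w • E i) w := by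
  simpa using (S.adj_one i).smul w

lemma subset_of_adj (S : CutSystem E) (hadj : Adj E C x) (hC : C ∈ sep E x y)
    (hD : D ∈ sep E x y) : D ⊆ C :=
  (S.subset_or_subset hC hD).elim (fun h => (hadj.eq_of_subset D hD.1 hD.2.1 h).subset) id

lemma sep_eq_singleton_of_adj_compl (S : CutSystem E) (hx : Adj E C x) (hy : Adj E Cᶜ y) :
    sep E x y = {C} := by
  have hC : C ∈ sep E x y := ⟨hx.isCut, hx.notMem, not_not.1 hy.notMem⟩
  exact Set.eq_singleton_iff_unique_mem.2
    ⟨hC, fun D hD => hy.eq_of_subset_of_mem_sep hD (S.subset_of_adj hx hC hD)⟩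

/-- The outermost cut separating `1` from `g` either points away from `1` or is crossed by an
element of the group. -/
lemma exists_outermost (S : CutSystem E) [Finite ι] (hg : g ∉ baseStab E) :
    ∃ C ∈ sep E 1 g, ∃ (i : ι) (x : F), (C = x • E i ∧ x ∈ baseStab E) ∨
      (C = (x • E i)ᶜ ∧ sep E 1 x = {C} ∧ sep E 1 x⁻¹ = {E i}) := by
  rw [← sep_one_eq_empty, ← ne_eq, ← Set.nonempty_iff_ne_empty] at hg
  obtain ⟨C, hC, hadj⟩ := exists_adj S.almostInv hg
  obtain ⟨x, i, rfl | rfl⟩ := hC.1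
  · exact ⟨_, hC, i, x, Or.inl ⟨rfl, sep_one_eq_empty.1
      (S.sep_eq_empty_of_adj hadj (S.adj_smul_self x i))⟩⟩
  · have hsep := S.sep_eq_singleton_of_adj_compl hadj
      ((compl_compl (x • E i)).symm ▸ S.adj_smul_self x i)
    exact ⟨_, hC, i, x, Or.inr ⟨rfl, hsep, sep_one_inv hsep⟩⟩

lemma ncard_sep_lt (S : CutSystem E) [Finite ι] (h : sep E 1 y ⊆ sep E 1 g)
    (hne : (sep E 1 y).Nonempty) : (sep E 1 (y⁻¹ * g)).ncard < (sep E 1 g).ncard := by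
  obtain ⟨C, hC⟩ := hne
  rw [sep_one_inv_mul]
  refine (Set.ncard_image_le (finite_sep S.almostInv y g)).trans_lt
    (Set.ncard_lt_ncard ?_ (finite_sep S.almostInv 1 g))
  exact (Set.ssubset_iff_of_subset ((sep_subset_sdiff h).trans Set.sdiff_subset)).2
    ⟨C, h hC, fun h' => (sep_subset_sdiff h h').2 hC⟩

/-- Induction along the path from `1` to `g` in the tree of cuts. -/
lemma induction_on_sep (S : CutSystem E) [Finite ι] {P : F → Prop}
    (base : ∀ g ∈ baseStab E, P g)
    (step : ∀ g ∉ baseStab E, ∃ y, sep E 1 y ⊆ sep E 1 g ∧ (sep E 1 y).Nonempty ∧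
      (P (y⁻¹ * g) → P g)) (g : F) : P g := by
  induction hN : (sep E 1 g).ncard using Nat.strong_induction_on generalizing g with
  | _ N ih =>
    by_cases hg : g ∈ baseStab E
    · exact base g hg
    · obtain ⟨y, hsub, hne, hstep⟩ := step g hg
      exact hstep (ih _ (hN ▸ S.ncard_sep_lt hsub hne) _ rfl)

lemma mem_sideStab_of_sep (S : CutSystem E) {i k : ι} (hk : k ≠ i)
    (h : sep E 1 y = {x • E i} ∨ sep E 1 y = {(x • E i)ᶜ}) : y ∈ sideStab (E k) := by
  refine mem_sideStab_iff_notMem_sep.2 fun w => ?_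
  rcases h with h | h <;> rw [h, Set.mem_singleton_iff, Set.mem_singleton_iff]
  · exact ⟨fun h => hk (S.smul_inj h).2, (S.smul_ne_compl _ _ _ _).symm⟩
  · exact ⟨S.smul_ne_compl _ _ _ _, fun h => hk (S.smul_inj (compl_injective h)).2⟩

lemma flux_of_sep_pair [DecidableEq ι] (S : CutSystem E) {i j : ι}
    (h : sep E 1 y = {E i, (y • E j)ᶜ}) (k : ι) :
    flux (E k) y = (if k = i then 1 else 0) - (if k = j then 1 else 0) := by
  have pos (w : F) : w • E k ∈ sep E 1 y ↔ w = 1 ∧ k = i := by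
    rw [h, Set.mem_insert_iff, Set.mem_singleton_iff, or_iff_left (S.smul_ne_compl _ _ _ _)]
    refine ⟨fun hw => S.smul_inj (hw.trans (one_smul F (E i)).symm), ?_⟩
    rintro ⟨rfl, rfl⟩
    exact one_smul F _
  have neg (w : F) : (w • E k)ᶜ ∈ sep E 1 y ↔ w = y ∧ k = j := by
    rw [h, Set.mem_insert_iff, Set.mem_singleton_iff, or_iff_right, compl_inj_iff]
    · refine ⟨S.smul_inj, ?_⟩
      rintro ⟨rfl, rfl⟩
      rfl
    · simpa using (S.smul_ne_compl 1 w i k).symm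
  rw [flux_eq_ncard_sub_ncard (S.almostInv k)]
  have ncard_eq (v : F) (p : Prop) [Decidable p] :
      ({w | w = v ∧ p}.ncard : ℤ) = if p then 1 else 0 := by
    split_ifs with hp <;> simp [hp]
  simp only [pos, neg, ncard_eq]

/-- `C` is a second cut on the way out of `x`, after the first cut `A`. -/
lemma sep_eq_singleton_of_adj (S : CutSystem E) {A : Set F} (hA : IsCut E A) (hxA : x ∉ A)
    (hCA : C ⊂ A) (hC : Adj E C y)
    (hmax : ∀ D, IsCut E D → x ∉ D → C ⊆ D → D = A ∨ D = C) : sep E x y = {A} := by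
  have hyA : y ∈ A := by
    by_contra hy
    exact hCA.ne (hC.eq_of_subset A hA hy hCA.subset).symm
  refine Set.eq_singleton_iff_unique_mem.2 ⟨⟨hA, hxA, hyA⟩, fun D hD => ?_⟩
  have hxC : x ∉ C := fun hx => hxA (hCA.subset hx)
  rcases S.subset_cases hC.isCut hD.1 with h | h | h | h
  · exact absurd (hC.eq_of_subset Dᶜ hD.1.compl (fun h => h hD.2.2) h ▸ hD.2.1) hxC
  · exact (hmax D hD.1 hD.2.1 h).resolve_right fun h => hC.notMem (h ▸ hD.2.2)
  · exact absurd (h hD.2.2) hC.notMem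
  · exact absurd (h hxC) hD.2.1

lemma sep_eq_pair_of_adj_compl (S : CutSystem E) {A : Set F} (hA : IsCut E A) (hxA : x ∉ A)
    (hCA : C ⊂ A) (hC : Adj E Cᶜ y)
    (hmax : ∀ D, IsCut E D → x ∉ D → C ⊆ D → D = A ∨ D = C) : sep E x y = {A, C} := by
  have hyC : y ∈ C := not_not.1 hC.notMem
  have hCmem : C ∈ sep E x y :=
    ⟨compl_compl C ▸ hC.isCut.compl, fun hx => hxA (hCA.subset hx), hyC⟩
  refine Set.Subset.antisymm (fun D hD => ?_) ?_
  · rcases S.subset_or_subset hCmem hD with h | h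
    · exact hmax D hD.1 hD.2.1 h
    · exact Or.inr (hC.eq_of_subset_of_mem_sep hD h)
  · rintro D (rfl | rfl)
    · exact ⟨hA, hxA, hCA.subset hyC⟩
    · exact hCmem

lemma exists_maximal_inside (S : CutSystem E) [Finite ι] (hC : Adj E C x) (hg : C ∈ sep E x g)
    (hne : sep E x g ≠ {C}) :
    ∃ D ∈ sep E x g, D ⊂ C ∧ ∀ D', IsCut E D' → x ∉ D' → D ⊆ D' → D' = C ∨ D' = D := by
  have nonempty : (sep E x g \ {C}).Nonempty :=
    Set.sdiff_nonempty.2 fun h => hne (h.antisymm (Set.singleton_subset_iff.2 hg))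
  obtain ⟨D, hD, hmax⟩ := (finite_sep S.almostInv x g).sdiff (t := {C}).exists_maximal nonempty
  refine ⟨D, hD.1, (S.subset_of_adj hC hg hD.1).ssubset_of_ne hD.2, fun D' hD' hx h => ?_⟩
  by_cases hDC : D' = C
  · exact Or.inl hDC
  · exact Or.inr ((hmax ⟨⟨hD', hx, h hD.1.2.2⟩, hDC⟩ h).antisymm h)

/-- Beyond a cut which is not crossed by an element of the group there is a second cut, and behind
it a translate of the base point. -/
lemma exists_sep_pair (S : CutSystem E) [Finite ι] {i : ι} (hi : ∀ t, sep E 1 t ≠ {E i})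
    (hg : E i ∈ sep E 1 g) :
    ∃ (y : F) (j : ι), sep E 1 y = {E i, (y • E j)ᶜ} ∧ (y • E j)ᶜ ∈ sep E 1 g ∧
      ∀ t, sep E 1 t ≠ {E j} := by
  have hadj := S.adj_one i
  obtain ⟨C, hC, hCi, hmax⟩ := S.exists_maximal_inside hadj hg (hi g)
  obtain ⟨y, j, rfl | rfl⟩ := hC.1
  · exact absurd (S.sep_eq_singleton_of_adj hadj.isCut hadj.notMem hCi (S.adj_smul_self y j) hmax)
      (hi y)
  · have hsep := S.sep_eq_pair_of_adj_compl hadj.isCut hadj.notMem hCi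
      ((compl_compl (y • E j)).symm ▸ S.adj_smul_self y j) hmax
    refine ⟨y, j, hsep, hC, fun t ht => hi (y * t) (sep_eq_singleton_of_sep_pair hCi.ne' hsep ?_)⟩
    simpa [ht] using sep_smul (E := E) y 1 t

/-- The sum of the fluxes of the uncrossed cuts vanishes: along the path from `1` to `g`, entering
through an uncrossed cut is compensated by leaving through another one. -/
lemma sum_flux_uncrossed_eq_zero [Finite ι] (S : CutSystem E) {Z : Finset ι}
    (hZ : ∀ k, k ∈ Z ↔ ∀ t, sep E 1 t ≠ {E k}) (g : F) : ∑ k ∈ Z, flux (E k) g = 0 := by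
  classical
  refine S.induction_on_sep (fun g hg => Finset.sum_eq_zero fun k _ =>
    flux_eq_zero_of_mem_sideStab (Subgroup.mem_iInf.1 hg k)) (fun g hg => ?_) g
  suffices ∃ y, sep E 1 y ⊆ sep E 1 g ∧ (sep E 1 y).Nonempty ∧ ∑ k ∈ Z, flux (E k) y = 0 by
    obtain ⟨y, hsub, hne, hy⟩ := this
    refine ⟨y, hsub, hne, fun h => ?_⟩
    have flux_g (k : ι) : flux (E k) g = flux (E k) y + flux (E k) (y⁻¹ * g) := by
      rw [← flux_mul (S.almostInv k), mul_inv_cancel_left]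
    simp only [flux_g, Finset.sum_add_distrib, hy, h, add_zero]
  have sum_zero {x y : F} {i : ι} (hi : i ∉ Z)
      (h : sep E 1 y = {x • E i} ∨ sep E 1 y = {(x • E i)ᶜ}) : ∑ k ∈ Z, flux (E k) y = 0 :=
    Finset.sum_eq_zero fun k hk => flux_eq_zero_of_mem_sideStab
      (S.mem_sideStab_of_sep (ne_of_mem_of_not_mem hk hi) h)
  obtain ⟨C, hC, i, x, ⟨rfl, hx⟩ | ⟨rfl, hsep, hinv⟩⟩ := S.exists_outermost hg
  · by_cases hi : i ∈ Z
    · have hmem {D : Set F} : x • D ∈ sep E 1 g ↔ D ∈ sep E 1 (x⁻¹ * g) := by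
        rw [← mul_inv_cancel_left x g, sep_mul_left hx, inv_mul_cancel_left]
        exact (MulAction.injective x).mem_set_image
      obtain ⟨y, j, hy, hyg, hj⟩ := S.exists_sep_pair ((hZ i).1 hi) (hmem.1 hC)
      have hsep : sep E 1 (x * y) = {x • E i, x • (y • E j)ᶜ} := by
        rw [sep_mul_left hx, hy, Set.image_pair]
      refine ⟨x * y, ?_, by simp [hsep], ?_⟩
      · rw [hsep, Set.pair_subset_iff]
        exact ⟨hC, hmem.2 hyg⟩
      · simp [flux_mul (S.almostInv _), S.flux_of_sep_pair hy, hi, (hZ j).2 hj,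
          flux_eq_zero_of_mem_sideStab (Subgroup.mem_iInf.1 hx _)]
    · obtain ⟨t, ht⟩ : ∃ t, sep E 1 t = {E i} := by simpa [hZ] using hi
      have hsep : sep E 1 (x * t) = {x • E i} := by
        rw [sep_mul_left hx, ht, Set.image_singleton]
      exact ⟨x * t, by simpa [hsep] using hC, by simp [hsep], sum_zero hi (Or.inl hsep)⟩
  · exact ⟨x, by simpa [hsep] using hC, by simp [hsep],
      sum_zero (fun hi => (hZ i).1 hi x⁻¹ hinv) (Or.inr hsep)⟩

theorem exists_crossing [Finite ι] (S : CutSystem E)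
    (hflux : ∀ Z : Finset ι, Z.Nonempty → ∑ k ∈ Z, flux (E k) ≠ 0) (i : ι) :
    ∃ t, sep E 1 t = {E i} := by
  classical
  have := Fintype.ofFinite ι
  by_contra! hi
  have hZ (k : ι) : k ∈ Finset.univ.filter (fun k => ∀ t, sep E 1 t ≠ {E k}) ↔
      ∀ t, sep E 1 t ≠ {E k} := by
    simp only [Finset.mem_filter_univ]
  refine hflux _ ⟨i, (hZ i).2 hi⟩ (funext fun g => ?_)
  rw [Finset.sum_apply, Pi.zero_apply]
  exact S.sum_flux_uncrossed_eq_zero hZ g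

/-- The crossing elements needed are those of the cuts met along the way from `1` to `g`. -/
theorem mem_sup_closure_of_mem_sideStab [Finite ι] (S : CutSystem E) {t : ι → F}
    (ht : ∀ i, sep E 1 (t i) = {E i}) (I : Set ι) (hg : ∀ k ∉ I, g ∈ sideStab (E k)) :
    g ∈ baseStab E ⊔ Subgroup.closure (t '' I) := by
  have t_mem {i : ι} (hi : i ∈ I) : t i ∈ baseStab E ⊔ Subgroup.closure (t '' I) :=
    Subgroup.mem_sup_right (Subgroup.subset_closure (Set.mem_image_of_mem t hi))
  revert hg
  refine S.induction_on_sep (P := fun g => (∀ k ∉ I, g ∈ sideStab (E k)) → _)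
    (fun g hg _ => Subgroup.mem_sup_left hg) (fun g hg => ?_) g
  suffices ∃ y i v, (sep E 1 y = {v • E i} ∨ sep E 1 y = {(v • E i)ᶜ}) ∧
      sep E 1 y ⊆ sep E 1 g ∧ (i ∈ I → y ∈ baseStab E ⊔ Subgroup.closure (t '' I)) by
    obtain ⟨y, i, v, hy, hsub, hmem⟩ := this
    refine ⟨y, hsub, by rcases hy with hy | hy <;> simp [hy], fun ih hgI => ?_⟩
    have hi : i ∈ I := by
      by_contra hi
      have := mem_sideStab_iff_notMem_sep.1 (hgI i hi) v
      rcases hy with hy | hy <;> rw [hy, Set.singleton_subset_iff] at hsub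
      · exact this.1 hsub
      · exact this.2 hsub
    have hyI (k : ι) (hk : k ∉ I) : y ∈ sideStab (E k) :=
      S.mem_sideStab_of_sep (ne_of_mem_of_not_mem hi hk).symm hy
    rw [← mul_inv_cancel_left y g]
    exact mul_mem (hmem hi) (ih fun k hk => mul_mem (inv_mem (hyI k hk)) (hgI k hk))
  obtain ⟨C, hC, i, x, ⟨rfl, hx⟩ | ⟨rfl, hsep, hinv⟩⟩ := S.exists_outermost hg
  · have hsep : sep E 1 (x * t i) = {x • E i} := by
      rw [sep_mul_left hx, ht, Set.image_singleton]
    exact ⟨x * t i, i, x, Or.inl hsep, by simpa [hsep] using hC,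
      fun hi => mul_mem (Subgroup.mem_sup_left hx) (t_mem hi)⟩
  · refine ⟨x, i, x, Or.inr hsep, by simpa [hsep] using hC, fun hi => ?_⟩
    have := mul_mem (t_mem hi) (Subgroup.mem_sup_left (inv_mul_mem_baseStab (ht i) hinv))
    rwa [mul_inv_cancel_left, inv_mem_iff] at this

end CutSystem

end CutSystem

section FreeBasis

open scoped Pointwise

universe u

variable {F : Type u} [Group F] {ι : Type*} {E : ι → Set F} {t : ι → F}

lemma adj_smul_of_mem_baseStab {C : Set F} {h : F} (hC : Adj E C 1) (hh : h ∈ baseStab E) :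
    Adj E (h • C) 1 :=
  (adj_iff_adj_one hh).1 (by simpa using hC.smul h)

lemma adj_inv_smul_compl {i : ι} {x : F} (hx : sep E 1 x = {E i}) :
    Adj E (x⁻¹ • (E i)ᶜ) 1 := by
  simpa using (compl_adj_of_sep hx).smul x⁻¹

lemma ne_one_of_sep {i : ι} {x : F} (hx : sep E 1 x = {E i}) : x ≠ 1 := by
  rintro rfl
  have hmem : E i ∈ sep E 1 1 := hx ▸ Set.mem_singleton _
  exact hmem.2.1 hmem.2.2

/-- The elements beyond the two cuts at the base point which are crossed on the way to `t i` and
to its inverse. -/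
def crossingRegion (E : ι → Set F) (t : ι → F) (i : ι) : Set F := E i ∪ (t i)⁻¹ • (E i)ᶜ

/-- The sets between which the free factors of `factor` play ping-pong. -/
def pingPongSet (E : ι → Set F) (t : ι → F) : Option ι → Set F
  | none => (⋃ i, crossingRegion E t i)ᶜ
  | some i => crossingRegion E t i

/-- The base group and the cyclic groups generated by the crossing elements. -/
def factor (E : ι → Set F) (t : ι → F) : Option ι → Subgroup F
  | none => baseStab E
  | some i => Subgroup.zpowers (t i)

namespace CutSystem

lemma disjoint_smul_crossingRegion (S : CutSystem E) (ht : ∀ i, sep E 1 (t i) = {E i}) {h : F}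
    (hh : h ∈ baseStab E) {i j : ι} (hij : ¬ (h = 1 ∧ i = j)) :
    Disjoint (h • crossingRegion E t i) (crossingRegion E t j) := by
  have adj_left := adj_smul_of_mem_baseStab (S.adj_one i) hh
  have adj_left' := adj_smul_of_mem_baseStab (adj_inv_smul_compl (ht i)) hh
  have adj_right := S.adj_one j
  have adj_right' := adj_inv_smul_compl (ht j)
  rw [crossingRegion, crossingRegion, Set.smul_set_union]
  refine Disjoint.union_left (Disjoint.union_right ?_ ?_) (Disjoint.union_right ?_ ?_)
  · refine S.disjoint_of_adj adj_left adj_right fun heq => hij (S.smul_inj ?_)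
    rwa [one_smul]
  · refine S.disjoint_of_adj adj_left adj_right' ?_
    rw [Set.smul_set_compl]
    exact S.smul_ne_compl _ _ _ _
  · refine S.disjoint_of_adj adj_left' adj_right fun heq => ?_
    rw [Set.smul_set_compl, Set.smul_set_compl, ← mul_smul] at heq
    exact S.smul_ne_compl 1 _ j i ((one_smul _ _).trans heq.symm)
  · refine S.disjoint_of_adj adj_left' adj_right' fun heq => hij ?_
    simp only [Set.smul_set_compl, ← mul_smul] at heq
    obtain ⟨hmul, rfl⟩ := S.smul_inj (compl_injective heq)
    exact ⟨by simpa using hmul, rfl⟩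

lemma disjoint_inv_smul_compl (S : CutSystem E) {i : ι} {x : F} (hx : sep E 1 x = {E i}) :
    Disjoint (E i) (x⁻¹ • (E i)ᶜ) := by
  refine S.disjoint_of_adj (S.adj_one i) (adj_inv_smul_compl hx) ?_
  rw [Set.smul_set_compl]
  simpa using S.smul_ne_compl 1 x⁻¹ i i

lemma pow_succ_mul_mem (S : CutSystem E) {i : ι} {x y : F} (hx : sep E 1 x = {E i})
    (hy : y ∉ E i) (hy' : y ∉ x⁻¹ • (E i)ᶜ) (m : ℕ) :
    x ^ (m + 1) * y ∈ E i ∧ (x ^ (m + 1))⁻¹ * y ∈ x⁻¹ • (E i)ᶜ := by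
  have hdisj := Set.disjoint_left.1 (S.disjoint_inv_smul_compl hx)
  have mul_mem {z : F} (hz : z ∉ x⁻¹ • (E i)ᶜ) : x * z ∈ E i := by
    simpa [Set.mem_smul_set_iff_inv_smul_mem] using hz
  have inv_mul_mem {z : F} (hz : z ∉ E i) : x⁻¹ * z ∈ x⁻¹ • (E i)ᶜ := Set.smul_mem_smul_set hz
  induction m with
  | zero => simpa using ⟨mul_mem hy', inv_mul_mem hy⟩
  | succ m ih =>
    constructor
    · rw [pow_succ', mul_assoc]
      exact mul_mem (hdisj ih.1)
    · rw [pow_succ, _root_.mul_inv_rev, mul_assoc]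
      exact inv_mul_mem fun h => hdisj h ih.2

lemma zpow_mul_mem_crossingRegion (S : CutSystem E) {i : ι} (ht : sep E 1 (t i) = {E i}) {y : F}
    (hy : y ∉ crossingRegion E t i) {k : ℤ} (hk : k ≠ 0) :
    t i ^ k * y ∈ crossingRegion E t i := by
  have hmem := S.pow_succ_mul_mem ht (fun h => hy (Or.inl h)) (fun h => hy (Or.inr h))
    (k.natAbs - 1)
  rw [Nat.sub_add_cancel (Int.natAbs_pos.2 hk)] at hmem
  obtain h | h := k.natAbs_eq
  · rw [h, zpow_natCast]
    exact Or.inl hmem.1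
  · rw [h, _root_.zpow_neg, zpow_natCast]
    exact Or.inr hmem.2

lemma pairwise_disjoint_pingPongSet (S : CutSystem E) (ht : ∀ i, sep E 1 (t i) = {E i}) :
    Pairwise (Function.onFun Disjoint (pingPongSet E t)) := by
  have disjoint_none (i : ι) : Disjoint (pingPongSet E t (some i)) (pingPongSet E t none) :=
    disjoint_compl_right.mono_left (Set.subset_iUnion (crossingRegion E t) i)
  rintro (_ | i) (_ | j) hij
  · exact absurd rfl hij
  · exact (disjoint_none j).symm
  · exact disjoint_none i
  · rw [Function.onFun, ← one_smul F (pingPongSet E t (some i))]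
    exact S.disjoint_smul_crossingRegion ht (one_mem _) fun h => hij (congrArg some h.2)

lemma pingPongSet_nonempty (S : CutSystem E) (ht : ∀ i, sep E 1 (t i) = {E i}) (o : Option ι) :
    (pingPongSet E t o).Nonempty := by
  rcases o with _ | i
  · refine ⟨1, fun hmem => ?_⟩
    obtain ⟨i, h | h⟩ := Set.mem_iUnion.1 hmem
    exacts [(S.adj_one i).notMem h, (adj_inv_smul_compl (ht i)).notMem h]
  · have hmem : E i ∈ sep E 1 (t i) := ht i ▸ Set.mem_singleton _
    exact ⟨t i, Or.inl hmem.2.2⟩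

lemma smul_pingPongSet_subset (S : CutSystem E) (ht : ∀ i, sep E 1 (t i) = {E i})
    {o o' : Option ι} (ho : o ≠ o') {h : F} (hh : h ∈ factor E t o) (hne : h ≠ 1) :
    h • pingPongSet E t o' ⊆ pingPongSet E t o := by
  rcases o with _ | i
  · obtain ⟨j, rfl⟩ := Option.ne_none_iff_exists'.1 ho.symm
    exact Set.subset_compl_iff_disjoint_right.2 <| Set.disjoint_iUnion_right.2 fun i =>
      S.disjoint_smul_crossingRegion ht hh fun h => hne h.1
  · obtain ⟨k, rfl⟩ := hh
    rintro _ ⟨x, hx, rfl⟩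
    exact S.zpow_mul_mem_crossingRegion (ht i)
      (Set.disjoint_right.1 (S.pairwise_disjoint_pingPongSet ht ho) hx)
      fun hk => hne (by simp [hk])

lemma lift_factor_injective [Finite ι] [Nontrivial ι] (S : CutSystem E)
    (ht : ∀ i, sep E 1 (t i) = {E i}) :
    Function.Injective (Monoid.CoprodI.lift fun o => (factor E t o).subtype) := by
  refine Monoid.CoprodI.lift_injective_of_ping_pong _ (Or.inl ?_) (pingPongSet E t)
    (S.pingPongSet_nonempty ht) (S.pairwise_disjoint_pingPongSet ht) fun o o' ho h hne =>
      S.smul_pingPongSet_subset ht ho h.2 fun h => hne (Subtype.ext h)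
  have := Fintype.ofFinite ι
  have two_le := Fintype.one_lt_card (α := ι)
  rw [Cardinal.mk_option, Cardinal.mk_fintype]
  exact_mod_cast (by lia : 3 ≤ Fintype.card ι + 1)

lemma lift_factor_surjective [Finite ι] [IsMulTorsionFree F] (S : CutSystem E)
    (ht : ∀ i, sep E 1 (t i) = {E i}) :
    Function.Surjective (Monoid.CoprodI.lift fun o => (factor E t o).subtype) := by
  rw [← MonoidHom.range_eq_top, eq_top_iff]
  refine fun g _ => sup_le (a := baseStab E) (b := Subgroup.closure (t '' Set.univ)) ?_ ?_
    (S.mem_sup_closure_of_mem_sideStab ht Set.univ (by simp))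
  · exact fun h hh => ⟨Monoid.CoprodI.of (i := none) ⟨h, hh⟩, by simp⟩
  · rw [Subgroup.closure_le]
    rintro _ ⟨i, -, rfl⟩
    exact ⟨Monoid.CoprodI.of (i := some i) ⟨t i, Subgroup.mem_zpowers _⟩, by simp⟩

end CutSystem

lemma lift_const_injective {g : F} (hg : ¬ IsOfFinOrder g) :
    Function.Injective (FreeGroup.lift fun _ : Unit => g) := by
  refine (injective_iff_map_eq_one _).2
    (FreeGroup.freeGroupUnitEquivInt.forall_congr_left.2 fun k hk => ?_)
  have hpow : g ^ k = g ^ (0 : ℤ) := by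
    simpa [FreeGroup.freeGroupUnitEquivInt] using hk
  rw [injective_zpow_iff_not_isOfFinOrder.2 hg hpow]
  exact zpow_zero _

lemma range_lift_const (g : F) :
    (FreeGroup.lift fun _ : Unit => g).range = Subgroup.zpowers g := by
  rw [FreeGroup.range_lift_eq_closure, Set.range_const, Subgroup.zpowers_eq_closure]

/-- An element of infinite order is a basis of the cyclic group it generates. -/
noncomputable def zpowersBasis {g : F} (hg : ¬ IsOfFinOrder g) :
    FreeGroupBasis Unit (Subgroup.zpowers g) :=
  (FreeGroupBasis.ofFreeGroup Unit).map
    ((MonoidHom.ofInjective (lift_const_injective hg)).trans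
      (MulEquiv.subgroupCongr (range_lift_const g)))

lemma zpowersBasis_apply {g : F} (hg : ¬ IsOfFinOrder g) (u : Unit) :
    (zpowersBasis hg u : F) = g := by
  simp [zpowersBasis, MonoidHom.ofInjective_apply]

lemma closure_range_freeGroupBasis {X : Type*} (b : FreeGroupBasis X F) :
    Subgroup.closure (Set.range b) = ⊤ := by
  have himage : Set.range b = b.repr.symm.toMonoidHom '' Set.range FreeGroup.of := by
    rw [← Set.range_comp]
    rfl
  rw [himage, ← MonoidHom.map_closure, FreeGroup.closure_range_of, ← MonoidHom.range_eq_map,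
    MonoidHom.range_eq_top]
  exact b.repr.symm.surjective

lemma coprodI_basis_apply {κ : Type*} {X G : κ → Type*} [∀ o, Group (G o)]
    (B : ∀ o, FreeGroupBasis (X o) (G o)) (p : Σ o, X o) :
    Monoid.CoprodI.FreeGroupBasis.coprodI B p = Monoid.CoprodI.of (B p.1 p.2) := by
  change FreeGroup.lift (fun x : Σ o, X o => Monoid.CoprodI.of (B x.1 x.2)) (FreeGroup.of p) = _
  exact FreeGroup.lift_apply_of

/-- The disjoint union of `T` and of one point for every element of `ι`. -/
def sigmaOptionElimEquiv (T : Type u) (ι : Type*) :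
    (Σ o : Option ι, o.elim T fun _ => PUnit) ≃ T ⊕ ι where
  toFun
    | ⟨none, s⟩ => Sum.inl s
    | ⟨some i, _⟩ => Sum.inr i
  invFun := Sum.elim (fun s => ⟨none, s⟩) fun i => ⟨some i, ⟨⟩⟩
  left_inv := by rintro ⟨_ | i, s⟩ <;> rfl
  right_inv := by rintro (s | i) <;> rfl

/-- The basis of the free product of the groups `factor E t o` which consists of a basis of the
base group and of the crossing elements. -/
noncomputable def factorBasis [IsFreeGroup F] (htor : ∀ i, ¬ IsOfFinOrder (t i)) :
    ∀ o : Option ι, FreeGroupBasis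
      (o.elim (IsFreeGroup.Generators (baseStab E)) fun _ => PUnit) (factor E t o)
  | none => IsFreeGroup.basis (baseStab E)
  | some i => (zpowersBasis (htor i)).reindex Equiv.punitEquivPUnit

namespace CutSystem

lemma exists_basis_baseStab [IsFreeGroup F] [IsMulTorsionFree F] [Finite ι] [Nontrivial ι]
    (S : CutSystem E) (ht : ∀ i, sep E 1 (t i) = {E i}) :
    ∃ (T : Type u) (b : FreeGroupBasis (T ⊕ ι) F), (∀ i, b (Sum.inr i) = t i) ∧
      Subgroup.closure (Set.range (b ∘ Sum.inl)) = baseStab E := by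
  have htor (i : ι) : ¬ IsOfFinOrder (t i) :=
    not_isOfFinOrder_of_isMulTorsionFree (ne_one_of_sep (ht i))
  let e := MulEquiv.ofBijective _ ⟨S.lift_factor_injective ht, S.lift_factor_surjective ht⟩
  let B := factorBasis (E := E) htor
  let b := ((Monoid.CoprodI.FreeGroupBasis.coprodI B).map e).reindex (sigmaOptionElimEquiv _ ι)
  have b_apply (p) : b (sigmaOptionElimEquiv _ ι p) = (B p.1 p.2 : F) := by
    rw [FreeGroupBasis.reindex_apply, Equiv.symm_apply_apply, FreeGroupBasis.map_apply,
      coprodI_basis_apply]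
    exact Monoid.CoprodI.lift_of (fun o => (factor E t o).subtype) (B p.1 p.2)
  refine ⟨_, b, fun i => ?_, ?_⟩
  · refine (b_apply ⟨some i, ⟨⟩⟩).trans ?_
    exact zpowersBasis_apply (htor i) ()
  · have hrange : Set.range (b ∘ Sum.inl) = (factor E t none).subtype '' Set.range (B none) := by
      rw [← Set.range_comp]
      exact congrArg Set.range (funext fun s => b_apply ⟨none, s⟩)
    rw [hrange, ← MonoidHom.map_closure, closure_range_freeGroupBasis, ← MonoidHom.range_eq_map,
      Subgroup.range_subtype]
    rfl

/-- In the tree of cuts, the elements on the side of `1` of all translates of `E i` are those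
which can be reached without crossing such a translate. -/
theorem exists_basis_sideStab [IsFreeGroup F] [IsMulTorsionFree F] [Finite ι] [Nontrivial ι]
    (S : CutSystem E) (ht : ∀ i, sep E 1 (t i) = {E i}) :
    ∃ (T : Type u) (b : FreeGroupBasis (T ⊕ ι) F), (∀ i, b (Sum.inr i) = t i) ∧
      ∀ i, sideStab (E i) = Subgroup.closure (b '' {Sum.inr i}ᶜ) := by
  obtain ⟨T, b, hb, hbase⟩ := S.exists_basis_baseStab ht
  refine ⟨T, b, hb, fun i => le_antisymm (fun g hg => ?_) ((Subgroup.closure_le _).2 ?_)⟩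
  · have sup_le_closure : baseStab E ⊔ Subgroup.closure (t '' {i}ᶜ) ≤
        Subgroup.closure (b '' {Sum.inr i}ᶜ) := by
      rw [← hbase]
      refine sup_le (Subgroup.closure_mono ?_) (Subgroup.closure_mono ?_)
      · rintro _ ⟨s, rfl⟩
        exact ⟨Sum.inl s, by simp, rfl⟩
      · rintro _ ⟨k, hk, rfl⟩
        exact ⟨Sum.inr k, by simpa using hk, hb k⟩
    refine sup_le_closure (S.mem_sup_closure_of_mem_sideStab ht {i}ᶜ fun k hk => ?_)
    rwa [not_not.1 hk]
  · rintro _ ⟨s | k, hs, rfl⟩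
    · have hmem : b (Sum.inl s) ∈ baseStab E := hbase ▸ Subgroup.subset_closure ⟨s, rfl⟩
      exact Subgroup.mem_iInf.1 hmem i
    · rw [hb]
      exact S.mem_sideStab_of_sep (x := 1) (fun hik => hs (congrArg Sum.inr hik.symm))
        (Or.inl (by rw [one_smul, ht]))

end CutSystem

end FreeBasis

section OddOrder

open scoped Pointwise

universe u

variable {F : Type u} [Group F] {A C D : Set F} {f e : MulAut F}

lemma mulAut_image_image (e e' : MulAut F) (C : Set F) : e '' (e' '' C) = ⇑(e * e') '' C :=
  (Set.image_comp e e' C).symm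

lemma eq_zero_of_comp_eq_neg (hodd : Odd (orderOf f)) {χ : F → ℤ} (h : χ ∘ f = -χ) : χ = 0 := by
  have comp_pow (m : ℕ) : χ ∘ ⇑(f ^ m) = (-1 : ℤ) ^ m • χ := by
    induction m with
    | zero => simp
    | succ m ih => rw [pow_succ, MulAut.coe_mul, ← Function.comp_assoc, ih, pow_succ, mul_smul,
        neg_one_smul, ← h]; rfl
  have hperiod := comp_pow (orderOf f)
  rw [pow_orderOf_eq_one, hodd.neg_one_pow, neg_one_smul] at hperiod
  exact self_eq_neg.1 hperiod

section Families

variable {ι : Type*} {E : ι → Set F}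

lemma IsCut.almostInv (hE : ∀ i, AlmostInv (E i)) (h : IsCut E C) : AlmostInv C := by
  obtain ⟨w, i, rfl | rfl⟩ := h
  exacts [(hE i).smul w, ((hE i).smul w).compl]

lemma exists_adj_one [Finite ι] (hE : ∀ i, AlmostInv (E i)) {i : ι} (hi : flux (E i) ≠ 0) :
    ∃ C, Adj E C 1 := by
  obtain ⟨g, hg⟩ := Function.ne_iff.1 hi
  have hne : (sep E 1 g).Nonempty := by
    rw [Set.nonempty_iff_ne_empty, Ne, sep_one_eq_empty]
    exact fun h => hg (flux_eq_zero_of_mem_sideStab (Subgroup.mem_iInf.1 h i))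
  obtain ⟨C, -, hC⟩ := exists_adj hE hne
  exact ⟨C, hC⟩

lemma adj_of_forall_adj {κ : Type*} {E' : κ → Set F} (h : ∀ k, Adj E (E' k) 1) (k : κ) :
    Adj E' (E' k) 1 := by
  refine ⟨⟨1, k, Or.inl (one_smul _ _).symm⟩, (h k).notMem,
    fun D hD => (h k).eq_of_subset D ?_⟩
  obtain ⟨w, j, rfl | rfl⟩ := hD
  exacts [(h j).isCut.smul w, ((h j).isCut.smul w).compl]

/-- Flux does not change under translation and distinguishes the members of `E` from each other and
from their complements. -/
lemma cutSystem_of_flux [IsMulTorsionFree F] (hE : ∀ i, AlmostInv (E i))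
    (hnest : ∀ i j (w : F), Nested (E i) (w • E j)) (hadj : ∀ i, Adj E (E i) 1)
    (hinj : Function.Injective fun i => flux (E i)) (hneg : ∀ i j, flux (E i) ≠ -flux (E j)) :
    CutSystem E := by
  refine ⟨hE, hnest, hadj, fun {v w i j} h => ?_, fun v w i j h => hneg i j ?_⟩
  · obtain rfl : i = j := hinj (by simpa only [flux_smul] using congrArg flux h)
    have hne : flux (E i) ≠ 0 := fun h => hneg i i (by rw [h, neg_zero])
    have hw := (hE i).eq_one_of_smul_eq hne (w := w⁻¹ * v) (by rw [mul_smul, h, inv_smul_smul])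
    exact ⟨(inv_mul_eq_one.1 hw).symm, rfl⟩
  · simpa only [flux_smul, flux_compl] using congrArg flux h

end Families

/-- The images of `A` under the powers of an automorphism. -/
def orbitFamily (f : MulAut F) (A : Set F) : Subgroup.zpowers f → Set F := fun e => e.1 '' A

lemma IsCut.image (he : e ∈ Subgroup.zpowers f) (h : IsCut (orbitFamily f A) C) :
    IsCut (orbitFamily f A) (e '' C) := by
  obtain ⟨w, i, hC⟩ := h
  have himage : e '' (w • orbitFamily f A i) = e w • orbitFamily f A (⟨e, he⟩ * i) := by
    rw [Set.image_smul_distrib, orbitFamily, mulAut_image_image]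
    rfl
  refine ⟨e w, ⟨e, he⟩ * i, ?_⟩
  rw [← himage, ← Set.image_compl_eq e.bijective]
  exact hC.imp (congrArg _) (congrArg _)

lemma Adj.image (he : e ∈ Subgroup.zpowers f) (h : Adj (orbitFamily f A) C 1) :
    Adj (orbitFamily f A) (e '' C) 1 := by
  refine ⟨h.isCut.image he, fun hmem => h.notMem ?_, fun D hD hone hCD => ?_⟩
  · rwa [← e.injective.mem_set_image, _root_.map_one]
  · obtain ⟨D', rfl⟩ : ∃ D', e '' D' = D := ⟨(e⁻¹ : MulAut F) '' D, by simp [Set.image_image]⟩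
    have hD' : IsCut (orbitFamily f A) D' := by
      simpa [Set.image_image] using hD.image (inv_mem he)
    rw [h.eq_of_subset D' hD' (fun hmem => hone ⟨1, hmem, _root_.map_one e⟩)
      ((Set.image_subset_image_iff e.injective).1 hCD)]

lemma IsCut.flux_comp_ne (h : IsCut (orbitFamily f A) C) (hne : flux A ∘ f ≠ flux A) :
    flux C ∘ f ≠ flux C := by
  obtain ⟨w, ⟨e, k, rfl⟩, hC⟩ := h
  have hne' := (flux_image_comp_ne_iff ((Commute.refl f).zpow_left k)).2 hne
  rcases hC with rfl | rfl
  · simpa only [orbitFamily, flux_smul] using hne'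
  · simpa only [orbitFamily, flux_compl, flux_smul, Pi.neg_comp, Ne, neg_inj] using hne'

lemma nested_of_isCut_orbitFamily
    (hnest : ∀ w : F, ∀ e ∈ Subgroup.zpowers f, Nested A (w • (e '' A)))
    (hC : IsCut (orbitFamily f A) C) (hD : IsCut (orbitFamily f A) D) : Nested C D := by
  have nested_smul (v w : F) (i j : Subgroup.zpowers f) :
      Nested (v • orbitFamily f A i) (w • orbitFamily f A j) := by
    have hij := ((hnest (i.1⁻¹ (v⁻¹ * w)) (i⁻¹ * j).1 (i⁻¹ * j).2).image i.1.toEquiv).image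
      (Equiv.mulLeft v)
    have hw : w • orbitFamily f A j =
        v • (i.1 '' (i.1⁻¹ (v⁻¹ * w) • ((i⁻¹ * j).1 '' A))) := by
      rw [Set.image_smul_distrib, mulAut_image_image, smul_smul]
      simp [orbitFamily]
    rwa [hw]
  obtain ⟨v, i, rfl | rfl⟩ := hC <;> obtain ⟨w, j, rfl | rfl⟩ := hD <;>
    simp only [nested_compl_left, nested_compl_right, nested_smul]

/-- For `i ≠ j` the hypothesis `flux (f '' A) = -flux A` would force the flux to vanish, because
the order of `f` is odd. -/
lemma flux_pair_ne_neg (hodd : Odd (orderOf f)) (hne : flux A ≠ 0) (i j : Fin 2) :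
    flux (![A, f '' A] i) ≠ -flux (![A, f '' A] j) := by
  have comp_inv_ne : flux A ∘ (f⁻¹ : MulAut F) ≠ -flux A := fun h =>
    hne (eq_zero_of_comp_eq_neg (by rwa [orderOf_inv]) h)
  have comp_ne_zero : flux A ∘ (f⁻¹ : MulAut F) ≠ 0 := fun h =>
    hne ((f⁻¹).surjective.injective_comp_right (h.trans (Pi.zero_comp _).symm))
  fin_cases i <;> fin_cases j
  · exact fun h => hne (self_eq_neg.1 h)
  · exact fun h => comp_inv_ne ((flux_image A f).symm.trans (neg_eq_iff_eq_neg.1 h.symm))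
  · exact fun h => comp_inv_ne ((flux_image A f).symm.trans h)
  · exact fun h => comp_ne_zero ((flux_image A f).symm.trans (self_eq_neg.1 h))

lemma flux_pair_sum_ne_zero (hodd : Odd (orderOf f)) (hne : flux A ≠ 0) {Z : Finset (Fin 2)}
    (hZ : Z.Nonempty) : ∑ k ∈ Z, flux (![A, f '' A] k) ≠ 0 := by
  have ne_neg := flux_pair_ne_neg hodd hne
  have single_ne_zero (k : Fin 2) : flux (![A, f '' A] k) ≠ 0 := fun h =>
    ne_neg k k (by rw [h, neg_zero])
  obtain rfl | rfl | rfl : Z = {0} ∨ Z = {1} ∨ Z = Finset.univ := by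
    revert Z
    decide
  · simpa only [Finset.sum_singleton] using single_ne_zero 0
  · simpa only [Finset.sum_singleton] using single_ne_zero 1
  · rw [Fin.sum_univ_two]
    exact fun h => ne_neg 0 1 (eq_neg_of_add_eq_zero_left h)

theorem exists_cutSystem [Group.FG F] [IsMulTorsionFree F] (hodd : Odd (orderOf f))
    (hA : AlmostInv A) (hne : flux A ∘ f ≠ flux A) :
    ∃ C : Set F, flux C ≠ 0 ∧ CutSystem ![C, f '' C] := by
  have hfin : IsOfFinOrder f := orderOf_pos_iff.1 hodd.pos
  obtain ⟨B, hB, hBne, hnest⟩ := exists_nested_almostInv hfin hA hne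
  have : Finite (Subgroup.zpowers f) := hfin.finite_zpowers
  have ne_zero {C : Set F} (hC : flux C ∘ f ≠ flux C) : flux C ≠ 0 := fun h => hC (by rw [h]; rfl)
  have almostInv_orbit (e) : AlmostInv (orbitFamily f B e) := hB.image e.1
  obtain ⟨C, hC⟩ := exists_adj_one (i := 1) almostInv_orbit
    (by simpa [orbitFamily] using ne_zero hBne)
  have hCne := hC.isCut.flux_comp_ne hBne
  have hadj : ∀ k : Fin 2, Adj (orbitFamily f B) (![C, f '' C] k) 1 :=
    Fin.forall_fin_two.2 ⟨hC, hC.image (Subgroup.mem_zpowers f)⟩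
  have image_ne : flux C ≠ flux (f '' C) := fun h => hCne (by
    nth_rw 1 [h, flux_image, Function.comp_assoc, ← MulAut.coe_mul, inv_mul_cancel]
    rfl)
  refine ⟨C, ne_zero hCne, cutSystem_of_flux (fun k => (hadj k).isCut.almostInv almostInv_orbit)
    (fun i j w => nested_of_isCut_orbitFamily hnest (hadj i).isCut ((hadj j).isCut.smul w))
    (adj_of_forall_adj hadj) ?_ (flux_pair_ne_neg hodd (ne_zero hCne))⟩
  intro i j hij
  fin_cases i <;> fin_cases j
  exacts [rfl, absurd hij image_ne, absurd hij.symm image_ne, rfl]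

lemma CutSystem.mem_smul_iff_of_sep {ι : Type*} {E : ι → Set F} (S : CutSystem E) {t : F} {i : ι}
    (ht : sep E 1 t = {E i}) (w : F) : t ∈ w • E i ↔ (1 : F) ∈ w • E i ∨ w = 1 := by
  have mem_sep_iff (C : Set F) : C ∈ sep E 1 t ↔ C = E i := by rw [ht, Set.mem_singleton_iff]
  constructor
  · intro hmem
    by_contra! hnot
    have heq := (mem_sep_iff (w • E i)).1 ⟨isCut_smul_self w i, hnot.1, hmem⟩
    exact hnot.2 (S.smul_inj (heq.trans (one_smul F _).symm)).1
  · rintro (hone | rfl)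
    · by_contra hnot
      have heq := (mem_sep_iff (w • E i)ᶜ).1
        ⟨(isCut_smul_self w i).compl, fun h => h hone, hnot⟩
      exact S.smul_ne_compl 1 w i i ((one_smul F _).trans heq.symm)
    · rw [one_smul]
      exact ((mem_sep_iff _).2 rfl).2.2

lemma map_sideStab (f : MulAut F) (A : Set F) :
    (sideStab A).map f.toMonoidHom = sideStab (f '' A) := by
  have mem_smul_image (w x : F) : f x ∈ f w • (f '' A) ↔ x ∈ w • A := by
    rw [← Set.image_smul_distrib, f.injective.mem_set_image]
  ext y
  obtain ⟨x, rfl⟩ := f.surjective y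
  refine (Subgroup.mem_map_iff_mem f.injective).trans
    (Iff.trans ?_ (f.surjective.forall (p := fun w => f x ∈ w • _ ↔ (1 : F) ∈ w • _)).symm)
  have one_mem_smul_image (w : F) : (1 : F) ∈ f w • (f '' A) ↔ (1 : F) ∈ w • A := by
    rw [← mem_smul_image w 1, _root_.map_one]
  exact forall_congr' fun w => by rw [mem_smul_image, one_mem_smul_image]

/-- Both `f t₀` and `t₁` cross just one translate of `f '' A`, which is `f '' A` itself. -/
lemma CutSystem.inv_mul_map_mem_sideStab (S : CutSystem ![A, f '' A]) {t₀ t₁ : F}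
    (h₀ : sep ![A, f '' A] 1 t₀ = {A}) (h₁ : sep ![A, f '' A] 1 t₁ = {f '' A}) :
    t₁⁻¹ * f t₀ ∈ sideStab (f '' A) := by
  intro w
  obtain ⟨v, hv⟩ := f.surjective (t₁ * w)
  have cross₀ : t₀ ∈ v • A ↔ 1 ∈ v • A ∨ v = 1 := S.mem_smul_iff_of_sep (i := 0) h₀ v
  have cross₁ : t₁ ∈ (t₁ * w) • (f '' A) ↔ 1 ∈ (t₁ * w) • (f '' A) ∨ t₁ * w = 1 :=
    S.mem_smul_iff_of_sep (i := 1) h₁ (t₁ * w)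
  rw [← f.injective.mem_set_image, ← f.injective.mem_set_image (a := 1), Set.image_smul_distrib,
    hv, _root_.map_one, ← map_eq_one_iff f f.injective, hv, ← cross₁] at cross₀
  simpa [Set.mem_smul_set_iff_inv_smul_mem, mul_assoc] using cross₀

theorem exists_basis_of_odd_orderOf [IsFreeGroup F] [Group.FG F] [IsMulTorsionFree F]
    (hodd : Odd (orderOf f)) (hA : AlmostInv A) (hne : flux A ∘ f ≠ flux A) :
    ∃ (T : Type u) (b : FreeGroupBasis (T ⊕ Fin 2) F),
      (Subgroup.closure (b '' {Sum.inr 0}ᶜ)).map f.toMonoidHom =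
        Subgroup.closure (b '' {Sum.inr 1}ᶜ) ∧
      (b (Sum.inr 1))⁻¹ * f (b (Sum.inr 0)) ∈ Subgroup.closure (b '' {Sum.inr 1}ᶜ) := by
  obtain ⟨C, hC, S⟩ := exists_cutSystem hodd hA hne
  choose t ht using S.exists_crossing fun Z hZ => flux_pair_sum_ne_zero hodd hC hZ
  obtain ⟨T, b, hb, hside⟩ := S.exists_basis_sideStab ht
  refine ⟨T, b, ?_, ?_⟩
  · rw [← hside, ← hside]
    exact map_sideStab f C
  · rw [← hside, hb, hb]
    exact S.inv_mul_map_mem_sideStab (ht 0) (ht 1)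

/-- The free factor of a free group generated by all free generators but `i`. -/
def coFactor {α : Type*} (i : α) : Subgroup (FreeGroup α) :=
  Subgroup.closure (FreeGroup.of '' {i}ᶜ)

theorem exists_conj_of_flux_comp_ne {α : Type u} [Finite α] {f : MulAut (FreeGroup α)}
    {A : Set (FreeGroup α)} (hodd : Odd (orderOf f)) (hA : AlmostInv A)
    (hne : flux A ∘ f ≠ flux A) :
    ∃ (θ : MulAut (FreeGroup α)) (a b : α), a ≠ b ∧
      (coFactor a).map (θ⁻¹ * f * θ).toMonoidHom = coFactor b ∧
      (FreeGroup.of b)⁻¹ * (θ⁻¹ * f * θ) (FreeGroup.of a) ∈ coFactor b := by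
  obtain ⟨T, β, hmap, hmem⟩ := exists_basis_of_odd_orderOf hodd hA hne
  let r : T ⊕ Fin 2 ≃ α := Equiv.ofFreeGroupEquiv β.repr.symm
  let θ : MulAut (FreeGroup α) := (β.reindex r).repr.symm
  have map_of (s : T ⊕ Fin 2) : θ (FreeGroup.of (r s)) = β s :=
    (β.reindex_apply r (r s)).trans (congrArg β (r.symm_apply_apply s))
  have map_coFactor (i : T ⊕ Fin 2) :
      Subgroup.closure (β '' {i}ᶜ) = (coFactor (r i)).map θ.toMonoidHom := by
    rw [coFactor, MonoidHom.map_closure, ← Set.image_singleton, ← Set.image_compl_eq r.bijective,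
      Set.image_image, Set.image_image]
    exact congrArg Subgroup.closure (Set.image_congr fun s _ => (map_of s).symm)
  refine ⟨θ, r (Sum.inr 0), r (Sum.inr 1), by simp, ?_, ?_⟩
  · rw [map_coFactor, map_coFactor] at hmap
    apply Subgroup.map_injective (f := θ.toMonoidHom) θ.injective
    rw [← hmap, Subgroup.map_map, Subgroup.map_map]
    congr 1
    ext x
    simp
  · rw [map_coFactor, ← map_of, ← map_of] at hmem
    rw [← Subgroup.mem_map_iff_mem (f := θ.toMonoidHom) θ.injective]
    simpa [mul_assoc] using hmem

end OddOrder

section FreeCut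

variable {α : Type*} [DecidableEq α]

lemma toWord_mul_of (a : FreeGroup α) (j : α) :
    (a * FreeGroup.of j).toWord = a.toWord ++ [(j, true)] ∨
      a.toWord = (a * FreeGroup.of j).toWord ++ [(j, false)] := by
  rw [FreeGroup.toWord_mul, FreeGroup.toWord_of]
  have hred := FreeGroup.isReduced_toWord (x := a)
  rcases List.eq_nil_or_concat' a.toWord with hnil | ⟨L, ⟨k, b⟩, hL⟩
  · exact Or.inl (by rw [hnil]; rfl)
  rw [hL] at hred ⊢
  by_cases hkb : k = j ∧ b = false
  · obtain ⟨rfl, rfl⟩ := hkb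
    have hstep : FreeGroup.Red.Step (L ++ [(k, false)] ++ [(k, true)]) L := by
      simpa using FreeGroup.Red.Step.not (L₁ := L) (L₂ := []) (x := k) (b := false)
    have hLred : FreeGroup.IsReduced L := List.IsChain.left_of_append hred
    exact Or.inr (by rw [FreeGroup.reduce.Step.eq hstep, hLred.reduce_eq])
  · have happend : FreeGroup.IsReduced (L ++ [(k, b)] ++ [(j, true)]) := by
      refine List.isChain_append.2 ⟨hred, FreeGroup.IsReduced.singleton, ?_⟩
      simpa using fun hk => Bool.eq_true_of_not_eq_false fun hb => hkb ⟨hk, hb⟩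
    exact Or.inl happend.reduce_eq

lemma mul_of_mem_startsWith_iff {i j : α} {a : FreeGroup α} (h : ¬ (a = 1 ∧ i = j)) :
    a * FreeGroup.of j ∈ FreeGroup.startsWith (i, true) ↔
      a ∈ FreeGroup.startsWith (i, true) := by
  simp only [FreeGroup.startsWith, Set.mem_ofPred_eq]
  rcases toWord_mul_of a j with hword | hword <;> rw [hword]
  · rcases eq_or_ne a 1 with rfl | ha
    · simpa [eq_comm] using h
    · rw [List.getElem?_append_left]
      simpa [List.length_pos_iff] using ha
  · cases (a * FreeGroup.of j).toWord <;> simp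

lemma shiftDiff_startsWith (i j : α) :
    shiftDiff (FreeGroup.startsWith (i, true)) (FreeGroup.of j) =
      Pi.single 1 (if i = j then 1 else 0) := by
  classical
  funext a
  by_cases h : a = 1 ∧ i = j
  · obtain ⟨rfl, rfl⟩ := h
    simp [shiftDiff, FreeGroup.startsWith]
  · have hzero : shiftDiff (FreeGroup.startsWith (i, true)) (FreeGroup.of j) a = 0 := by
      simp [shiftDiff, Set.indicator_apply, mul_of_mem_startsWith_iff h]
    rcases eq_or_ne a 1 with rfl | ha
    · rw [hzero, Pi.single_eq_same, if_neg fun hij => h ⟨rfl, hij⟩]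
    · rw [hzero, Pi.single_eq_of_ne ha]

lemma almostInv_startsWith (i : α) : AlmostInv (FreeGroup.startsWith (i, true)) := by
  refine almostInv_of_closure (FreeGroup.closure_range_of α) ?_
  rintro _ ⟨j, rfl⟩
  rw [shiftDiff_startsWith]
  exact (Set.finite_singleton 1).subset Pi.support_single_subset

lemma flux_startsWith {n : ℕ} (i : Fin n) (g : FreeGroup (Fin n)) :
    flux (FreeGroup.startsWith (i, true)) g = (expSum i g).toAdd := by
  have hom_eq : MonoidHom.mk' (fun g => Multiplicative.ofAdd
      (flux (FreeGroup.startsWith (i, true)) g))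
      (fun g h => congrArg _ (flux_mul (almostInv_startsWith i) g h)) = expSum i := by
    refine FreeGroup.ext_hom _ _ fun j => ?_
    rw [MonoidHom.mk'_apply, flux, shiftDiff_startsWith,
      finsum_eq_single _ 1 fun _ hx => Pi.single_eq_of_ne hx _, Pi.single_eq_same, expSum,
      FreeGroup.lift_apply_of]
    simp only [eq_comm]
  exact congrArg Multiplicative.toAdd (DFunLike.congr_fun hom_eq g)

end FreeCut

section PolynomialFunctions

variable {Γ : Type*} [Group Γ] {k : ℕ} {u : Γ → ℤ}

/-- The difference operator in the direction `g` on integer-valued functions on a group. -/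
def diffOp (g : Γ) : (Γ → ℤ) →ₗ[ℤ] (Γ → ℤ) where
  toFun u x := u (g * x) - u x
  map_add' u v := by funext x; simp only [Pi.add_apply]; ring
  map_smul' c u := by funext x; simp [mul_sub]

@[simp] lemma diffOp_apply (g : Γ) (u : Γ → ℤ) (x : Γ) : diffOp g u x = u (g * x) - u x := rfl

/-- The integer-valued polynomial functions of degree less than `k` on a group: those killed by
any `k` successive difference operators. -/
def polyFun (Γ : Type*) [Group Γ] : ℕ → Submodule ℤ (Γ → ℤ)
  | 0 => ⊥
  | k + 1 => ⨅ g : Γ, (polyFun Γ k).comap (diffOp g)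

lemma mem_polyFun_succ : u ∈ polyFun Γ (k + 1) ↔ ∀ g, diffOp g u ∈ polyFun Γ k := by
  simp [polyFun]

lemma polyFun_le_succ (k : ℕ) : polyFun Γ k ≤ polyFun Γ (k + 1) := by
  induction k with
  | zero => exact bot_le
  | succ k ih => exact fun u hu => mem_polyFun_succ.2 fun g => ih (mem_polyFun_succ.1 hu g)

lemma translate_mem_polyFun (hu : u ∈ polyFun Γ k) (b : Γ) :
    (fun x => u (b * x)) ∈ polyFun Γ k := by
  convert (polyFun Γ k).add_mem hu (mem_polyFun_succ.1 (polyFun_le_succ k hu) b) using 1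
  funext x
  simp

lemma mem_polyFun_of_closure {S : Set Γ} (hS : Subgroup.closure S = ⊤)
    (h : ∀ g ∈ S, diffOp g u ∈ polyFun Γ k) : u ∈ polyFun Γ (k + 1) := by
  refine mem_polyFun_succ.2 fun g => ?_
  have hg : g ∈ Subgroup.closure S := hS ▸ Subgroup.mem_top g
  induction hg using Subgroup.closure_induction with
  | mem x hx => exact h x hx
  | one =>
    convert (polyFun Γ k).zero_mem
    funext x
    simp
  | mul a b _ _ ha hb =>
    convert (polyFun Γ k).add_mem (translate_mem_polyFun ha b) hb using 1
    funext x
    simp [mul_assoc]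
  | inv a _ ha =>
    convert (polyFun Γ k).neg_mem (translate_mem_polyFun ha a⁻¹) using 1
    funext x
    simp

lemma diffOp_mul_sub_mem_polyFun (hu : u ∈ polyFun Γ (k + 2)) (a b : Γ) :
    diffOp (a * b) u - (diffOp a u + diffOp b u) ∈ polyFun Γ k := by
  convert mem_polyFun_succ.1 (mem_polyFun_succ.1 hu a) b using 1
  funext x
  simp only [diffOp_apply, Pi.sub_apply, Pi.add_apply, mul_assoc]
  ring

lemma comp_eq_of_mem_polyFun_one (hu : u ∈ polyFun Γ 1) (f : MulAut Γ) : u ∘ f = u := by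
  have eq_one (g : Γ) : u g = u 1 := by
    have hzero : diffOp g u = 0 := mem_polyFun_succ.1 hu g
    simpa [sub_eq_zero] using congrFun hzero 1
  funext x
  rw [Function.comp_apply, eq_one (f x), eq_one x]

lemma comp_eq_of_sub_comp_eq {f : MulAut Γ} (hf : IsOfFinOrder f)
    (h : (u ∘ f - u) ∘ f = u ∘ f - u) : u ∘ f = u := by
  have comp_pow (m : ℕ) (x : Γ) : u ((f ^ m) x) = u x + m * (u (f x) - u x) := by
    induction m generalizing x with
    | zero => simp
    | succ m ih =>
      have hx : u (f (f x)) - u (f x) = u (f x) - u x := congrFun h x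
      rw [pow_succ, MulAut.mul_apply, ih, hx]
      push_cast
      ring
  obtain ⟨m, hm, hpow⟩ := isOfFinOrder_iff_pow_eq_one.1 hf
  funext x
  have hzero : (m : ℤ) * (u (f x) - u x) = 0 := by simpa [hpow] using comp_pow m x
  exact sub_eq_zero.1 ((mul_eq_zero.1 hzero).resolve_left (by exact_mod_cast hm.ne'))

end PolynomialFunctions

section Abelianization

variable {n k : ℕ} {f : FrAut n} {u : FreeGroup (Fin n) → ℤ}

lemma hom_eq_prod_expSum {A : Type*} [CommGroup A] (ψ : FreeGroup (Fin n) →* A)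
    (g : FreeGroup (Fin n)) : ψ g = ∏ i, ψ (FreeGroup.of i) ^ (expSum i g).toAdd := by
  have hom_eq : ψ = MonoidHom.mk' (fun g => ∏ i, ψ (FreeGroup.of i) ^ (expSum i g).toAdd)
      (fun g h => by simp [_root_.zpow_add, Finset.prod_mul_distrib]) := by
    refine FreeGroup.ext_hom _ _ fun j => ?_
    simp [expSum, pow_ite]
  exact DFunLike.congr_fun hom_eq g

/-- Modulo `polyFun k`, the map `g ↦ diffOp g u` is a homomorphism to an abelian group. -/
lemma diffOp_sub_mem_polyFun {g h : FreeGroup (Fin n)} (hgh : ∀ i, expSum i g = expSum i h)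
    (hu : u ∈ polyFun _ (k + 2)) :
    diffOp g u - diffOp h u ∈ polyFun (FreeGroup (Fin n)) k := by
  let Q := polyFun (FreeGroup (Fin n)) k
  let ψ : FreeGroup (Fin n) →* Multiplicative ((FreeGroup (Fin n) → ℤ) ⧸ Q) :=
    MonoidHom.mk' (fun g => Multiplicative.ofAdd (Q.mkQ (diffOp g u))) fun a b => by
      rw [← ofAdd_add, ← _root_.map_add]
      exact congrArg _ ((Submodule.Quotient.eq Q).2 (diffOp_mul_sub_mem_polyFun hu a b))
  have hψ : ψ g = ψ h := by
    rw [hom_eq_prod_expSum ψ g, hom_eq_prod_expSum ψ h]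
    simp only [hgh]
  exact (Submodule.Quotient.eq Q).1 (congrArg Multiplicative.toAdd hψ)

lemma comp_sub_self_mem_polyFun (hf : ∀ i g, expSum i (f g) = expSum i g)
    (hfix : ∀ v ∈ polyFun (FreeGroup (Fin n)) (k + 1), v ∘ f = v)
    (hu : u ∈ polyFun (FreeGroup (Fin n)) (k + 2)) :
    u ∘ f - u ∈ polyFun (FreeGroup (Fin n)) (k + 1) := by
  refine mem_polyFun_succ.2 fun g => ?_
  convert diffOp_sub_mem_polyFun (fun i => hf i g) hu using 1
  funext x
  have hx : u (f g * f x) - u (f x) = u (f g * x) - u x :=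
    congrFun (hfix _ (mem_polyFun_succ.1 hu (f g))) x
  simp only [diffOp_apply, Pi.sub_apply, Function.comp_apply, _root_.map_mul]
  linarith

lemma comp_eq_of_mem_polyFun (hf : ∀ i g, expSum i (f g) = expSum i g) (ht : IsOfFinOrder f)
    (hu : u ∈ polyFun (FreeGroup (Fin n)) k) : u ∘ f = u := by
  induction k generalizing u with
  | zero =>
    rw [show u = 0 from hu]
    rfl
  | succ k ih =>
    cases k with
    | zero => exact comp_eq_of_mem_polyFun_one hu f
    | succ k =>
      exact comp_eq_of_sub_comp_eq ht (ih (comp_sub_self_mem_polyFun hf (fun _ => ih) hu))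

end Abelianization

section Shears

variable {α : Type*} [DecidableEq α] {s : ℕ → Prop} [DecidablePred s] {k : ℕ} {v : ℕ → ℤ}

/-- The shear `v ↦ v + N v` of integer sequences, where `N` is the shift restricted to those edges
`j → j + 1` of `ℕ` for which `s j` holds. -/
def shear (s : ℕ → Prop) [DecidablePred s] (v : ℕ → ℤ) : ℕ → ℤ
  | 0 => v 0
  | j + 1 => v (j + 1) + if s j then v j else 0

/-- The inverse of `shear s`. -/
def shearInv (s : ℕ → Prop) [DecidablePred s] (v : ℕ → ℤ) : ℕ → ℤ
  | 0 => v 0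
  | j + 1 => v (j + 1) - if s j then shearInv s v j else 0

/-- `shear s` as a permutation of the integer sequences. -/
def shearPerm (s : ℕ → Prop) [DecidablePred s] : Equiv.Perm (ℕ → ℤ) where
  toFun := shear s
  invFun := shearInv s
  left_inv v := by
    funext j
    induction j with
    | zero => rfl
    | succ j ih => simp [shearInv, shear, ih]
  right_inv v := by
    funext j
    cases j <;> simp [shear, shearInv]

lemma shearInv_eq_self (hs : ∀ j, j + 1 = k → ¬ s j) : shearInv s v k = v k := by
  cases k with
  | zero => rfl
  | succ k => simp [shearInv, hs k rfl]

lemma shearInv_eq_zero_of_gt (hv : ∀ j > k, v j = 0) (hs : ¬ s k) :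
    ∀ j > k, shearInv s v j = 0 := by
  intro j hj
  induction j with
  | zero => omega
  | succ j ih =>
    rcases (Nat.lt_succ_iff.1 hj).eq_or_lt with rfl | h
    · simp [shearInv, hv _ hj, hs]
    · simp [shearInv, hv _ hj, ih h]

lemma shear_shearInv_leading {s' : ℕ → Prop} [DecidablePred s'] (hone : v k = 1)
    (hzero : ∀ j > k, v j = 0) (hs : s k) (hs' : ¬ s' k) (hpred : ∀ j, j + 1 = k → ¬ s' j) :
    shear s (shearInv s' v) (k + 1) = 1 ∧ ∀ j > k + 1, shear s (shearInv s' v) j = 0 := by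
  have hzero' := shearInv_eq_zero_of_gt hzero hs'
  refine ⟨by simp [shear, hs, hzero', shearInv_eq_self hpred, hone], fun j hj => ?_⟩
  obtain ⟨j, rfl⟩ := Nat.exists_eq_add_one_of_ne_zero (Nat.ne_zero_of_lt hj)
  simp [shear, hzero' (j + 1) (by omega), hzero' j (by omega)]

/-- For a labelling `ℓ` of the edges `j → j + 1` of `ℕ` by letters, the action of the free group on
integer sequences in which a generator shears along the edges that carry it and unshears along the
edges that carry its inverse. -/
def shearAction (ℓ : ℕ → Option (α × Bool)) : FreeGroup α →* Equiv.Perm (ℕ → ℤ) :=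
  FreeGroup.lift fun i =>
    shearPerm (fun j => ℓ j = some (i, true)) * (shearPerm fun j => ℓ j = some (i, false))⁻¹

lemma shearAction_mk_cons (ℓ : ℕ → Option (α × Bool)) (i : α) (b : Bool)
    (L : List (α × Bool)) (v : ℕ → ℤ) :
    shearAction ℓ (FreeGroup.mk ((i, b) :: L)) v =
      shear (fun j => ℓ j = some (i, b))
        (shearInv (fun j => ℓ j = some (i, !b)) (shearAction ℓ (FreeGroup.mk L) v)) := by
  have hletter : shearAction ℓ (FreeGroup.mk [(i, b)]) =
      shearPerm (fun j => ℓ j = some (i, b)) * (shearPerm fun j => ℓ j = some (i, !b))⁻¹ := by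
    cases b <;> simp [shearAction, _root_.mul_inv_rev]
  rw [← List.singleton_append, ← FreeGroup.mul_mk, _root_.map_mul, hletter]
  rfl

lemma shearAction_of_mul (ℓ : ℕ → Option (α × Bool)) (i : α) (x : FreeGroup α) (v : ℕ → ℤ) :
    shearAction ℓ (FreeGroup.of i * x) v =
      shear (fun j => ℓ j = some (i, true))
        (shearInv (fun j => ℓ j = some (i, false)) (shearAction ℓ x v)) := by
  obtain ⟨L, rfl⟩ := Quot.exists_rep x
  exact shearAction_mk_cons ℓ i true L v

/-- Generators act by lower unitriangular transformations, so applying a difference operator to the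
`j`-th coordinate only leaves coordinates of smaller index. -/
lemma shearAction_mem_polyFun (ℓ : ℕ → Option (α × Bool)) (v : ℕ → ℤ) (j : ℕ) :
    (fun x => shearAction ℓ x v j) ∈ polyFun (FreeGroup α) (j + 1) ∧
      ∀ i : α, (fun x => shearInv (fun j => ℓ j = some (i, false)) (shearAction ℓ x v) j) ∈
        polyFun (FreeGroup α) (j + 1) := by
  induction j with
  | zero =>
    suffices h : (fun x => shearAction ℓ x v 0) ∈ polyFun (FreeGroup α) (0 + 1) from
      ⟨h, fun _ => h⟩
    refine mem_polyFun_of_closure (FreeGroup.closure_range_of α) ?_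
    rintro _ ⟨i, rfl⟩
    convert Submodule.zero_mem _
    funext x
    rw [diffOp_apply, shearAction_of_mul]
    exact sub_self _
  | succ j ih =>
    have hcoord : (fun x => shearAction ℓ x v (j + 1)) ∈ polyFun (FreeGroup α) (j + 1 + 1) := by
      refine mem_polyFun_of_closure (FreeGroup.closure_range_of α) ?_
      rintro _ ⟨i, rfl⟩
      convert Submodule.smul_mem _ ((if ℓ j = some (i, true) then 1 else 0) -
        (if ℓ j = some (i, false) then 1 else 0) : ℤ) (ih.2 i) using 1
      funext x
      rw [diffOp_apply, shearAction_of_mul, Pi.smul_apply, smul_eq_mul]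
      simp only [shear, shearInv]
      split_ifs <;> ring
    refine ⟨hcoord, fun i => ?_⟩
    convert Submodule.sub_mem _ hcoord (Submodule.smul_mem _
      (if ℓ j = some (i, false) then 1 else 0 : ℤ) (polyFun_le_succ _ (ih.2 i))) using 1
    funext x
    simp only [shearInv, Pi.sub_apply, Pi.smul_apply, smul_eq_mul]
    split_ifs <;> simp

/-- The word `L` pushes the sequence supported at `0` along the first `L.length` edges, which carry
its letters from right to left. -/
lemma shearAction_mk_single {ℓ : ℕ → Option (α × Bool)}
    (hℓ : ∀ j i b, ℓ j = some (i, b) → ℓ (j + 1) ≠ some (i, !b)) (L : List (α × Bool))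
    (hL : ∀ j < L.length, ℓ j = L.reverse[j]?) :
    shearAction ℓ (FreeGroup.mk L) (Pi.single 0 1) L.length = 1 ∧
      ∀ j > L.length, shearAction ℓ (FreeGroup.mk L) (Pi.single 0 1) j = 0 := by
  induction L with
  | nil =>
    rw [← FreeGroup.one_eq_mk, _root_.map_one]
    exact ⟨rfl, fun j hj => Pi.single_eq_of_ne (Nat.ne_of_gt hj) _⟩
  | cons a L ih =>
    obtain ⟨i, b⟩ := a
    have hlast : ℓ L.length = some (i, b) := by simp [hL]
    obtain ⟨hone, hzero⟩ := ih fun j hj => by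
      rw [hL j (hj.trans (by simp)), List.reverse_cons, List.getElem?_append_left (by simpa)]
    rw [shearAction_mk_cons]
    refine shear_shearInv_leading hone hzero hlast (by simp [hlast]) fun j hj hj' => ?_
    refine hℓ j i (!b) hj' ?_
    rw [hj, hlast, Bool.not_not]

lemma exists_polyFun_ne {α : Type*} {g : FreeGroup α} (hg : g ≠ 1) :
    ∃ k, ∃ u ∈ polyFun (FreeGroup α) k, u g ≠ u 1 := by
  classical
  let L := g.toWord
  let ℓ : ℕ → Option (α × Bool) := fun j => L.reverse[j]?
  have hℓ (j i b) (hj : ℓ j = some (i, b)) : ℓ (j + 1) ≠ some (i, !b) := by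
    intro hj'
    obtain ⟨_, hj⟩ := List.getElem?_eq_some_iff.1 hj
    obtain ⟨hlt, hj'⟩ := List.getElem?_eq_some_iff.1 hj'
    have hchain : List.IsChain (fun a b : α × Bool => b.1 = a.1 → b.2 = a.2) L.reverse :=
      List.isChain_reverse.2 FreeGroup.isReduced_toWord
    have hadj := hchain.getElem j hlt
    simp [hj, hj'] at hadj
  have hvalue := (shearAction_mk_single hℓ L fun _ _ => rfl).1
  rw [FreeGroup.mk_toWord] at hvalue
  refine ⟨_, _, (shearAction_mem_polyFun ℓ (Pi.single 0 1) L.length).1, ?_⟩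
  have hpos : L.length ≠ 0 := by simpa [L] using hg
  simp [hvalue, hpos]

end Shears

section OddOrderConjugate

variable {n : ℕ} {f : FrAut n}

theorem eq_one_of_expSum_eq (hf : ∀ i g, expSum i (f g) = expSum i g) (ht : IsOfFinOrder f) :
    f = 1 := by
  refine MulEquiv.ext fun x => ?_
  by_contra hx
  obtain ⟨k, u, hu, hne⟩ := exists_polyFun_ne (g := x⁻¹ * f x) fun h => hx (inv_mul_eq_one.1 h).symm
  have hcomp := congrFun (comp_eq_of_mem_polyFun hf ht (translate_mem_polyFun hu x⁻¹)) x
  exact hne (by simpa only [Function.comp_apply, inv_mul_cancel] using hcomp)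

theorem exists_conj_of_odd_orderOf (hodd : Odd (orderOf f)) (hf : f ≠ 1) :
    ∃ (θ : FrAut n) (a b : Fin n), a ≠ b ∧
      (coFactor a).map (θ⁻¹ * f * θ).toMonoidHom = coFactor b ∧
      (FreeGroup.of b)⁻¹ * (θ⁻¹ * f * θ) (FreeGroup.of a) ∈ coFactor b := by
  obtain ⟨i, g, hne⟩ : ∃ i g, expSum i (f g) ≠ expSum i g := by
    by_contra! h
    exact hf (eq_one_of_expSum_eq h (orderOf_pos_iff.1 hodd.pos))
  refine exists_conj_of_flux_comp_ne hodd (almostInv_startsWith i) fun h => hne ?_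
  have hg := congrFun h g
  rw [Function.comp_apply, flux_startsWith, flux_startsWith] at hg
  exact Multiplicative.toAdd.injective hg

end OddOrderConjugate

section Transvections

variable {α : Type*} {f : MulAut (FreeGroup α)} {i j : α}

lemma freeGroup_mulAut_ext {φ ψ : MulAut (FreeGroup α)}
    (h : ∀ i, φ (FreeGroup.of i) = ψ (FreeGroup.of i)) : φ = ψ :=
  MulEquiv.toMonoidHom_injective (FreeGroup.ext_hom _ _ h)

lemma of_mem_coFactor (h : j ≠ i) : FreeGroup.of j ∈ coFactor i :=
  Subgroup.subset_closure ⟨j, h, rfl⟩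

variable [DecidableEq α]

/-- The endomorphism multiplying the free generator `x_i` by `u` on the left and by `w` on the
right. -/
def transvectionHom (i : α) (u w : FreeGroup α) : FreeGroup α →* FreeGroup α :=
  FreeGroup.lift (Function.update FreeGroup.of i (u * FreeGroup.of i * w))

@[simp] lemma transvectionHom_of_self (i : α) (u w : FreeGroup α) :
    transvectionHom i u w (FreeGroup.of i) = u * FreeGroup.of i * w := by
  simp [transvectionHom]

lemma transvectionHom_of_mem (u w : FreeGroup α) {g : FreeGroup α} (hg : g ∈ coFactor i) :
    transvectionHom i u w g = g := by
  refine MonoidHom.eqOn_closure (f := transvectionHom i u w) (g := MonoidHom.id _) ?_ hg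
  rintro _ ⟨j, hj, rfl⟩
  have hji : j ≠ i := hj
  simp [transvectionHom, hji]

lemma transvectionHom_comp_inv {u w : FreeGroup α} (hu : u ∈ coFactor i) (hw : w ∈ coFactor i) :
    (transvectionHom i u w).comp (transvectionHom i u⁻¹ w⁻¹) = MonoidHom.id _ := by
  refine FreeGroup.ext_hom _ _ fun j => ?_
  rcases eq_or_ne j i with rfl | hj
  · simp [transvectionHom_of_mem, hu, hw, mul_assoc]
  · simp [transvectionHom_of_mem, of_mem_coFactor hj]

/-- The automorphism multiplying `x_i` by `u` on the left and by `w` on the right, where `u` and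
`w` do not involve `x_i`. -/
def transvection (i : α) (u w : coFactor i) : MulAut (FreeGroup α) :=
  MonoidHom.toMulEquiv (transvectionHom i u w)
    (transvectionHom i (u : FreeGroup α)⁻¹ (w : FreeGroup α)⁻¹)
    (by simpa only [inv_inv] using transvectionHom_comp_inv (inv_mem u.2) (inv_mem w.2))
    (transvectionHom_comp_inv u.2 w.2)

lemma transvection_of_mem (u w : coFactor i) {g : FreeGroup α} (hg : g ∈ coFactor i) :
    transvection i u w g = g :=
  transvectionHom_of_mem _ _ hg

@[simp] lemma transvection_of_self (u w : coFactor i) :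
    transvection i u w (FreeGroup.of i) = u * FreeGroup.of i * w :=
  transvectionHom_of_self i u w

lemma transvection_of_ne (u w : coFactor i) (h : j ≠ i) :
    transvection i u w (FreeGroup.of j) = FreeGroup.of j :=
  transvection_of_mem u w (of_mem_coFactor h)

lemma transvection_mul (u w u' w' : coFactor i) :
    transvection i u w * transvection i u' w' = transvection i (u' * u) (w * w') := by
  refine freeGroup_mulAut_ext fun j => ?_
  rcases eq_or_ne j i with rfl | hj
  · simp [transvection_of_mem, mul_assoc]
  · simp [transvection_of_ne, hj]

lemma transvection_one (i : α) : transvection i 1 1 = 1 := by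
  refine freeGroup_mulAut_ext fun j => ?_
  rcases eq_or_ne j i with rfl | hj
  · simp
  · simp [transvection_of_ne, hj]

lemma transvection_inv (u w : coFactor i) :
    (transvection i u w)⁻¹ = transvection i u⁻¹ w⁻¹ := by
  rw [inv_eq_iff_mul_eq_one, transvection_mul, inv_mul_cancel, mul_inv_cancel, transvection_one]

/-- The automorphism `x_i ↦ x_j * x_i`. -/
abbrev leftTransvection (h : j ≠ i) : MulAut (FreeGroup α) :=
  transvection i ⟨FreeGroup.of j, of_mem_coFactor h⟩ 1

/-- The automorphism `x_i ↦ x_i * x_j`. -/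
abbrev rightTransvection (h : j ≠ i) : MulAut (FreeGroup α) :=
  transvection i 1 ⟨FreeGroup.of j, of_mem_coFactor h⟩

lemma mul_transvection_of_map_coFactor (hmap : (coFactor i).map f.toMonoidHom = coFactor j)
    (hf : (FreeGroup.of j)⁻¹ * f (FreeGroup.of i) ∈ coFactor j) (u : coFactor i) :
    f * transvection i u 1 =
      transvection j ⟨f u, hmap ▸ Subgroup.mem_map_of_mem f.toMonoidHom u.2⟩ 1 * f := by
  refine freeGroup_mulAut_ext fun k => ?_
  rcases eq_or_ne k i with rfl | hk
  · have himage : f (FreeGroup.of k) = FreeGroup.of j * ((FreeGroup.of j)⁻¹ * f (FreeGroup.of k)) :=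
      (mul_inv_cancel_left _ _).symm
    rw [MulAut.mul_apply, MulAut.mul_apply, himage, _root_.map_mul (transvection j _ 1),
      transvection_of_mem _ _ hf]
    simp [mul_assoc]
  · have himage : f (FreeGroup.of k) ∈ coFactor j :=
      hmap ▸ Subgroup.mem_map_of_mem f.toMonoidHom (of_mem_coFactor hk)
    rw [MulAut.mul_apply, MulAut.mul_apply, transvection_of_ne _ _ hk,
      transvection_of_mem _ _ himage]

lemma leftTransvection_commutator_rightTransvection {k : α} (hij : i ≠ j) (hki : k ≠ i)
    (hkj : k ≠ j) :
    leftTransvection hkj * rightTransvection hij.symm * (leftTransvection hkj)⁻¹ *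
      (rightTransvection hij.symm)⁻¹ = rightTransvection hki := by
  rw [mul_inv_eq_iff_eq_mul, mul_inv_eq_iff_eq_mul]
  refine freeGroup_mulAut_ext fun l => ?_
  rcases eq_or_ne l i with rfl | hli
  · simp [transvection_of_ne, hij, hij.symm, mul_assoc]
  rcases eq_or_ne l j with rfl | hlj
  · simp [transvection_of_ne, hij.symm, hki]
  · simp [transvection_of_ne, hli, hlj]

/-- The automorphism `f` conjugates `s = (x_i ↦ f⁻¹(x_k) * x_i)` to `t = (x_j ↦ x_k * x_j)`, so
`t ≡ s` modulo `N`. As `s` commutes with `r = (x_i ↦ x_i * x_j)`, the commutator of `t` and `r`,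
which is `x_i ↦ x_i * x_k`, lies in `N`. -/
lemma rightTransvection_mem_of_map_coFactor {N : Subgroup (MulAut (FreeGroup α))} [hN : N.Normal]
    {k : α} (hfN : f ∈ N) (hij : i ≠ j) (hki : k ≠ i) (hkj : k ≠ j)
    (hmap : (coFactor i).map f.toMonoidHom = coFactor j)
    (hf : (FreeGroup.of j)⁻¹ * f (FreeGroup.of i) ∈ coFactor j) : rightTransvection hki ∈ N := by
  obtain ⟨u, hu, hfu⟩ : FreeGroup.of k ∈ (coFactor i).map f.toMonoidHom :=
    hmap ▸ of_mem_coFactor hkj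
  set s := transvection i ⟨u, hu⟩ 1
  set t := leftTransvection hkj
  set r := rightTransvection hij.symm
  have hconj : f * s = t * f := by
    rw [mul_transvection_of_map_coFactor hmap hf]
    congr 3
  have hcomm : s * r = r * s := by simp only [s, r, transvection_mul, one_mul, mul_one]
  have hts : t * s⁻¹ ∈ N := by
    rw [eq_mul_inv_of_mul_eq hconj.symm, show f * s * f⁻¹ * s⁻¹ = f * (s * f⁻¹ * s⁻¹) by group]
    exact N.mul_mem hfN (hN.conj_mem _ (N.inv_mem hfN) s)
  have hcommutator : t * r * t⁻¹ * r⁻¹ = t * s⁻¹ * (r * (t * s⁻¹)⁻¹ * r⁻¹) :=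
    calc t * r * t⁻¹ * r⁻¹ = t * s⁻¹ * (s * r) * t⁻¹ * r⁻¹ := by group
      _ = t * s⁻¹ * (r * s) * t⁻¹ * r⁻¹ := by rw [hcomm]
      _ = _ := by group
  rw [← leftTransvection_commutator_rightTransvection hij hki hkj, hcommutator]
  exact N.mul_mem hts (hN.conj_mem _ (N.inv_mem hts) r)

end Transvections

section SignedPermutations

variable {α : Type*} {i j : α}

/-- The automorphism permuting the free generators. -/
def permAut : Equiv.Perm α →* MulAut (FreeGroup α) where
  toFun := FreeGroup.freeGroupCongr
  map_one' := freeGroup_mulAut_ext fun _ => by simp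
  map_mul' _ _ := freeGroup_mulAut_ext fun _ => by simp

@[simp] lemma permAut_of (σ : Equiv.Perm α) (i : α) :
    permAut σ (FreeGroup.of i) = FreeGroup.of (σ i) :=
  FreeGroup.map.of

variable [DecidableEq α]

/-- The endomorphism inverting the free generator `x_i`. -/
def inversionHom (i : α) : FreeGroup α →* FreeGroup α :=
  FreeGroup.lift (Function.update FreeGroup.of i (FreeGroup.of i)⁻¹)

lemma inversionHom_comp_self (i : α) :
    (inversionHom i).comp (inversionHom i) = MonoidHom.id _ := by
  refine FreeGroup.ext_hom _ _ fun j => ?_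
  rcases eq_or_ne j i with rfl | hj
  · simp [inversionHom]
  · simp [inversionHom, hj]

/-- The automorphism inverting the free generator `x_i`. -/
def inversion (i : α) : MulAut (FreeGroup α) :=
  MonoidHom.toMulEquiv (inversionHom i) (inversionHom i) (inversionHom_comp_self i)
    (inversionHom_comp_self i)

@[simp] lemma inversion_of_self (i : α) :
    inversion i (FreeGroup.of i) = (FreeGroup.of i)⁻¹ := by
  simp [inversion, inversionHom]

lemma inversion_of_ne (h : j ≠ i) : inversion i (FreeGroup.of j) = FreeGroup.of j := by
  simp [inversion, inversionHom, h]

@[simp] lemma inversion_mul_self (i : α) : inversion i * inversion i = 1 :=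
  MulEquiv.toMonoidHom_injective (inversionHom_comp_self i)

lemma permAut_conj_inversion (σ : Equiv.Perm α) (i : α) :
    permAut σ * inversion i * (permAut σ)⁻¹ = inversion (σ i) := by
  rw [mul_inv_eq_iff_eq_mul]
  refine freeGroup_mulAut_ext fun j => ?_
  rcases eq_or_ne j i with rfl | hj
  · simp
  · simp [inversion_of_ne, hj]

lemma permAut_conj_rightTransvection (σ : Equiv.Perm α) (h : j ≠ i) :
    permAut σ * rightTransvection h * (permAut σ)⁻¹ = rightTransvection (σ.injective.ne h) := by
  rw [mul_inv_eq_iff_eq_mul]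
  refine freeGroup_mulAut_ext fun k => ?_
  rcases eq_or_ne k i with rfl | hk
  · simp
  · simp [transvection_of_ne, hk]

lemma inversion_conj_rightTransvection_inv (h : j ≠ i) :
    inversion i * (rightTransvection h)⁻¹ * (inversion i)⁻¹ = leftTransvection h := by
  rw [mul_inv_eq_iff_eq_mul, transvection_inv]
  refine freeGroup_mulAut_ext fun k => ?_
  rcases eq_or_ne k i with rfl | hk
  · simp [inversion_of_ne, h]
  · simp [transvection_of_ne, inversion_of_ne, hk]

lemma permAut_swap (hij : i ≠ j) :
    permAut (Equiv.swap i j) = rightTransvection hij.symm * (rightTransvection hij)⁻¹ *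
      leftTransvection hij.symm * inversion j := by
  refine freeGroup_mulAut_ext fun k => ?_
  rw [transvection_inv]
  rcases eq_or_ne k i with rfl | hki
  · simp [transvection_of_ne, hij, hij.symm, inversion_of_ne hij]
  rcases eq_or_ne k j with rfl | hkj
  · simp [transvection_of_ne, hij.symm]
  · simp [transvection_of_ne, inversion_of_ne, Equiv.swap_apply_of_ne_of_ne, hki, hkj]

end SignedPermutations

section GromovProduct

variable {α : Type*} [DecidableEq α]

/-- The length of the longest common prefix of two lists. -/
def lcpLength : List α → List α → ℕ
  | a :: l, b :: m => if a = b then lcpLength l m + 1 else 0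
  | _, _ => 0

lemma le_lcpLength_iff {m : ℕ} {l l' : List α} :
    m ≤ lcpLength l l' ↔ m ≤ l.length ∧ m ≤ l'.length ∧ l.take m = l'.take m := by
  induction l generalizing m l' with
  | nil => cases m <;> simp [lcpLength]
  | cons a l ih =>
    cases l' with
    | nil => cases m <;> simp [lcpLength]
    | cons b l' =>
      cases m with
      | zero => simp
      | succ m =>
        by_cases hab : a = b
        · simp [lcpLength, hab, ih]
        · simp [lcpLength, hab]

lemma ne_of_mem_head?_drop_lcpLength (l l' : List α) :
    ∀ a ∈ (l.drop (lcpLength l l')).head?, ∀ b ∈ (l'.drop (lcpLength l l')).head?, a ≠ b := by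
  induction l generalizing l' with
  | nil => simp
  | cons a l ih =>
    cases l' with
    | nil => simp
    | cons b l' =>
      by_cases hab : a = b
      · simpa [lcpLength, hab] using ih l'
      · simp [lcpLength, hab]

lemma isReduced_invRev_append {α : Type*} {s t : List (α × Bool)} (hs : FreeGroup.IsReduced s)
    (ht : FreeGroup.IsReduced t) (hne : ∀ a ∈ s.head?, ∀ b ∈ t.head?, a ≠ b) :
    FreeGroup.IsReduced (FreeGroup.invRev s ++ t) := by
  classical
  refine List.isChain_append.2 ⟨?_, ht, fun a ha b hb hab => ?_⟩
  · exact FreeGroup.IsReduced.of_reduce_eq (by rw [FreeGroup.reduce_invRev, hs.reduce_eq])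
  · have hhead : (a.1, !a.2) ∈ s.head? := by
      cases s with
      | nil => simp [FreeGroup.invRev] at ha
      | cons c s =>
        simp only [FreeGroup.invRev, List.map_cons, List.reverse_cons, List.getLast?_append,
          List.getLast?_singleton, Option.some_or, Option.mem_def, Option.some.injEq] at ha
        simp [← ha]
    by_contra hsnd
    refine hne _ hhead b hb (Prod.ext hab ?_)
    simpa [Bool.eq_not] using hsnd

/-- The length of the longest common prefix of the reduced words of `x` and `y`, which is the
Gromov product of `x` and `y` in the Cayley tree. -/
def gromovProd (x y : FreeGroup α) : ℕ := lcpLength x.toWord y.toWord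

variable {x y z : FreeGroup α}

lemma le_gromovProd_iff {m : ℕ} :
    m ≤ gromovProd x y ↔ m ≤ x.norm ∧ m ≤ y.norm ∧ x.toWord.take m = y.toWord.take m :=
  le_lcpLength_iff

lemma gromovProd_comm (x y : FreeGroup α) : gromovProd x y = gromovProd y x :=
  eq_of_forall_le_iff fun m => by
    rw [le_gromovProd_iff, le_gromovProd_iff]
    tauto

lemma gromovProd_self (x : FreeGroup α) : gromovProd x x = x.norm :=
  eq_of_forall_le_iff fun m => by
    rw [le_gromovProd_iff]
    tauto

lemma min_gromovProd_le (x y z : FreeGroup α) :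
    min (gromovProd x y) (gromovProd y z) ≤ gromovProd x z := by
  obtain ⟨hx, -, hxy⟩ := le_gromovProd_iff.1 (min_le_left (gromovProd x y) (gromovProd y z))
  obtain ⟨-, hz, hyz⟩ := le_gromovProd_iff.1 (min_le_right (gromovProd x y) (gromovProd y z))
  exact le_gromovProd_iff.2 ⟨hx, hz, hxy.trans hyz⟩

lemma gromovProd_eq_of_lt (h : gromovProd x y < gromovProd y z) :
    gromovProd x z = gromovProd x y := by
  have hle := min_gromovProd_le x y z
  have hge := min_gromovProd_le x z y
  rw [gromovProd_comm z y] at hge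
  omega

lemma toWord_inv_mul (x y : FreeGroup α) :
    (x⁻¹ * y).toWord = FreeGroup.invRev (x.toWord.drop (gromovProd x y)) ++
      y.toWord.drop (gromovProd x y) := by
  set m := gromovProd x y with hm
  have htake : x.toWord.take m = y.toWord.take m := (le_gromovProd_iff.1 hm.le).2.2
  have hmul : x⁻¹ * y =
      FreeGroup.mk (FreeGroup.invRev (x.toWord.drop m) ++ y.toWord.drop m) :=
    calc x⁻¹ * y = (FreeGroup.mk (x.toWord.take m ++ x.toWord.drop m))⁻¹ *
          FreeGroup.mk (y.toWord.take m ++ y.toWord.drop m) := by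
          rw [List.take_append_drop, List.take_append_drop, x.mk_toWord, y.mk_toWord]
      _ = (FreeGroup.mk (x.toWord.drop m))⁻¹ * FreeGroup.mk (y.toWord.drop m) := by
          rw [← FreeGroup.mul_mk, ← FreeGroup.mul_mk, htake]
          group
      _ = _ := by rw [FreeGroup.inv_mk, FreeGroup.mul_mk]
  rw [hmul, FreeGroup.toWord_mk]
  exact (isReduced_invRev_append (List.IsChain.drop FreeGroup.isReduced_toWord m)
    (List.IsChain.drop FreeGroup.isReduced_toWord m)
    (ne_of_mem_head?_drop_lcpLength _ _)).reduce_eq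

lemma toWord_inv_mul_of_gromovProd_eq_half {r : ℕ} (hx : x.norm = 2 * r) (hr : gromovProd x y = r) :
    (x⁻¹ * y).toWord = x⁻¹.toWord.take r ++ y.toWord.drop r := by
  have hlength : x.toWord.length = 2 * r := hx
  rw [toWord_inv_mul, hr, FreeGroup.toWord_inv, FreeGroup.invRev, FreeGroup.invRev,
    List.take_reverse, List.length_map, hlength, List.map_drop,
    show 2 * r - r = r by omega]

lemma norm_inv_mul_add (x y : FreeGroup α) :
    (x⁻¹ * y).norm + 2 * gromovProd x y = x.norm + y.norm := by
  obtain ⟨hx, hy, -⟩ := le_gromovProd_iff.1 (le_refl (gromovProd x y))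
  have hlength := congrArg List.length (toWord_inv_mul x y)
  simp only [List.length_append, FreeGroup.invRev_length, List.length_drop] at hlength
  simp only [FreeGroup.norm] at hx hy ⊢
  omega

lemma norm_mul_add (x y : FreeGroup α) :
    (x * y).norm + 2 * gromovProd x⁻¹ y = x.norm + y.norm := by
  simpa only [inv_inv, FreeGroup.norm_inv_eq] using norm_inv_mul_add x⁻¹ y

lemma gromovProd_mul_self_add (x y : FreeGroup α) :
    gromovProd (x * y) x + gromovProd x⁻¹ y = x.norm := by
  have hcancel := norm_inv_mul_add (x * y) x
  rw [_root_.mul_inv_rev, inv_mul_cancel_right, FreeGroup.norm_inv_eq] at hcancel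
  have hmul := norm_mul_add x y
  omega

lemma norm_lt_norm_mul_self (hx : x ≠ 1) : x.norm < (x * x).norm := by
  set c := FreeGroup.reduceCyclically.conjugator x.toWord
  set r := FreeGroup.reduceCyclically x.toWord
  have hword : x.toWord = c ++ r ++ FreeGroup.invRev c :=
    (FreeGroup.reduceCyclically.conj_conjugator_reduceCyclically x.toWord).symm
  have hsq : (x * x).toWord = c ++ (r ++ r) ++ FreeGroup.invRev c := by
    rw [← pow_two, FreeGroup.toWord_pow,
      FreeGroup.reduceCyclically.reduce_flatten_replicate_succ FreeGroup.isReduced_toWord 1]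
    simp [List.replicate_succ, c, r]
  have hr : r ≠ [] := by
    intro hr
    refine hx ?_
    rw [← x.mk_toWord, hword, hr, List.append_nil, ← FreeGroup.mul_mk, ← FreeGroup.inv_mk,
      mul_inv_cancel]
  have hpos := List.length_pos_iff.2 hr
  simp only [FreeGroup.norm, hword, hsq, List.length_append]
  omega

lemma two_mul_gromovProd_inv_lt (hx : x ≠ 1) : 2 * gromovProd x x⁻¹ < x.norm := by
  have hadd := norm_inv_mul_add x x⁻¹
  have hlt := norm_lt_norm_mul_self (inv_ne_one.2 hx)
  rw [FreeGroup.norm_inv_eq] at hadd hlt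
  omega

end GromovProduct

section NielsenReduction

variable {α : Type*}

/-- The inverse letter. -/
def invLetter (k : α × Bool) : α × Bool := (k.1, !k.2)

lemma eq_or_eq_invLetter {k l : α × Bool} (h : l.1 = k.1) : l = k ∨ l = invLetter k := by
  obtain ⟨i, b⟩ := k
  obtain ⟨j, c⟩ := l
  obtain rfl : j = i := h
  cases b <;> cases c <;> simp [invLetter]

/-- The image of a letter under an automorphism. -/
def letterImage (φ : MulAut (FreeGroup α)) (k : α × Bool) : FreeGroup α := φ (FreeGroup.mk [k])

variable {φ : MulAut (FreeGroup α)}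

@[simp] lemma letterImage_invLetter (φ : MulAut (FreeGroup α)) (k : α × Bool) :
    letterImage φ (invLetter k) = (letterImage φ k)⁻¹ := by
  rw [letterImage, letterImage, ← _root_.map_inv, FreeGroup.inv_mk]
  rfl

lemma letterImage_ne_one (φ : MulAut (FreeGroup α)) (k : α × Bool) : letterImage φ k ≠ 1 := by
  classical
  rw [letterImage, Ne, map_eq_one_iff φ φ.injective, ← FreeGroup.toWord_eq_nil_iff]
  simp [FreeGroup.toWord_mk]

variable [DecidableEq α]

/-- The images of the letters are a Nielsen reduced tuple: no more than half of an image cancels on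
either side, and no image is cancelled completely. -/
structure NielsenReduced (φ : MulAut (FreeGroup α)) : Prop where
  two_mul_le : ∀ k l, k ≠ l →
    2 * gromovProd (letterImage φ k) (letterImage φ l) ≤ (letterImage φ k).norm
  add_lt : ∀ k l l', l ≠ k → l' ≠ invLetter k →
    gromovProd (letterImage φ k) (letterImage φ l) +
      gromovProd (letterImage φ k)⁻¹ (letterImage φ l') < (letterImage φ k).norm

/-- Here `β` is the length of the terminal part of the image of `k` that is cancelled by the image
of the rest of the word. -/
lemma NielsenReduced.exists_cancellation (h : NielsenReduced φ) (L : List (α × Bool))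
    (k : α × Bool) (hred : FreeGroup.IsReduced (k :: L)) :
    ∃ β, (∀ l ≠ k, gromovProd (letterImage φ k) (letterImage φ l) + β < (letterImage φ k).norm) ∧
      (letterImage φ k).norm ≤ gromovProd (φ (FreeGroup.mk (k :: L))) (letterImage φ k) + β ∧
      (letterImage φ k).norm + L.length ≤ (φ (FreeGroup.mk (k :: L))).norm + β := by
  induction L generalizing k with
  | nil =>
    refine ⟨0, fun l hl => ?_, (gromovProd_self (letterImage φ k)).ge, le_rfl⟩
    have hhalf := h.two_mul_le k l hl.symm
    have hpos := FreeGroup.norm_eq_zero.not.2 (letterImage_ne_one φ k)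
    omega
  | cons l L ih =>
    obtain ⟨hkl, hredL⟩ := List.isChain_cons_cons.1 hred
    have hne : invLetter k ≠ l := by
      rintro rfl
      simpa [invLetter] using hkl rfl
    obtain ⟨β, hlt, hprefix, hlength⟩ := ih l hredL
    have hmul : φ (FreeGroup.mk (k :: l :: L)) = letterImage φ k * φ (FreeGroup.mk (l :: L)) := by
      rw [letterImage, ← _root_.map_mul, FreeGroup.mul_mk, List.singleton_append]
    set x := letterImage φ k
    set y := letterImage φ l
    set w := φ (FreeGroup.mk (l :: L))
    have hcancel : gromovProd x⁻¹ y + β < y.norm := by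
      simpa only [letterImage_invLetter, gromovProd_comm y] using hlt _ hne
    have hxw : gromovProd x⁻¹ w = gromovProd x⁻¹ y :=
      gromovProd_eq_of_lt (by rw [gromovProd_comm y w]; omega)
    have hxwx := gromovProd_mul_self_add x w
    have hnorm := norm_mul_add x w
    rw [hmul, List.length_cons]
    exact ⟨gromovProd x⁻¹ y, fun l' hl' => h.add_lt k l' l hl' hne.symm, by omega, by omega⟩

lemma NielsenReduced.norm_le (h : NielsenReduced φ) (g : FreeGroup α) : g.norm ≤ (φ g).norm := by
  rcases hword : g.toWord with _ | ⟨k, L⟩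
  · simp [FreeGroup.norm, hword]
  · obtain ⟨β, hlt, -, hlength⟩ :=
      h.exists_cancellation L k (hword ▸ FreeGroup.isReduced_toWord)
    have hinv := hlt (invLetter k) (by simp [invLetter, Prod.ext_iff])
    rw [← hword, g.mk_toWord] at hlength
    rw [FreeGroup.norm, hword, List.length_cons]
    omega

lemma NielsenReduced.exists_inv_of_eq_letter (h : NielsenReduced φ) (j : α) :
    ∃ k, φ⁻¹ (FreeGroup.of j) = FreeGroup.mk [k] := by
  have hnorm := h.norm_le (φ⁻¹ (FreeGroup.of j))
  rw [MulAut.apply_inv_self, FreeGroup.norm_of] at hnorm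
  have hpos := FreeGroup.norm_eq_zero.not.2 (letterImage_ne_one φ⁻¹ (j, true))
  obtain ⟨k, hk⟩ := List.length_eq_one_iff.1 (hnorm.antisymm (Nat.one_le_iff_ne_zero.2 hpos))
  exact ⟨k, by rw [← hk, FreeGroup.mk_toWord]⟩

end NielsenReduction

section HalfCodes

variable {α : Type*} [Fintype α]

/-- A numerical code for words, used to compare words of the same length. The summand `2` makes
the base greater than one even when `α` is empty. -/
noncomputable def wordCode (L : List (α × Bool)) : ℕ :=
  Nat.ofDigits (Fintype.card (α × Bool) + 2) (L.map fun k => (Fintype.equivFin (α × Bool) k : ℕ))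

lemma eq_of_wordCode_eq {L M : List (α × Bool)} (hlength : L.length = M.length)
    (h : wordCode L = wordCode M) : L = M := by
  have hdigit : ∀ L : List (α × Bool), ∀ d ∈ L.map fun k => (Fintype.equivFin (α × Bool) k : ℕ),
      d < Fintype.card (α × Bool) + 2 := by
    intro L d hd
    obtain ⟨k, -, rfl⟩ := List.mem_map.1 hd
    exact (Fin.is_lt _).trans (by omega)
  exact List.map_injective_iff.2 (Fin.val_injective.comp (Fintype.equivFin (α × Bool)).injective)
    (Nat.ofDigits_inj_of_len_eq (by omega) (by simpa using hlength) (hdigit L) (hdigit M) h)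

lemma wordCode_append_lt {L M : List (α × Bool)} (hlength : L.length = M.length)
    (h : wordCode L < wordCode M) (s : List (α × Bool)) :
    wordCode (L ++ s) < wordCode (M ++ s) := by
  simp only [wordCode, List.map_append, Nat.ofDigits_append, List.length_map, hlength] at h ⊢
  omega

variable [DecidableEq α] {x y : FreeGroup α} {r : ℕ}

/-- The code of the first half of the reduced word of `x`. -/
noncomputable def halfCode (x : FreeGroup α) : ℕ := wordCode (x.toWord.take (x.norm / 2))

lemma halfCode_inv_ne (hx : x ≠ 1) (hr : x.norm = 2 * r) : halfCode x⁻¹ ≠ halfCode x := by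
  intro h
  rw [halfCode, halfCode, FreeGroup.norm_inv_eq, hr, Nat.mul_div_cancel_left r two_pos] at h
  have htake := eq_of_wordCode_eq (by simp) h
  have hle : r ≤ gromovProd x x⁻¹ :=
    le_gromovProd_iff.2 ⟨by omega, by rw [FreeGroup.norm_inv_eq]; omega, htake.symm⟩
  have hlt := two_mul_gromovProd_inv_lt hx
  omega

/-- Replacing `y` by `x⁻¹ * y` replaces the first half of `x`, which is a prefix of the first half
of `y`, by the first half of `x⁻¹`. -/
lemma halfCode_inv_mul_lt (hx : x.norm = 2 * r) (hy : 2 * r ≤ y.norm) (hr : gromovProd x y = r)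
    (hlt : halfCode x⁻¹ < halfCode x) : halfCode (x⁻¹ * y) < halfCode y := by
  have hnorm : (x⁻¹ * y).norm = y.norm := by
    have hadd := norm_inv_mul_add x y
    omega
  have hlength : x.toWord.length = 2 * r := hx
  have htake : x.toWord.take r = y.toWord.take r := (le_gromovProd_iff.1 hr.ge).2.2
  obtain ⟨t, ht⟩ : ∃ t, y.norm / 2 = r + t := Nat.exists_eq_add_of_le (by omega)
  have hhalf : (x⁻¹ * y).toWord.take (r + t) =
      x⁻¹.toWord.take r ++ (y.toWord.drop r).take t := by
    have hlength' : (x⁻¹.toWord.take r).length = r := by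
      simp only [FreeGroup.toWord_inv, List.length_take, FreeGroup.invRev_length, hlength]
      omega
    rw [toWord_inv_mul_of_gromovProd_eq_half hx hr, List.take_append, hlength',
      Nat.add_sub_cancel_left, List.take_of_length_le (by omega)]
  rw [halfCode, halfCode, FreeGroup.norm_inv_eq, hx, Nat.mul_div_cancel_left r two_pos] at hlt
  rw [halfCode, halfCode, hnorm, ht, hhalf, List.take_add, ← htake]
  exact wordCode_append_lt (by simp [hlength]) hlt _

lemma halfCode_inv_mul_inv (hnorm : (x⁻¹ * y).norm = y.norm) (hle : x.norm ≤ y.norm) :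
    halfCode (x⁻¹ * y)⁻¹ = halfCode y⁻¹ := by
  have hadd := norm_inv_mul_add (x⁻¹ * y)⁻¹ y⁻¹
  rw [inv_inv, mul_inv_cancel_right] at hadd
  simp only [FreeGroup.norm_inv_eq] at hadd
  have hhalf : y.norm / 2 ≤ gromovProd (x⁻¹ * y)⁻¹ y⁻¹ := by omega
  rw [halfCode, halfCode, FreeGroup.norm_inv_eq, FreeGroup.norm_inv_eq, hnorm,
    (le_gromovProd_iff.1 hhalf).2.2]

end HalfCodes

section NielsenGeneration

variable {α : Type*}

lemma mk_singleton_false (i : α) : FreeGroup.mk [(i, false)] = (FreeGroup.of i)⁻¹ := rfl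

lemma mk_singleton_true (i : α) : FreeGroup.mk [(i, true)] = FreeGroup.of i := rfl

lemma sum_lt_sum_of_letter [Fintype α] {l : α × Bool} {F G : α × Bool → ℕ} (hl : F l < G l)
    (hinv : F (invLetter l) ≤ G (invLetter l)) (hne : ∀ m : α × Bool, m.1 ≠ l.1 → F m = G m) :
    ∑ m, F m < ∑ m, G m := by
  refine Finset.sum_lt_sum (fun m _ => ?_) ⟨l, Finset.mem_univ l, hl⟩
  by_cases hm : m.1 = l.1
  · rcases eq_or_eq_invLetter hm with rfl | rfl
    exacts [hl.le, hinv]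
  · exact (hne m hm).le

variable [DecidableEq α] {K : Subgroup (MulAut (FreeGroup α))}
  {φ : MulAut (FreeGroup α)} {k l : α × Bool}

lemma transvection_mk_of_ne {i : α} (u w : coFactor i) (hk : k.1 ≠ i) :
    transvection i u w (FreeGroup.mk [k]) = FreeGroup.mk [k] := by
  obtain ⟨j, _ | _⟩ := k
  · rw [mk_singleton_false, _root_.map_inv, transvection_of_ne u w hk]
  · rw [mk_singleton_true, transvection_of_ne u w hk]

lemma leftTransvection_mem (ht : ∀ {i j : α} (h : j ≠ i), rightTransvection h ∈ K)
    (he : ∀ i, inversion i ∈ K) {i j : α} (h : j ≠ i) : leftTransvection h ∈ K := by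
  rw [← inversion_conj_rightTransvection_inv h]
  exact K.mul_mem (K.mul_mem (he i) (K.inv_mem (ht h))) (K.inv_mem (he i))

lemma exists_transvection_mem (ht : ∀ {i j : α} (h : j ≠ i), rightTransvection h ∈ K)
    (he : ∀ i, inversion i ∈ K) (hkl : k.1 ≠ l.1) :
    ∃ u w, transvection l.1 u w ∈ K ∧
      transvection l.1 u w (FreeGroup.mk [l]) = (FreeGroup.mk [k])⁻¹ * FreeGroup.mk [l] := by
  obtain ⟨j, b⟩ := k
  obtain ⟨i, c⟩ := l
  have hl := leftTransvection_mem ht he hkl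
  have hr := ht hkl
  have hl' := K.inv_mem hl
  have hr' := K.inv_mem hr
  rw [transvection_inv] at hl' hr'
  cases c <;> cases b
  · exact ⟨_, _, hr', by simp [mk_singleton_false]⟩
  · exact ⟨_, _, hr, by simp [mk_singleton_false, mk_singleton_true]⟩
  · exact ⟨_, _, hl, by simp [mk_singleton_false, mk_singleton_true]⟩
  · exact ⟨_, _, hl', by simp [mk_singleton_true]⟩

lemma exists_nielsen_move (ht : ∀ {i j : α} (h : j ≠ i), rightTransvection h ∈ K)
    (he : ∀ i, inversion i ∈ K) (φ : MulAut (FreeGroup α)) (hkl : k.1 ≠ l.1) :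
    ∃ ν ∈ K, letterImage (φ * ν) l = (letterImage φ k)⁻¹ * letterImage φ l ∧
      ∀ m : α × Bool, m.1 ≠ l.1 → letterImage (φ * ν) m = letterImage φ m := by
  obtain ⟨u, w, hmem, hl⟩ := exists_transvection_mem ht he hkl
  refine ⟨_, hmem, ?_, fun m hm => ?_⟩
  · rw [letterImage, MulAut.mul_apply, hl, _root_.map_mul, _root_.map_inv, letterImage, letterImage]
  · rw [letterImage, MulAut.mul_apply, transvection_mk_of_ne u w hm, letterImage]

lemma fst_ne_of_norm_le (hkl : l ≠ k)
    (h : (letterImage φ k).norm ≤ 2 * gromovProd (letterImage φ k) (letterImage φ l)) :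
    k.1 ≠ l.1 := by
  intro hfst
  obtain rfl := (eq_or_eq_invLetter hfst.symm).resolve_left hkl
  rw [letterImage_invLetter] at h
  exact (two_mul_gromovProd_inv_lt (letterImage_ne_one φ k)).not_ge h

lemma permAut_mem [Finite α] (ht : ∀ {i j : α} (h : j ≠ i), rightTransvection h ∈ K)
    (he : ∀ i, inversion i ∈ K) (σ : Equiv.Perm α) : permAut σ ∈ K := by
  induction σ using Equiv.Perm.swap_induction_on with
  | one => exact _root_.map_one (permAut (α := α)) ▸ K.one_mem
  | swap_mul σ i j hij ih =>
    rw [_root_.map_mul, permAut_swap hij]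
    exact K.mul_mem (K.mul_mem (K.mul_mem (K.mul_mem (ht hij.symm) (K.inv_mem (ht hij)))
      (leftTransvection_mem ht he hij.symm)) (he j)) ih

lemma mem_of_signedPermutation [Finite α] (ht : ∀ {i j : α} (h : j ≠ i), rightTransvection h ∈ K)
    (he : ∀ i, inversion i ∈ K) (A : Finset α) (σ : α → α) (hφ : ∀ j, φ (FreeGroup.of j) =
      if j ∈ A then (FreeGroup.of (σ j))⁻¹ else FreeGroup.of (σ j)) : φ ∈ K := by
  induction A using Finset.induction_on generalizing φ with
  | empty =>
    simp only [Finset.notMem_empty, if_false] at hφ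
    have hσ : Function.Injective σ := fun i j hij =>
      FreeGroup.of_injective (φ.injective (by rw [hφ, hφ, hij]))
    have hperm : φ = permAut (Equiv.ofBijective σ (Finite.injective_iff_bijective.1 hσ)) :=
      freeGroup_mulAut_ext fun j => by simp [hφ]
    exact hperm ▸ permAut_mem ht he _
  | insert i A hi ih =>
    refine (K.mul_mem_cancel_right (he i)).1 (ih fun j => ?_)
    rcases eq_or_ne j i with rfl | hj
    · simp [hφ, hi]
    · simp [inversion_of_ne hj, hφ, hj]

lemma NielsenReduced.mem [Finite α] (h : NielsenReduced φ)
    (ht : ∀ {i j : α} (h : j ≠ i), rightTransvection h ∈ K) (he : ∀ i, inversion i ∈ K) :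
    φ ∈ K := by
  cases nonempty_fintype α
  choose σ hσ using h.exists_inv_of_eq_letter
  refine K.inv_mem_iff.1
    (mem_of_signedPermutation ht he {j | (σ j).2 = false} (fun j => (σ j).1) fun j => ?_)
  rw [hσ]
  rcases hj : σ j with ⟨i, _ | _⟩ <;> simp [hj, mk_singleton_false, mk_singleton_true]

section Minimal

variable [Fintype α]

/-- The total length of the images of the letters, with ties broken by the codes of their first
halves. This is the quantity decreased by Nielsen moves. -/
noncomputable def nielsenComplexity (φ : MulAut (FreeGroup α)) : ℕ ×ₗ ℕ :=
  toLex (∑ k, (letterImage φ k).norm, ∑ k, halfCode (letterImage φ k))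

lemma two_mul_gromovProd_le_of_minimal (ht : ∀ {i j : α} (h : j ≠ i), rightTransvection h ∈ K)
    (he : ∀ i, inversion i ∈ K)
    (hmin : ∀ ν ∈ K, nielsenComplexity φ ≤ nielsenComplexity (φ * ν)) (hkl : l ≠ k) :
    2 * gromovProd (letterImage φ k) (letterImage φ l) ≤ (letterImage φ k).norm := by
  by_contra! hlt
  obtain ⟨ν, hν, hl, hne⟩ := exists_nielsen_move ht he φ (fst_ne_of_norm_le hkl hlt.le)
  have hadd := norm_inv_mul_add (letterImage φ k) (letterImage φ l)
  have hnorm : (letterImage (φ * ν) l).norm < (letterImage φ l).norm := by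
    rw [hl]
    omega
  refine (hmin ν hν).not_gt (Prod.Lex.toLex_lt_toLex.2 (Or.inl ?_))
  exact sum_lt_sum_of_letter hnorm (by simpa using hnorm.le) fun m hm => by rw [hne m hm]

lemma halfCode_le_of_minimal (ht : ∀ {i j : α} (h : j ≠ i), rightTransvection h ∈ K)
    (he : ∀ i, inversion i ∈ K)
    (hmin : ∀ ν ∈ K, nielsenComplexity φ ≤ nielsenComplexity (φ * ν)) (hkl : l ≠ k)
    (hhalf : (letterImage φ k).norm = 2 * gromovProd (letterImage φ k) (letterImage φ l)) :
    halfCode (letterImage φ k) ≤ halfCode (letterImage φ k)⁻¹ := by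
  by_contra! hlt
  obtain ⟨ν, hν, hl, hne⟩ := exists_nielsen_move ht he φ (fst_ne_of_norm_le hkl hhalf.le)
  have hle := two_mul_gromovProd_le_of_minimal ht he hmin hkl.symm
  have hadd := norm_inv_mul_add (letterImage φ k) (letterImage φ l)
  rw [gromovProd_comm] at hle
  have hnorm : (letterImage (φ * ν) l).norm = (letterImage φ l).norm := by
    rw [hl]
    omega
  have hcode : halfCode (letterImage (φ * ν) l) < halfCode (letterImage φ l) :=
    hl ▸ halfCode_inv_mul_lt hhalf hle rfl hlt
  have hcode_inv : halfCode (letterImage (φ * ν) l)⁻¹ = halfCode (letterImage φ l)⁻¹ := by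
    rw [hl] at hnorm ⊢
    exact halfCode_inv_mul_inv hnorm (hhalf.trans_le hle)
  refine (hmin ν hν).not_gt (Prod.Lex.toLex_lt_toLex.2 (Or.inr ⟨?_, ?_⟩))
  · refine Finset.sum_congr rfl fun m _ => ?_
    by_cases hm : m.1 = l.1
    · rcases eq_or_eq_invLetter hm with rfl | rfl
      exacts [hnorm, by simpa using hnorm]
    · rw [hne m hm]
  · exact sum_lt_sum_of_letter hcode (by simpa using hcode_inv.le) fun m hm => by rw [hne m hm]

lemma nielsenReduced_of_minimal (ht : ∀ {i j : α} (h : j ≠ i), rightTransvection h ∈ K)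
    (he : ∀ i, inversion i ∈ K)
    (hmin : ∀ ν ∈ K, nielsenComplexity φ ≤ nielsenComplexity (φ * ν)) : NielsenReduced φ := by
  have hle : ∀ {k l}, l ≠ k →
      2 * gromovProd (letterImage φ k) (letterImage φ l) ≤ (letterImage φ k).norm :=
    two_mul_gromovProd_le_of_minimal ht he hmin
  refine ⟨fun k l hkl => hle hkl.symm, fun k l l' hl hl' => ?_⟩
  by_contra! hcancel
  have hle_left := hle hl
  have hle_right := hle hl'
  rw [letterImage_invLetter, FreeGroup.norm_inv_eq] at hle_right
  have hhalf : (letterImage φ k).norm = 2 * gromovProd (letterImage φ k) (letterImage φ l) := by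
    omega
  have hcode := halfCode_le_of_minimal ht he hmin hl hhalf
  have hcode_inv := halfCode_le_of_minimal ht he hmin hl' (by
    rw [letterImage_invLetter, FreeGroup.norm_inv_eq]
    omega)
  rw [letterImage_invLetter, inv_inv] at hcode_inv
  exact halfCode_inv_ne (letterImage_ne_one φ k) hhalf (hcode_inv.antisymm hcode)

end Minimal

/-- Nielsen's theorem on generators of `Aut(F_n)`. -/
theorem eq_top_of_rightTransvection_mem [Finite α]
    (ht : ∀ {i j : α} (h : j ≠ i), rightTransvection h ∈ K) (he : ∀ i, inversion i ∈ K) :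
    K = ⊤ := by
  cases nonempty_fintype α
  refine (Subgroup.eq_top_iff' K).2 fun φ => ?_
  obtain ⟨ν, hν, hmin⟩ : ∃ ν ∈ K, ∀ ν' ∈ K,
      nielsenComplexity (φ * ν) ≤ nielsenComplexity (φ * ν') := by
    obtain ⟨ν, hν, hmin⟩ := exists_minimalFor_of_wellFoundedLT (· ∈ K)
      (fun ν => nielsenComplexity (φ * ν)) ⟨1, K.one_mem⟩
    exact ⟨ν, hν, fun ν' hν' => (le_total _ _).elim id (hmin hν')⟩
  refine (K.mul_mem_cancel_right hν).1 (NielsenReduced.mem ?_ ht he)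
  exact nielsenReduced_of_minimal ht he fun ν' hν' => by
    simpa only [mul_assoc] using hmin (ν * ν') (K.mul_mem hν hν')

end NielsenGeneration

section NormalClosures

lemma rightTransvection_mem_of_normal {α : Type*} [DecidableEq α]
    {N : Subgroup (MulAut (FreeGroup α))} [hN : N.Normal] {a c : α} {hca : c ≠ a}
    (h : rightTransvection hca ∈ N) {i j : α} (hji : j ≠ i) : rightTransvection hji ∈ N := by
  obtain ⟨σ, rfl, rfl⟩ : ∃ σ : Equiv.Perm α, σ a = i ∧ σ c = j := by
    have hi : i ≠ Equiv.swap a i c := fun h => hca <|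
      ((Equiv.swap a i).injective ((Equiv.swap_apply_left a i).trans h)).symm
    exact ⟨Equiv.swap (Equiv.swap a i c) j * Equiv.swap a i,
      by simp [Equiv.swap_apply_of_ne_of_ne hi hji.symm], by simp⟩
  rw [← permAut_conj_rightTransvection σ hca]
  exact hN.conj_mem _ h (permAut σ)

/-- Modulo `N` the swap of `x_i` and `x_j` agrees with the inversion of `x_j`, and conjugation by
the swap carries the inversion of `x_j` to that of `x_i`. -/
lemma inversion_mul_inversion_mem_of_normal {α : Type*} [DecidableEq α]
    {N : Subgroup (MulAut (FreeGroup α))} [hN : N.Normal]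
    (ht : ∀ {i j : α} (h : j ≠ i), rightTransvection h ∈ N) (i j : α) :
    inversion i * inversion j ∈ N := by
  rcases eq_or_ne i j with rfl | hij
  · simp
  have hleft : leftTransvection hij.symm ∈ N := by
    rw [← inversion_conj_rightTransvection_inv hij.symm]
    exact hN.conj_mem _ (N.inv_mem (ht hij.symm)) _
  set τ := permAut (Equiv.swap i j) with hτ
  have hswap : τ * inversion j ∈ N := by
    rw [hτ, permAut_swap hij, mul_assoc _ (inversion j), inversion_mul_self, mul_one]
    exact N.mul_mem (N.mul_mem (ht hij.symm) (N.inv_mem (ht hij))) hleft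
  have hconj : inversion i = τ * inversion j * τ := by
    have hτ_inv : τ⁻¹ = τ := by rw [hτ, ← _root_.map_inv, Equiv.swap_inv]
    nth_rw 2 [← hτ_inv]
    rw [permAut_conj_inversion, Equiv.swap_apply_right]
  rw [hconj, mul_assoc]
  exact N.mul_mem hswap hswap

lemma ker_le_of_sup_zpowers_eq_top {Γ : Type*} [Group Γ] {χ : Γ →* ℤˣ} {N : Subgroup Γ} [N.Normal]
    {ε : Γ} (hN : N ≤ χ.ker) (hε : ε * ε = 1) (hχ : χ ε = -1)
    (htop : N ⊔ Subgroup.zpowers ε = ⊤) : χ.ker ≤ N := by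
  intro γ hγ
  obtain ⟨ν, hν, _, ⟨k, rfl⟩, rfl⟩ :=
    Subgroup.mem_sup_of_normal_left.1 (htop ▸ Subgroup.mem_top γ)
  have hk : (-1 : ℤˣ) ^ k = 1 := by
    rw [← hχ, ← _root_.map_zpow]
    exact (χ.ker.mul_mem_cancel_left (hN hν)).1 hγ
  rcases Int.even_or_odd k with hk' | hk'
  · obtain ⟨m, rfl⟩ := hk'
    simpa [_root_.zpow_add, ← Commute.mul_zpow (Commute.refl ε), hε] using hν
  · exact absurd (hk'.neg_one_zpow.symm.trans hk) (by decide)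

lemma eq_top_of_ker_le {Γ : Type*} [Group Γ] {χ : Γ →* ℤˣ} {N : Subgroup Γ} (hker : χ.ker ≤ N)
    (hN : ¬ N ≤ χ.ker) : N = ⊤ := by
  obtain ⟨ν, hν, hχν⟩ := Set.not_subset.1 hN
  refine (Subgroup.eq_top_iff' N).2 fun γ => ?_
  rcases Int.units_eq_one_or (χ γ) with hγ | hγ
  · exact hker hγ
  · refine (N.mul_mem_cancel_right hν).1 (hker (MonoidHom.mem_ker.2 ?_))
    rw [_root_.map_mul, hγ, (Int.units_eq_one_or _).resolve_left hχν, neg_one_mul, neg_neg]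

lemma mem_ker_of_odd_orderOf {Γ : Type*} [Group Γ] (χ : Γ →* ℤˣ) {f : Γ}
    (hf : Odd (orderOf f)) : f ∈ χ.ker :=
  orderOf_eq_one_iff.1 (Nat.eq_one_of_dvd_coprimes (Nat.coprime_two_right.2 hf)
    (orderOf_map_dvd χ f) (orderOf_dvd_of_pow_eq_one (Int.units_sq _)))

lemma exists_mem_odd_orderOf {Γ : Type*} [Group Γ] (G : Subgroup Γ) [Finite G]
    (h2 : ¬ ∃ k : ℕ, Nat.card G = 2 ^ k) : ∃ f ∈ G, Odd (orderOf f) ∧ f ≠ 1 := by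
  obtain ⟨p, hp, hdvd, hodd⟩ :=
    (Nat.eq_two_pow_or_exists_odd_prime_and_dvd (Nat.card G)).resolve_left h2
  have := Fact.mk hp
  obtain ⟨f, hf⟩ := exists_prime_orderOf_dvd_card' p hdvd
  rw [← Subgroup.orderOf_coe] at hf
  exact ⟨f, f.2, hf ▸ hodd, fun h => hp.ne_one (by rw [← hf, h, orderOf_one])⟩

variable {n : ℕ}

lemma mat_inversion (i : Fin n) :
    mat (inversion i) = Matrix.diagonal (Function.update 1 i (-1)) := by
  ext k j
  rw [mat, Matrix.of_apply, Matrix.diagonal_apply]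
  rcases eq_or_ne j i with rfl | hj
  · rcases eq_or_ne k j with rfl | hk
    · simp [expSum]
    · simp [expSum, hk, hk.symm]
  · rw [inversion_of_ne hj]
    rcases eq_or_ne k j with rfl | hk
    · simp [expSum, hj]
    · simp [expSum, hk, hk.symm]

lemma detρ_inversion (i : Fin n) : detρ n (inversion i) = -1 := by
  refine Units.ext ?_
  change (mat (inversion i)).det = -1
  simp [mat_inversion, Finset.prod_update_of_mem]

lemma SAut_le_of_rightTransvection_mem [NeZero n] {N : Subgroup (FrAut n)} [N.Normal]
    (hN : N ≤ SAut n) (ht : ∀ {i j : Fin n} (h : j ≠ i), rightTransvection h ∈ N) :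
    SAut n ≤ N := by
  refine ker_le_of_sup_zpowers_eq_top hN (inversion_mul_self 0) (detρ_inversion 0) ?_
  refine eq_top_of_rightTransvection_mem (fun h => Subgroup.mem_sup_left (ht h)) fun i => ?_
  have hmem := Subgroup.mul_mem_sup (inversion_mul_inversion_mem_of_normal ht i 0)
    (Subgroup.mem_zpowers (inversion (0 : Fin n)))
  rwa [mul_assoc, inversion_mul_self, mul_one] at hmem

theorem normalClosure_singleton_eq_SAut (hn : 3 ≤ n) {f : FrAut n} (hodd : Odd (orderOf f))
    (hf : f ≠ 1) : Subgroup.normalClosure {f} = SAut n := by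
  have : NeZero n := ⟨by omega⟩
  have : (SAut n).Normal := MonoidHom.normal_ker _
  have hle : Subgroup.normalClosure {f} ≤ SAut n :=
    Subgroup.normalClosure_le_normal (Set.singleton_subset_iff.2 (mem_ker_of_odd_orderOf _ hodd))
  obtain ⟨θ, a, b, hab, hmap, hmem⟩ := exists_conj_of_odd_orderOf hodd hf
  obtain ⟨c, hca, hcb⟩ := Fin.exists_ne_and_ne_of_two_lt a b hn
  have hconj : θ⁻¹ * f * θ ∈ Subgroup.normalClosure {f} := by
    simpa only [inv_inv] using Subgroup.normalClosure_normal.conj_mem f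
      (Subgroup.subset_normalClosure (Set.mem_singleton f)) θ⁻¹
  have ht := rightTransvection_mem_of_map_coFactor hconj hab hca hcb hmap hmem
  exact hle.antisymm (SAut_le_of_rightTransvection_mem hle (rightTransvection_mem_of_normal ht))

end NormalClosures

/-- **Theorem 1.** For `n ≥ 3`, if `G` is a nontrivial finite subgroup of `Aut(F_n)` whose
order is not a power of `2`, then the normal closure of `G` is `SAut(F_n)` if `G ⊆ SAut(F_n)`
and is all of `Aut(F_n)` otherwise. -/
theorem normalClosure_finite_subgroup_aut (n : ℕ) (hn : 3 ≤ n)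
    (G : Subgroup (FrAut n)) (hG : G ≠ ⊥) (hfin : Finite G)
    (h2 : ¬ ∃ k : ℕ, Nat.card G = 2 ^ k) :
    (G ≤ SAut n → Subgroup.normalClosure (G : Set (FrAut n)) = SAut n) ∧
    (¬ G ≤ SAut n → Subgroup.normalClosure (G : Set (FrAut n)) = ⊤) := by
  obtain ⟨f, hfG, hodd, hf⟩ := exists_mem_odd_orderOf G h2
  have hle : SAut n ≤ Subgroup.normalClosure (G : Set (FrAut n)) := by
    rw [← normalClosure_singleton_eq_SAut hn hodd hf]
    exact Subgroup.normalClosure_mono (Set.singleton_subset_iff.2 hfG)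
  have : (SAut n).Normal := MonoidHom.normal_ker _
  refine ⟨fun h => (Subgroup.normalClosure_le_normal h).antisymm hle, fun h => ?_⟩
  exact eq_top_of_ker_le hle fun hN => h (Subgroup.subset_normalClosure.trans hN)

end NormalClosurePaper
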